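/- arXiv:1606.08122 — 3 statements merged into one kernel-verified Lean document; each statement's English description precedes it below -/
import Mathlib

section
/- Let k ≥ 1 and m, a_1, a_2, …, a_k ≥ 2 be integers. Then there exists a spherical latin bitrade whose canonical group is isomorphic to the direct sum Z_{m·a_1} ⊕ Z_{m·a_2} ⊕ … ⊕ Z_{m·a_k}. -/
/-- A partial latin square on row set `R`, column set `C` and symbol set `S` (given as
pairwise disjoint types): a finite set of triples such that any two distinct triples agree
in at most one coordinate, and every row, column and symbol occurs in some triple. -/
def IsPartialLatinSquare {R C S : Type} (P : Finset (R × C × S)) : Prop :=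
  (∀ t₁ ∈ P, ∀ t₂ ∈ P, t₁ ≠ t₂ →
      ¬(t₁.1 = t₂.1 ∧ t₁.2.1 = t₂.2.1) ∧
      ¬(t₁.1 = t₂.1 ∧ t₁.2.2 = t₂.2.2) ∧
      ¬(t₁.2.1 = t₂.2.1 ∧ t₁.2.2 = t₂.2.2)) ∧
  (∀ r : R, ∃ t ∈ P, t.1 = r) ∧
  (∀ c : C, ∃ t ∈ P, t.2.1 = c) ∧
  (∀ s : S, ∃ t ∈ P, t.2.2 = s)

/-- The latin bitrade condition: for each triple `(r,c,s) ∈ W` there are unique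
`r' ≠ r`, `c' ≠ c`, `s' ≠ s` with `(r',c,s), (r,c',s), (r,c,s') ∈ B`. -/
def TradeCond {R C S : Type} (W B : Finset (R × C × S)) : Prop :=
  ∀ t ∈ W,
    (∃! r' : R, r' ≠ t.1 ∧ (r', t.2.1, t.2.2) ∈ B) ∧
    (∃! c' : C, c' ≠ t.2.1 ∧ (t.1, c', t.2.2) ∈ B) ∧
    (∃! s' : S, s' ≠ t.2.2 ∧ (t.1, t.2.1, s') ∈ B)

/-- A spherical latin bitrade: a connected latin bitrade `(W,B)` on finite row, column and
symbol sets `R`, `C`, `S` with `|R| + |C| + |S| = |W| + 2`.  (Connectedness says there is no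
latin bitrade `(W',B')` with `W' ⊊ W` and `B' ⊊ B`; for subsets of `W` and `B` the
"agree in at most one coordinate" condition is inherited, and the occurrence condition is
automatic on the sets of rows, columns and symbols actually occupied, so the substantive
conditions on a sub-bitrade are nonemptiness and the two trade conditions.) -/
structure SphericalLatinBitrade where
  R : Type
  C : Type
  S : Type
  instR : Fintype R
  instC : Fintype C
  instS : Fintype S
  W : Finset (R × C × S)
  B : Finset (R × C × S)
  W_nonempty : W.Nonempty
  B_nonempty : B.Nonempty
  W_pls : IsPartialLatinSquare W
  B_pls : IsPartialLatinSquare B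
  tradeWB : TradeCond W B
  tradeBW : TradeCond B W
  connected : ¬ ∃ (W' B' : Finset (R × C × S)), W' ⊂ W ∧ B' ⊂ B ∧
      W'.Nonempty ∧ B'.Nonempty ∧ TradeCond W' B' ∧ TradeCond B' W'
  spherical : @Fintype.card R instR + @Fintype.card C instC + @Fintype.card S instS
      = W.card + 2

/-- The subgroup of relations `r + c + s = 0`, for `(r,c,s) ∈ W`, in the free abelian group
on `R ⊔ C ⊔ S`. -/
def bitradeRelations (T : SphericalLatinBitrade) :
    AddSubgroup (FreeAbelianGroup (T.R ⊕ T.C ⊕ T.S)) :=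
  AddSubgroup.closure
    ((fun t : T.R × T.C × T.S =>
        FreeAbelianGroup.of (Sum.inl t.1) +
        FreeAbelianGroup.of (Sum.inr (Sum.inl t.2.1)) +
        FreeAbelianGroup.of (Sum.inr (Sum.inr t.2.2))) '' (T.W : Set (T.R × T.C × T.S)))

/-- The group `A_W`: the free abelian group on `R ⊔ C ⊔ S` modulo the relations
`r + c + s = 0` for `(r,c,s) ∈ W`. -/
abbrev groupAW (T : SphericalLatinBitrade) : Type :=
  FreeAbelianGroup (T.R ⊕ T.C ⊕ T.S) ⧸ bitradeRelations T

/-- The canonical group of a spherical latin bitrade: the torsion subgroup of `A_W`. -/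
abbrev CanonicalGroup (T : SphericalLatinBitrade) : Type :=
  AddCommGroup.torsion (groupAW T)


/-- Combinatorial data of a spherical Eulerian digraph embedding. -/
structure PM where
  R : Type
  C : Type
  S : Type
  E : Type
  fR : Fintype R
  fC : Fintype C
  fS : Fintype S
  fE : Fintype E
  hd : E → R
  tl : E → R
  lf : E → C
  rt : E → S
  ne : ∀ e, hd e ≠ tl e
  inj_lr : ∀ e e', lf e = lf e' → rt e = rt e' → e = e'
  inj_hl : ∀ e e', hd e = hd e' → lf e = lf e' → e = e'
  inj_hr : ∀ e e', hd e = hd e' → rt e = rt e' → e = e'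
  inj_tl : ∀ e e', tl e = tl e' → lf e = lf e' → e = e'
  inj_tr : ∀ e e', tl e = tl e' → rt e = rt e' → e = e'
  exL : ∀ e, ∃ e', hd e' = tl e ∧ lf e' = lf e
  exR : ∀ e, ∃ e', hd e' = tl e ∧ rt e' = rt e
  surjR : ∀ r, ∃ e, hd e = r
  surjC : ∀ c, ∃ e, lf e = c
  surjS : ∀ s, ∃ e, rt e = s
  conn : ∀ P : E → Prop, (∀ e e', hd e' = tl e → (lf e' = lf e ∨ rt e' = rt e) → (P e ↔ P e')) →
    ∀ e e', P e → P e'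
  nonempty : Nonempty E
  card_eq : Fintype.card R + Fintype.card C + Fintype.card S = Fintype.card E + 2

namespace PM

lemma exL' (M : PM) (e : M.E) : ∃ e', M.tl e' = M.hd e ∧ M.lf e' = M.lf e := by
  have := M.fE
  choose p hp using M.exL
  have hinj : Function.Injective p := fun a b h => M.inj_tl a b
    (by rw [← (hp a).1, ← (hp b).1, h]) (by rw [← (hp a).2, ← (hp b).2, h])
  obtain ⟨b, hb⟩ := (Finite.injective_iff_surjective.1 hinj) e
  exact ⟨b, by rw [← hb, (hp b).1], by rw [← hb, (hp b).2]⟩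

lemma exR' (M : PM) (e : M.E) : ∃ e', M.tl e' = M.hd e ∧ M.rt e' = M.rt e := by
  have := M.fE
  choose p hp using M.exR
  have hinj : Function.Injective p := fun a b h => M.inj_tr a b
    (by rw [← (hp a).1, ← (hp b).1, h]) (by rw [← (hp a).2, ← (hp b).2, h])
  obtain ⟨b, hb⟩ := (Finite.injective_iff_surjective.1 hinj) e
  exact ⟨b, by rw [← hb, (hp b).1], by rw [← hb, (hp b).2]⟩

lemma surjT (M : PM) (r : M.R) : ∃ e, M.tl e = r := by
  obtain ⟨e, rfl⟩ := M.surjR r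
  obtain ⟨e', h, -⟩ := M.exL' e
  exact ⟨e', h⟩

def tW (M : PM) (e : M.E) : M.R × M.C × M.S := (M.hd e, M.lf e, M.rt e)
def tB (M : PM) (e : M.E) : M.R × M.C × M.S := (M.tl e, M.lf e, M.rt e)

open Classical in
noncomputable def W (M : PM) : Finset (M.R × M.C × M.S) :=
  (@Finset.univ M.E M.fE).image M.tW
open Classical in
noncomputable def B (M : PM) : Finset (M.R × M.C × M.S) :=
  (@Finset.univ M.E M.fE).image M.tB

lemma mem_W (M : PM) (t) : t ∈ M.W ↔ ∃ e, M.tW e = t := by simp [W]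
lemma mem_B (M : PM) (t) : t ∈ M.B ↔ ∃ e, M.tB e = t := by simp [B]

lemma W_pls (M : PM) : IsPartialLatinSquare M.W := by
  refine ⟨?_, ?_, ?_, ?_⟩
  · intro t₁ h₁ t₂ h₂ hne
    obtain ⟨e, rfl⟩ := (M.mem_W _).1 h₁
    obtain ⟨e', rfl⟩ := (M.mem_W _).1 h₂
    have : e ≠ e' := fun h => hne (by rw [h])
    refine ⟨fun h => this (M.inj_hl _ _ h.1 h.2), fun h => this (M.inj_hr _ _ h.1 h.2),
      fun h => this (M.inj_lr _ _ h.1 h.2)⟩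
  · intro r
    obtain ⟨e, rfl⟩ := M.surjR r
    exact ⟨_, (M.mem_W _).2 ⟨e, rfl⟩, rfl⟩
  · intro r
    obtain ⟨e, rfl⟩ := M.surjC r
    exact ⟨_, (M.mem_W _).2 ⟨e, rfl⟩, rfl⟩
  · intro r
    obtain ⟨e, rfl⟩ := M.surjS r
    exact ⟨_, (M.mem_W _).2 ⟨e, rfl⟩, rfl⟩

lemma B_pls (M : PM) : IsPartialLatinSquare M.B := by
  refine ⟨?_, ?_, ?_, ?_⟩
  · intro t₁ h₁ t₂ h₂ hne
    obtain ⟨e, rfl⟩ := (M.mem_B _).1 h₁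
    obtain ⟨e', rfl⟩ := (M.mem_B _).1 h₂
    have : e ≠ e' := fun h => hne (by rw [h])
    refine ⟨fun h => this (M.inj_tl _ _ h.1 h.2), fun h => this (M.inj_tr _ _ h.1 h.2),
      fun h => this (M.inj_lr _ _ h.1 h.2)⟩
  · intro r
    obtain ⟨e, rfl⟩ := M.surjT r
    exact ⟨_, (M.mem_B _).2 ⟨e, rfl⟩, rfl⟩
  · intro r
    obtain ⟨e, rfl⟩ := M.surjC r
    exact ⟨_, (M.mem_B _).2 ⟨e, rfl⟩, rfl⟩
  · intro r
    obtain ⟨e, rfl⟩ := M.surjS r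
    exact ⟨_, (M.mem_B _).2 ⟨e, rfl⟩, rfl⟩

lemma tradeWB (M : PM) : TradeCond M.W M.B := by
  intro t ht
  obtain ⟨e, rfl⟩ := (M.mem_W _).1 ht
  refine ⟨?_, ?_, ?_⟩
  · refine ⟨M.tl e, ⟨(M.ne e).symm, (M.mem_B _).2 ⟨e, rfl⟩⟩, ?_⟩
    rintro r ⟨-, hr⟩
    obtain ⟨e', he⟩ := (M.mem_B _).1 hr
    simp only [tB, tW, Prod.mk.injEq] at he
    have := M.inj_lr _ _ he.2.1 he.2.2
    subst this; exact he.1.symm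
  · obtain ⟨e', h1, h2⟩ := M.exR' e
    refine ⟨M.lf e', ⟨fun h => ?_, (M.mem_B _).2 ⟨e', by simp [tB, tW, h1, h2]⟩⟩, ?_⟩
    · have := M.inj_lr _ _ h h2
      subst this; exact M.ne _ h1.symm
    · rintro r ⟨-, hr⟩
      obtain ⟨e'', he⟩ := (M.mem_B _).1 hr
      simp only [tB, tW, Prod.mk.injEq] at he
      have := M.inj_tr e'' e' (by rw [he.1, h1]) (by rw [he.2.2, h2])
      subst this; exact he.2.1.symm
  · obtain ⟨e', h1, h2⟩ := M.exL' e
    refine ⟨M.rt e', ⟨fun h => ?_, (M.mem_B _).2 ⟨e', by simp [tB, tW, h1, h2]⟩⟩, ?_⟩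
    · have := M.inj_lr _ _ h2 h
      subst this; exact M.ne _ h1.symm
    · rintro r ⟨-, hr⟩
      obtain ⟨e'', he⟩ := (M.mem_B _).1 hr
      simp only [tB, tW, Prod.mk.injEq] at he
      have := M.inj_tl e'' e' (by rw [he.1, h1]) (by rw [he.2.1, h2])
      subst this; exact he.2.2.symm

lemma tradeBW (M : PM) : TradeCond M.B M.W := by
  intro t ht
  obtain ⟨e, rfl⟩ := (M.mem_B _).1 ht
  refine ⟨?_, ?_, ?_⟩
  · refine ⟨M.hd e, ⟨(M.ne e), (M.mem_W _).2 ⟨e, rfl⟩⟩, ?_⟩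
    rintro r ⟨-, hr⟩
    obtain ⟨e', he⟩ := (M.mem_W _).1 hr
    simp only [tB, tW, Prod.mk.injEq] at he
    have := M.inj_lr _ _ he.2.1 he.2.2
    subst this; exact he.1.symm
  · obtain ⟨e', h1, h2⟩ := M.exR e
    refine ⟨M.lf e', ⟨fun h => ?_, (M.mem_W _).2 ⟨e', by simp [tB, tW, h1, h2]⟩⟩, ?_⟩
    · have := M.inj_lr _ _ h h2
      subst this; exact M.ne _ h1
    · rintro r ⟨-, hr⟩
      obtain ⟨e'', he⟩ := (M.mem_W _).1 hr
      simp only [tB, tW, Prod.mk.injEq] at he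
      have := M.inj_hr e'' e' (by rw [he.1, h1]) (by rw [he.2.2, h2])
      subst this; exact he.2.1.symm
  · obtain ⟨e', h1, h2⟩ := M.exL e
    refine ⟨M.rt e', ⟨fun h => ?_, (M.mem_W _).2 ⟨e', by simp [tB, tW, h1, h2]⟩⟩, ?_⟩
    · have := M.inj_lr _ _ h2 h
      subst this; exact M.ne _ h1
    · rintro r ⟨-, hr⟩
      obtain ⟨e'', he⟩ := (M.mem_W _).1 hr
      simp only [tB, tW, Prod.mk.injEq] at he
      have := M.inj_hl e'' e' (by rw [he.1, h1]) (by rw [he.2.1, h2])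
      subst this; exact he.2.2.symm

lemma connected (M : PM) : ¬ ∃ (W' B' : Finset (M.R × M.C × M.S)), W' ⊂ M.W ∧ B' ⊂ M.B ∧
      W'.Nonempty ∧ B'.Nonempty ∧ TradeCond W' B' ∧ TradeCond B' W' := by
  rintro ⟨W', B', hW, hB, ⟨t, ht⟩, -, hWB, hBW⟩
  have hwb : ∀ e, M.tW e ∈ W' → M.tB e ∈ B' := by
    intro e he
    obtain ⟨r, ⟨-, hr⟩, -⟩ := (hWB _ he).1
    obtain ⟨e', h⟩ := (M.mem_B _).1 (hB.1 hr)
    rw [← h] at hr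
    simp only [tB, tW, Prod.mk.injEq] at h
    have := M.inj_lr _ _ h.2.1 h.2.2
    subst this; exact hr
  have hbw : ∀ e, M.tB e ∈ B' → M.tW e ∈ W' := by
    intro e he
    obtain ⟨r, ⟨-, hr⟩, -⟩ := (hBW _ he).1
    obtain ⟨e', h⟩ := (M.mem_W _).1 (hW.1 hr)
    rw [← h] at hr
    simp only [tB, tW, Prod.mk.injEq] at h
    have := M.inj_lr _ _ h.2.1 h.2.2
    subst this; exact hr
  obtain ⟨e₀, rfl⟩ := (M.mem_W _).1 (hW.1 ht)
  refine hW.2 fun t' ht' => ?_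
  obtain ⟨e₁, rfl⟩ := (M.mem_W _).1 ht'
  refine M.conn (fun e => M.tW e ∈ W') ?_ e₀ e₁ ht
  rintro e e' h (h' | h')
  · constructor
    · intro he
      obtain ⟨r, ⟨-, hr⟩, -⟩ := (hBW _ (hwb e he)).2.2
      obtain ⟨e₂, h2⟩ := (M.mem_W _).1 (hW.1 hr)
      rw [← h2] at hr
      simp only [tB, tW, Prod.mk.injEq] at h2
      have := M.inj_hl e₂ e' (by rw [h2.1, h]) (by rw [h2.2.1, h'])
      subst this; exact hr
    · intro he
      obtain ⟨r, ⟨-, hr⟩, -⟩ := (hWB _ he).2.2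
      obtain ⟨e₂, h2⟩ := (M.mem_B _).1 (hB.1 hr)
      rw [← h2] at hr
      simp only [tB, tW, Prod.mk.injEq] at h2
      have := M.inj_tl e₂ e (by rw [h2.1, h]) (by rw [h2.2.1, h'])
      subst this; exact hbw _ hr
  · constructor
    · intro he
      obtain ⟨r, ⟨-, hr⟩, -⟩ := (hBW _ (hwb e he)).2.1
      obtain ⟨e₂, h2⟩ := (M.mem_W _).1 (hW.1 hr)
      rw [← h2] at hr
      simp only [tB, tW, Prod.mk.injEq] at h2
      have := M.inj_hr e₂ e' (by rw [h2.1, h]) (by rw [h2.2.2, h'])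
      subst this; exact hr
    · intro he
      obtain ⟨r, ⟨-, hr⟩, -⟩ := (hWB _ he).2.1
      obtain ⟨e₂, h2⟩ := (M.mem_B _).1 (hB.1 hr)
      rw [← h2] at hr
      simp only [tB, tW, Prod.mk.injEq] at h2
      have := M.inj_tr e₂ e (by rw [h2.1, h]) (by rw [h2.2.2, h'])
      subst this; exact hbw _ hr

/-- The spherical bitrade of an embedding. -/
noncomputable def toBitrade (M : PM) : SphericalLatinBitrade where
  R := M.R
  C := M.C
  S := M.S
  instR := M.fR
  instC := M.fC
  instS := M.fS
  W := M.W
  B := M.B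
  W_nonempty := by
    obtain ⟨e⟩ := M.nonempty
    exact ⟨_, (M.mem_W _).2 ⟨e, rfl⟩⟩
  B_nonempty := by
    obtain ⟨e⟩ := M.nonempty
    exact ⟨_, (M.mem_B _).2 ⟨e, rfl⟩⟩
  W_pls := M.W_pls
  B_pls := M.B_pls
  tradeWB := M.tradeWB
  tradeBW := M.tradeBW
  connected := M.connected
  spherical := by
    classical
    rw [M.card_eq]
    unfold W
    rw [Finset.card_image_of_injective]
    · rfl
    · intro a b h
      simp only [tW, Prod.mk.injEq] at h
      exact M.inj_lr _ _ h.2.1 h.2.2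

abbrev A (M : PM) : Type := groupAW M.toBitrade

noncomputable def q (M : PM) (v : M.R ⊕ M.C ⊕ M.S) : M.A :=
  QuotientAddGroup.mk (s := bitradeRelations M.toBitrade)
    (FreeAbelianGroup.of (v : M.toBitrade.R ⊕ M.toBitrade.C ⊕ M.toBitrade.S))

noncomputable def qR (M : PM) (r : M.R) : M.A := M.q (Sum.inl r)
noncomputable def qC (M : PM) (r : M.C) : M.A := M.q (Sum.inr (Sum.inl r))
noncomputable def qS (M : PM) (r : M.S) : M.A := M.q (Sum.inr (Sum.inr r))

lemma rel (M : PM) (e : M.E) : M.qR (M.hd e) + M.qC (M.lf e) + M.qS (M.rt e) = 0 := by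
  refine (QuotientAddGroup.eq_zero_iff _).2 (AddSubgroup.subset_closure ?_)
  exact ⟨M.tW e, (M.mem_W _).2 ⟨e, rfl⟩, rfl⟩

lemma exists_lift (M : PM) {H : Type} [AddCommGroup H] (gR : M.R → H) (gC : M.C → H)
    (gS : M.S → H) (h : ∀ e, gR (M.hd e) + gC (M.lf e) + gS (M.rt e) = 0) :
    ∃ f : M.A →+ H, (∀ r, f (M.qR r) = gR r) ∧ (∀ r, f (M.qC r) = gC r) ∧
      (∀ r, f (M.qS r) = gS r) := by
  let g : FreeAbelianGroup (M.toBitrade.R ⊕ M.toBitrade.C ⊕ M.toBitrade.S) →+ H :=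
    FreeAbelianGroup.lift (Sum.elim gR (Sum.elim gC gS))
  have hg : ∀ v, g (FreeAbelianGroup.of v) = Sum.elim gR (Sum.elim gC gS) v :=
    fun v => FreeAbelianGroup.lift_apply_of _ _
  have hle : bitradeRelations M.toBitrade ≤ g.ker := by
    refine (AddSubgroup.closure_le _).2 ?_
    rintro _ ⟨t, ht, rfl⟩
    obtain ⟨e, rfl⟩ := (M.mem_W _).1 ht
    rw [SetLike.mem_coe, AddMonoidHom.mem_ker]
    simp only [map_add, hg]
    exact h e
  refine ⟨QuotientAddGroup.lift _ g hle, fun r => ?_, fun r => ?_, fun r => ?_⟩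
  · exact hg (Sum.inl r)
  · exact hg (Sum.inr (Sum.inl r))
  · exact hg (Sum.inr (Sum.inr r))

lemma eq_top (M : PM) (K : AddSubgroup M.A) (hR : ∀ r, M.qR r ∈ K) (hC : ∀ r, M.qC r ∈ K)
    (hS : ∀ r, M.qS r ∈ K) : ∀ x, x ∈ K := by
  intro x
  obtain ⟨y, rfl⟩ := QuotientAddGroup.mk_surjective x
  induction y using FreeAbelianGroup.induction_on with
  | zero => exact K.zero_mem
  | of v =>
    rcases v with r | c | s
    · exact hR r
    · exact hC c
    · exact hS s
  | neg v h => exact K.neg_mem h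
  | add a b ha hb => exact K.add_mem ha hb

end PM

set_option linter.unusedSimpArgs false

namespace PM

section expand
variable (M : PM) (n : M.E → ℕ)

abbrev XE : Type := (Σ e : M.E, Fin (n e + 1)) ⊕ (Σ e : M.E, Fin (n e))
abbrev XC : Type := M.C ⊕ (Σ e : M.E, Fin (n e))
abbrev XS : Type := M.S ⊕ (Σ e : M.E, Fin (n e))

def xhd : XE M n → M.R
  | Sum.inl p => M.hd p.1
  | Sum.inr p => M.tl p.1
def xtl : XE M n → M.R
  | Sum.inl p => M.tl p.1
  | Sum.inr p => M.hd p.1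
def xlf : XE M n → XC M n
  | Sum.inl ⟨e, t⟩ => if h : t.1 < n e then Sum.inr ⟨e, ⟨t.1, h⟩⟩ else Sum.inl (M.lf e)
  | Sum.inr p => Sum.inr p
def xrt : XE M n → XS M n
  | Sum.inl ⟨e, t⟩ => if h : t.1 = 0 then Sum.inl (M.rt e)
      else Sum.inr ⟨e, ⟨t.1 - 1, by omega⟩⟩
  | Sum.inr p => Sum.inr p

lemma sig_eq {f : M.E → ℕ} (e : M.E) (t t' : Fin (f e)) :
    ((⟨e, t⟩ : Σ e : M.E, Fin (f e)) = ⟨e, t'⟩) ↔ t.1 = t'.1 := by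
  simp [Fin.ext_iff]

lemma sig_ext {f : M.E → ℕ} (e e' : M.E) (t : Fin (f e)) (t' : Fin (f e')) :
    ((⟨e, t⟩ : Σ e : M.E, Fin (f e)) = ⟨e', t'⟩) ↔ e = e' ∧ t.1 = t'.1 := by
  constructor
  · intro h; cases h; exact ⟨rfl, rfl⟩
  · rintro ⟨rfl, h⟩; rw [sig_eq]; exact h

lemma sig_ext1 (e e' : M.E) (t : Fin (n e + 1)) (t' : Fin (n e' + 1)) :
    ((⟨e, t⟩ : Σ e : M.E, Fin (n e + 1)) = ⟨e', t'⟩) ↔ e = e' ∧ t.1 = t'.1 :=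
  sig_ext M (f := fun e => n e + 1) e e' t t'

/-- Replace every edge `e` by an alternating bundle of `2 n e + 1` edges. -/
noncomputable def expand : PM where
  R := M.R
  C := XC M n
  S := XS M n
  E := XE M n
  fR := M.fR
  fC := by have := M.fC; have := M.fE; infer_instance
  fS := by have := M.fS; have := M.fE; infer_instance
  fE := by have := M.fE; infer_instance
  hd := xhd M n
  tl := xtl M n
  lf := xlf M n
  rt := xrt M n
  ne := by
    rintro (⟨e, t⟩ | ⟨e, t⟩)
    · exact M.ne e
    · exact (M.ne e).symm
  inj_lr := by
    rintro (⟨e, t, ht⟩ | ⟨e, t, ht⟩) (⟨e', t', ht'⟩ | ⟨e', t', ht'⟩) h1 h2 <;>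
      simp only [xlf, xrt] at h1 h2 <;> (try split_ifs at h1) <;> (try split_ifs at h2) <;>
      simp only [Sum.inl.injEq, Sum.inr.injEq, sig_ext, sig_ext1, reduceCtorEq] at h1 h2 ⊢ <;>
      first
      | omega
      | exact ⟨M.inj_lr _ _ h1 h2, by omega⟩
      | (obtain ⟨rfl, h⟩ := h1; exact ⟨rfl, by omega⟩)
      | (obtain ⟨rfl, h⟩ := h2; exact ⟨rfl, by omega⟩)
      | (obtain ⟨rfl, h⟩ := h1; omega)
  inj_hl := by
    rintro (⟨e, t, ht⟩ | ⟨e, t, ht⟩) (⟨e', t', ht'⟩ | ⟨e', t', ht'⟩) h1 h2 <;>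
      simp only [xlf, xrt, xhd, xtl] at h1 h2 <;> (try split_ifs at h2) <;>
      simp only [Sum.inl.injEq, Sum.inr.injEq, sig_ext, sig_ext1, reduceCtorEq] at h1 h2 ⊢
    · exact h2
    · have := M.inj_hl _ _ h1 h2
      subst this
      exact ⟨rfl, by omega⟩
    · obtain ⟨rfl, h⟩ := h2
      exact M.ne _ h1
    · obtain ⟨rfl, h⟩ := h2
      exact M.ne _ h1.symm
    · exact h2
  inj_hr := by
    rintro (⟨e, t, ht⟩ | ⟨e, t, ht⟩) (⟨e', t', ht'⟩ | ⟨e', t', ht'⟩) h1 h2 <;>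
      simp only [xlf, xrt, xhd, xtl] at h1 h2 <;> (try split_ifs at h2) <;>
      simp only [Sum.inl.injEq, Sum.inr.injEq, sig_ext, sig_ext1, reduceCtorEq] at h1 h2 ⊢
    · have := M.inj_hr _ _ h1 h2
      subst this
      exact ⟨rfl, by omega⟩
    · exact ⟨h2.1, by omega⟩
    · obtain ⟨rfl, h⟩ := h2
      exact M.ne _ h1
    · obtain ⟨rfl, h⟩ := h2
      exact M.ne _ h1.symm
    · exact h2
  inj_tl := by
    rintro (⟨e, t, ht⟩ | ⟨e, t, ht⟩) (⟨e', t', ht'⟩ | ⟨e', t', ht'⟩) h1 h2 <;>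
      simp only [xlf, xrt, xhd, xtl] at h1 h2 <;> (try split_ifs at h2) <;>
      simp only [Sum.inl.injEq, Sum.inr.injEq, sig_ext, sig_ext1, reduceCtorEq] at h1 h2 ⊢
    · exact h2
    · have := M.inj_tl _ _ h1 h2
      subst this
      exact ⟨rfl, by omega⟩
    · obtain ⟨rfl, h⟩ := h2
      exact M.ne _ h1.symm
    · obtain ⟨rfl, h⟩ := h2
      exact M.ne _ h1
    · exact h2
  inj_tr := by
    rintro (⟨e, t, ht⟩ | ⟨e, t, ht⟩) (⟨e', t', ht'⟩ | ⟨e', t', ht'⟩) h1 h2 <;>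
      simp only [xlf, xrt, xhd, xtl] at h1 h2 <;> (try split_ifs at h2) <;>
      simp only [Sum.inl.injEq, Sum.inr.injEq, sig_ext, sig_ext1, reduceCtorEq] at h1 h2 ⊢
    · have := M.inj_tr _ _ h1 h2
      subst this
      exact ⟨rfl, by omega⟩
    · exact ⟨h2.1, by omega⟩
    · obtain ⟨rfl, h⟩ := h2
      exact M.ne _ h1.symm
    · obtain ⟨rfl, h⟩ := h2
      exact M.ne _ h1
    · exact h2
  exL := by
    rintro (⟨e, t, ht⟩ | ⟨e, t, ht⟩)
    · by_cases h : t < n e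
      · exact ⟨Sum.inr ⟨e, t, h⟩, rfl, by simp [xlf, h]⟩
      · obtain ⟨e', h1, h2⟩ := M.exL e
        exact ⟨Sum.inl ⟨e', n e', by omega⟩, h1, by simp [xlf, h, h2]⟩
    · exact ⟨Sum.inl ⟨e, t, by omega⟩, rfl, by simp [xlf, ht]⟩
  exR := by
    rintro (⟨e, t, ht⟩ | ⟨e, t, ht⟩)
    · by_cases h : t = 0
      · obtain ⟨e', h1, h2⟩ := M.exR e
        exact ⟨Sum.inl ⟨e', 0, by omega⟩, h1, by simp [xrt, h, h2]⟩
      · exact ⟨Sum.inr ⟨e, t - 1, by omega⟩, rfl, by simp [xrt, h]⟩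
    · exact ⟨Sum.inl ⟨e, t + 1, by omega⟩, rfl, by simp [xrt]⟩
  surjR := by
    intro r
    obtain ⟨e, rfl⟩ := M.surjR r
    exact ⟨Sum.inl ⟨e, 0⟩, rfl⟩
  surjC := by
    rintro (c | p)
    · obtain ⟨e, rfl⟩ := M.surjC c
      exact ⟨Sum.inl ⟨e, n e, by omega⟩, by simp [xlf]⟩
    · exact ⟨Sum.inr p, rfl⟩
  surjS := by
    rintro (c | p)
    · obtain ⟨e, rfl⟩ := M.surjS c
      exact ⟨Sum.inl ⟨e, 0, by omega⟩, by simp [xrt]⟩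
    · exact ⟨Sum.inr p, rfl⟩
  conn := by
    intro P hP
    have hQ : ∀ e t (ht : t < n e), (P (Sum.inr ⟨e, t, ht⟩) ↔ P (Sum.inl ⟨e, t, by omega⟩)) := by
      intro e t ht
      exact hP _ _ rfl (Or.inl (by simp [xlf, ht]))
    have hQ' : ∀ e t (ht : t < n e),
        (P (Sum.inr ⟨e, t, ht⟩) ↔ P (Sum.inl ⟨e, t + 1, by omega⟩)) := by
      intro e t ht
      exact hP _ _ rfl (Or.inr (by simp [xrt]))
    have hc : ∀ e t (ht : t < n e + 1), (P (Sum.inl ⟨e, t, ht⟩) ↔ P (Sum.inl ⟨e, 0, by omega⟩)) := by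
      intro e t
      induction t with
      | zero => intro _; rfl
      | succ t ih =>
        intro ht
        rw [← hQ' e t (by omega), hQ e t (by omega), ih (by omega)]
    have key : ∀ e e', P (Sum.inl ⟨e, 0, by omega⟩) → P (Sum.inl ⟨e', 0, by omega⟩) := by
      refine M.conn (fun e => P (Sum.inl ⟨e, 0, by omega⟩)) ?_
      rintro e e' h (h' | h')
      · rw [← hc e (n e) (by omega), ← hc e' (n e') (by omega)]
        exact hP _ _ h (Or.inl (by simp [xlf, h']))
      · exact hP _ _ h (Or.inr (by simp [xrt, h']))
    have base : ∀ x : XE M n, ∃ e, (P x ↔ P (Sum.inl ⟨e, 0, by omega⟩)) := by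
      rintro (⟨e, t, ht⟩ | ⟨e, t, ht⟩)
      · exact ⟨e, hc e t ht⟩
      · exact ⟨e, by rw [hQ, hc]⟩
    intro x y hx
    obtain ⟨e, he⟩ := base x
    obtain ⟨e', he'⟩ := base y
    exact he'.2 (key e e' (he.1 hx))
  nonempty := by
    obtain ⟨e⟩ := M.nonempty
    exact ⟨Sum.inl ⟨e, 0⟩⟩
  card_eq := by
    have := M.fE
    have := M.fC
    have := M.fS
    have := M.fR
    have h : Fintype.card M.R + Fintype.card M.C + Fintype.card M.S = Fintype.card M.E + 2 := by
      convert M.card_eq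
    have h1 : Fintype.card (XE M n) = Fintype.card M.E + ∑ e, n e + ∑ e, n e := by
      simp [Finset.sum_add_distrib]; ring
    have h2 : Fintype.card (XC M n) = Fintype.card M.C + ∑ e, n e := by simp
    have h3 : Fintype.card (XS M n) = Fintype.card M.S + ∑ e, n e := by simp
    have : Fintype.card M.R + Fintype.card (XC M n) + Fintype.card (XS M n)
        = Fintype.card (XE M n) + 2 := by omega
    convert this

noncomputable def xR (r : M.R) : (M.expand n).A := (M.expand n).qR r
noncomputable def eC (r : XC M n) : (M.expand n).A := (M.expand n).qC r
noncomputable def eS (r : XS M n) : (M.expand n).A := (M.expand n).qS r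
noncomputable def xC (r : M.C) : (M.expand n).A := M.eC n (Sum.inl r)
noncomputable def xS (r : M.S) : (M.expand n).A := M.eS n (Sum.inl r)

lemma e_rel (x : XE M n) :
    M.xR n (xhd M n x) + M.eC n (xlf M n x) + M.eS n (xrt M n x) = 0 :=
  (M.expand n).rel x

lemma e_lift {H : Type} [AddCommGroup H] (gR : M.R → H) (gC : XC M n → H)
    (gS : XS M n → H)
    (h : ∀ x : XE M n, gR (xhd M n x) + gC (xlf M n x) + gS (xrt M n x) = 0) :
    ∃ f : (M.expand n).A →+ H, (∀ r, f (M.xR n r) = gR r) ∧ (∀ r, f (M.eC n r) = gC r) ∧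
      (∀ r, f (M.eS n r) = gS r) :=
  (M.expand n).exists_lift gR gC gS h

lemma e_eq_top (K : AddSubgroup (M.expand n).A) (hR : ∀ r, M.xR n r ∈ K)
    (hC : ∀ r, M.eC n r ∈ K) (hS : ∀ r, M.eS n r ∈ K) : ∀ x, x ∈ K :=
  (M.expand n).eq_top K hR hC hS

lemma x_chain (e : M.E) (t : ℕ) (ht : t < n e + 1) :
    M.eS n (xrt M n (Sum.inl ⟨e, t, ht⟩)) =
      M.xS n (M.rt e) + (t : ℤ) • (M.xR n (M.hd e) - M.xR n (M.tl e)) := by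
  induction t with
  | zero => simp [xrt, xS]
  | succ t ih =>
    have ih := ih (by omega)
    have h1 := M.e_rel n (Sum.inl ⟨e, t, by omega⟩)
    have h2 := M.e_rel n (Sum.inr ⟨e, t, by omega⟩)
    have e1 : xlf M n (Sum.inl ⟨e, t, by omega⟩) = Sum.inr ⟨e, t, by omega⟩ := by
      have : t < n e := by omega
      simp [xlf, this]
    have e2 : xlf M n (Sum.inr ⟨e, t, by omega⟩) = Sum.inr ⟨e, t, by omega⟩ := rfl
    have e3 : xrt M n (Sum.inr ⟨e, t, by omega⟩) = xrt M n (Sum.inl ⟨e, t + 1, ht⟩) := by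
      simp [xrt]
    rw [e1, ih] at h1
    rw [e2, e3] at h2
    simp only [xhd] at h1 h2
    generalize M.eS n (xrt M n (Sum.inl ⟨e, t + 1, ht⟩)) = s' at *
    generalize M.eC n _ = c at *
    have h3 : s' = (M.xR n (M.tl e) + c + s') - (M.xR n (M.hd e) + c +
      (M.xS n (M.rt e) + (t : ℤ) • (M.xR n (M.hd e) - M.xR n (M.tl e)))) + 
      (M.xS n (M.rt e) + ((t + 1 : ℕ) : ℤ) • (M.xR n (M.hd e) - M.xR n (M.tl e))) := by
      push_cast
      module
    rw [h1, h2] at h3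
    rw [h3]; abel

lemma x_rel (e : M.E) :
    M.xR n (M.hd e) + M.xC n (M.lf e) + M.xS n (M.rt e)
      + (n e : ℤ) • (M.xR n (M.hd e) - M.xR n (M.tl e)) = 0 := by
  have h1 := M.e_rel n (Sum.inl ⟨e, n e, by omega⟩)
  have e1 : xlf M n (Sum.inl ⟨e, n e, by omega⟩) = Sum.inl (M.lf e) := by
    simp [xlf]
  rw [e1, x_chain] at h1
  rw [← h1]
  simp only [xhd, xC]
  abel

lemma x_eq_top (K : AddSubgroup (M.expand n).A) (hR : ∀ r, M.xR n r ∈ K)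
    (hC : ∀ r, M.xC n r ∈ K) (hS : ∀ r, M.xS n r ∈ K) : ∀ x, x ∈ K := by
  have hS' : ∀ p, M.eS n (Sum.inr p) ∈ K := by
    rintro ⟨e, t, ht⟩
    have e3 : (Sum.inr ⟨e, t, ht⟩ : XS M n) = xrt M n (Sum.inl ⟨e, t + 1, by omega⟩) := by
      simp [xrt]
    rw [e3, x_chain]
    exact K.add_mem (hS _) (K.zsmul_mem (K.sub_mem (hR _) (hR _)) _)
  refine M.e_eq_top n K hR ?_ ?_
  · rintro (c | p)
    · exact hC c
    · have h := M.e_rel n (Sum.inr p)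
      simp only [xhd, xlf, xrt] at h
      rw [← K.add_mem_cancel_left (hR (M.tl p.1)), ← K.add_mem_cancel_right (hS' p), h]
      exact K.zero_mem
  · rintro (c | p)
    · exact hS c
    · exact hS' p

lemma x_lift {H : Type} [AddCommGroup H] (gR : M.R → H) (gC : M.C → H)
    (gS : M.S → H) (h : ∀ e, gR (M.hd e) + gC (M.lf e) + gS (M.rt e)
      + (n e : ℤ) • (gR (M.hd e) - gR (M.tl e)) = 0) :
    ∃ f : (M.expand n).A →+ H, (∀ r, f (M.xR n r) = gR r) ∧ (∀ r, f (M.xC n r) = gC r) ∧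
      (∀ r, f (M.xS n r) = gS r) := by
  let kC : XC M n → H := Sum.elim gC (fun p => - gS (M.rt p.1) - gR (M.hd p.1)
    - (p.2.1 : ℤ) • (gR (M.hd p.1) - gR (M.tl p.1)))
  let kS : XS M n → H := Sum.elim gS (fun p => gS (M.rt p.1)
    + ((p.2.1 : ℤ) + 1) • (gR (M.hd p.1) - gR (M.tl p.1)))
  obtain ⟨f, h1, h2, h3⟩ := M.e_lift n gR kC kS (by
    rintro (⟨e, t, ht⟩ | ⟨e, t, ht⟩)
    · have hS : kS (xrt M n (Sum.inl ⟨e, t, ht⟩)) =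
          gS (M.rt e) + (t : ℤ) • (gR (M.hd e) - gR (M.tl e)) := by
        rcases t with _ | t
        · simp [xrt, kS]
        · simp [xrt, kS]
      rw [hS]
      simp only [xhd]
      by_cases hlt : t < n e
      · simp only [xlf, hlt, kC, dif_pos, Sum.elim_inr]
        abel
      · have : t = n e := by omega
        subst this
        simp only [xlf, kC, lt_irrefl, dif_neg, not_false_eq_true, Sum.elim_inl]
        rw [← h e]; abel
    · simp only [xhd, xlf, xrt, kC, kS, Sum.elim_inr]
      module)
  exact ⟨f, h1, fun r => h2 (Sum.inl r), fun r => h3 (Sum.inl r)⟩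

end expand
end PM

set_option linter.unusedSimpArgs false

namespace PM

section base
variable (k : ℕ)

inductive BE (k : ℕ) : Type
  | u (i : Fin k)
  | w (i : Fin (k + 1))
  | xt (i : Fin k)
  | xb (i : Fin k)
  | yt (i : Fin k)
  | yb (i : Fin k)

inductive BR (k : ℕ) : Type
  | hub
  | x (i : Fin k)
  | y (i : Fin k)

def beEquiv : BE k ≃ (Fin k ⊕ Fin (k + 1) ⊕ Fin k ⊕ Fin k ⊕ Fin k ⊕ Fin k) where
  toFun
    | .u i => .inl i
    | .w i => .inr (.inl i)
    | .xt i => .inr (.inr (.inl i))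
    | .xb i => .inr (.inr (.inr (.inl i)))
    | .yt i => .inr (.inr (.inr (.inr (.inl i))))
    | .yb i => .inr (.inr (.inr (.inr (.inr i))))
  invFun
    | .inl i => .u i
    | .inr (.inl i) => .w i
    | .inr (.inr (.inl i)) => .xt i
    | .inr (.inr (.inr (.inl i))) => .xb i
    | .inr (.inr (.inr (.inr (.inl i)))) => .yt i
    | .inr (.inr (.inr (.inr (.inr i)))) => .yb i
  left_inv := by rintro (_ | _ | _ | _ | _ | _) <;> rfl
  right_inv := by rintro (_ | _ | _ | _ | _ | _) <;> rfl

def brEquiv : BR k ≃ (Unit ⊕ Fin k ⊕ Fin k) where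
  toFun
    | .hub => .inl ()
    | .x i => .inr (.inl i)
    | .y i => .inr (.inr i)
  invFun
    | .inl () => .hub
    | .inr (.inl i) => .x i
    | .inr (.inr i) => .y i
  left_inv := by rintro (_ | _ | _) <;> rfl
  right_inv := by rintro (_ | _ | _) <;> rfl

instance : Fintype (BE k) := Fintype.ofEquiv _ (beEquiv k).symm
instance : Fintype (BR k) := Fintype.ofEquiv _ (brEquiv k).symm

abbrev BC : Type := Fin k ⊕ Fin (k + 1)

def yp : Fin (k + 1) → BR k := Fin.cases .hub .y
def xp : Fin (k + 1) → BR k := Fin.lastCases .hub .x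

@[simp] lemma yp_zero : yp k 0 = .hub := rfl
@[simp] lemma yp_succ (i : Fin k) : yp k i.succ = .y i := rfl
@[simp] lemma xp_last : xp k (Fin.last k) = .hub := by simp [xp]
@[simp] lemma xp_castSucc (i : Fin k) : xp k i.castSucc = .x i := by simp [xp]

def bhd : BE k → BR k
  | .u i => .y i
  | .w i => yp k i
  | .xt i => .x i
  | .xb i => .x i
  | .yt _ => .hub
  | .yb _ => .hub
def btl : BE k → BR k
  | .u i => .x i
  | .w i => xp k i
  | .xt _ => .hub
  | .xb _ => .hub
  | .yt i => .y i
  | .yb i => .y i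
def blf : BE k → BC k
  | .u i => .inl i
  | .w i => .inr i
  | .xt i => .inl i
  | .xb i => .inr i.castSucc
  | .yt i => .inl i
  | .yb i => .inr i.succ
def brt : BE k → BC k
  | .u i => .inl i
  | .w i => .inr i
  | .xt i => .inr i.castSucc
  | .xb i => .inl i
  | .yt i => .inr i.succ
  | .yb i => .inl i

lemma yp_ne_x (i : Fin (k + 1)) (j : Fin k) : (yp k i = .x j) = False := by
  cases i using Fin.cases <;> simp
lemma xp_ne_y (i : Fin (k + 1)) (j : Fin k) : (xp k i = .y j) = False := by
  cases i using Fin.lastCases <;> simp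
lemma yp_hub (i : Fin (k + 1)) : yp k i = .hub ↔ i.1 = 0 := by
  cases i using Fin.cases <;> simp
lemma xp_hub (i : Fin (k + 1)) : xp k i = .hub ↔ i.1 = k := by
  cases i using Fin.lastCases with
  | last => simp
  | cast i => have := i.2; simp; omega
lemma yp_y (i : Fin (k + 1)) (j : Fin k) : yp k i = .y j ↔ i.1 = j.1 + 1 := by
  cases i using Fin.cases <;> simp [Fin.ext_iff]
lemma xp_x (i : Fin (k + 1)) (j : Fin k) : xp k i = .x j ↔ i.1 = j.1 := by
  cases i using Fin.lastCases with
  | last => have := j.2; simp; omega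
  | cast i => simp [Fin.ext_iff]
lemma yp_ne_x_symm (i : Fin (k + 1)) (j : Fin k) : (.x j = yp k i) = False := by
  exact (propext eq_comm).trans (yp_ne_x k i j)
lemma xp_ne_y_symm (i : Fin (k + 1)) (j : Fin k) : (.y j = xp k i) = False := by
  exact (propext eq_comm).trans (xp_ne_y k i j)
lemma yp_hub_symm (i : Fin (k + 1)) : .hub = yp k i ↔ i.1 = 0 := by rw [eq_comm, yp_hub]
lemma xp_hub_symm (i : Fin (k + 1)) : .hub = xp k i ↔ i.1 = k := by rw [eq_comm, xp_hub]
lemma yp_y_symm (i : Fin (k + 1)) (j : Fin k) : .y j = yp k i ↔ i.1 = j.1 + 1 := by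
  rw [eq_comm, yp_y]
lemma xp_x_symm (i : Fin (k + 1)) (j : Fin k) : .x j = xp k i ↔ i.1 = j.1 := by
  rw [eq_comm, xp_x]

/-- The base embedding: a path `x₀ y₀ x₁ y₁ …` closed up through a hub. -/
def base (hk : 1 ≤ k) : PM where
  R := BR k
  C := BC k
  S := BC k
  E := BE k
  fR := inferInstance
  fC := inferInstance
  fS := inferInstance
  fE := inferInstance
  hd := bhd k
  tl := btl k
  lf := blf k
  rt := brt k
  ne := by
    rintro (i | i | i | i | i | i) <;> simp [bhd, btl]
    cases i using Fin.cases with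
    | zero =>
      rw [yp_zero, xp_hub_symm]; simp; omega
    | succ i => rw [yp_succ, xp_ne_y_symm]; exact not_false
  inj_lr := by
    rintro (i | i | i | i | i | i) (j | j | j | j | j | j) <;>
      simp [blf, brt, Fin.ext_iff] <;> omega
  inj_hl := by
    rintro (i | i | i | i | i | i) (j | j | j | j | j | j) h1 h2 <;>
      simp only [blf, bhd, yp_ne_x, yp_ne_x_symm, yp_hub, yp_y, yp_hub_symm, yp_y_symm,
        reduceCtorEq, Sum.inl.injEq, Sum.inr.injEq, BE.u.injEq, BE.w.injEq, BE.xt.injEq,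
        BE.xb.injEq, BE.yt.injEq, BE.yb.injEq, BR.x.injEq, BR.y.injEq, Fin.ext_iff,
        Fin.val_succ, Fin.val_castSucc, Fin.val_last] at h1 h2 ⊢ <;> omega
  inj_hr := by
    rintro (i | i | i | i | i | i) (j | j | j | j | j | j) h1 h2 <;>
      simp only [brt, bhd, yp_ne_x, yp_ne_x_symm, yp_hub, yp_y, yp_hub_symm, yp_y_symm,
        reduceCtorEq, Sum.inl.injEq, Sum.inr.injEq, BE.u.injEq, BE.w.injEq, BE.xt.injEq,
        BE.xb.injEq, BE.yt.injEq, BE.yb.injEq, BR.x.injEq, BR.y.injEq, Fin.ext_iff,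
        Fin.val_succ, Fin.val_castSucc, Fin.val_last] at h1 h2 ⊢ <;> omega
  inj_tl := by
    rintro (i | i | i | i | i | i) (j | j | j | j | j | j) h1 h2 <;>
      simp only [blf, btl, xp_ne_y, xp_ne_y_symm, xp_hub, xp_x, xp_hub_symm, xp_x_symm,
        reduceCtorEq, Sum.inl.injEq, Sum.inr.injEq, BE.u.injEq, BE.w.injEq, BE.xt.injEq,
        BE.xb.injEq, BE.yt.injEq, BE.yb.injEq, BR.x.injEq, BR.y.injEq, Fin.ext_iff,
        Fin.val_succ, Fin.val_castSucc, Fin.val_last] at h1 h2 ⊢ <;> omega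
  inj_tr := by
    rintro (i | i | i | i | i | i) (j | j | j | j | j | j) h1 h2 <;>
      simp only [brt, btl, xp_ne_y, xp_ne_y_symm, xp_hub, xp_x, xp_hub_symm, xp_x_symm,
        reduceCtorEq, Sum.inl.injEq, Sum.inr.injEq, BE.u.injEq, BE.w.injEq, BE.xt.injEq,
        BE.xb.injEq, BE.yt.injEq, BE.yb.injEq, BR.x.injEq, BR.y.injEq, Fin.ext_iff,
        Fin.val_succ, Fin.val_castSucc, Fin.val_last] at h1 h2 ⊢ <;> omega
  exL := by
    rintro (i | i | i | i | i | i)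
    · exact ⟨.xt i, rfl, rfl⟩
    · cases i using Fin.lastCases with
      | last =>
        refine ⟨.yb ⟨k - 1, by omega⟩, by simp [bhd, btl], ?_⟩
        simp [blf, Fin.ext_iff]; omega
      | cast i => exact ⟨.xb i, by simp [bhd, btl], rfl⟩
    · exact ⟨.yt i, rfl, rfl⟩
    · by_cases h : i.1 = 0
      · exact ⟨.w i.castSucc, by simp [bhd, btl, yp_hub, Fin.ext_iff, h], rfl⟩
      · refine ⟨.yb ⟨i.1 - 1, by omega⟩, rfl, ?_⟩
        simp [blf, Fin.ext_iff]; omega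
    · exact ⟨.u i, rfl, rfl⟩
    · exact ⟨.w i.succ, rfl, rfl⟩
  exR := by
    rintro (i | i | i | i | i | i)
    · exact ⟨.xb i, rfl, rfl⟩
    · cases i using Fin.lastCases with
      | last =>
        refine ⟨.yt ⟨k - 1, by omega⟩, by simp [bhd, btl], ?_⟩
        simp [brt, Fin.ext_iff]; omega
      | cast i => exact ⟨.xt i, by simp [bhd, btl], rfl⟩
    · by_cases h : i.1 = 0
      · exact ⟨.w i.castSucc, by simp [bhd, btl, yp_hub, Fin.ext_iff, h], rfl⟩
      · refine ⟨.yt ⟨i.1 - 1, by omega⟩, rfl, ?_⟩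
        simp [brt, Fin.ext_iff]; omega
    · exact ⟨.yb i, rfl, rfl⟩
    · exact ⟨.w i.succ, rfl, rfl⟩
    · exact ⟨.u i, rfl, rfl⟩
  surjR := by
    rintro (_ | i | i)
    · exact ⟨.yt ⟨0, hk⟩, rfl⟩
    · exact ⟨.xt i, rfl⟩
    · exact ⟨.u i, rfl⟩
  surjC := by
    rintro (i | i)
    · exact ⟨.u i, rfl⟩
    · exact ⟨.w i, rfl⟩
  surjS := by
    rintro (i | i)
    · exact ⟨.u i, rfl⟩
    · exact ⟨.w i, rfl⟩
  conn := by
    intro P hP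
    have h1 : ∀ i, P (.u i) ↔ P (.xt i) := fun i => hP _ _ rfl (Or.inl rfl)
    have h2 : ∀ i, P (.u i) ↔ P (.xb i) := fun i => hP _ _ rfl (Or.inr rfl)
    have h3 : ∀ i, P (.xt i) ↔ P (.yt i) := fun i => hP _ _ rfl (Or.inl rfl)
    have h4 : ∀ i, P (.xb i) ↔ P (.yb i) := fun i => hP _ _ rfl (Or.inr rfl)
    have h5 : ∀ i : Fin k, P (.yb i) ↔ P (.w i.succ) := fun i => hP _ _ rfl (Or.inl rfl)
    have h6 : ∀ i : Fin k, P (.w i.castSucc) ↔ P (.xb i) :=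
      fun i => hP _ _ (by simp [bhd, btl]) (Or.inl rfl)
    have h7 : ∀ i : Fin (k + 1), P (.w i) ↔ P (.w 0) := by
      intro i
      induction i using Fin.induction with
      | zero => rfl
      | succ i ih => rw [← h5, ← h4, ← h6, ih]
    have h8 : ∀ i, P (.u i) ↔ P (.w 0) := fun i => by rw [h2, ← h6, h7]
    have h9 : ∀ e, P e ↔ P (.w 0) := by
      rintro (i | i | i | i | i | i)
      · exact h8 i
      · exact h7 i
      · rw [← h1, h8]
      · rw [← h2, h8]
      · rw [← h3, ← h1, h8]
      · rw [← h4, ← h2, h8]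
    intro e e' h
    rw [h9] at h ⊢
    exact h
  nonempty := ⟨.w 0⟩
  card_eq := by
    rw [Fintype.card_congr (brEquiv k), Fintype.card_congr (beEquiv k)]
    simp
    ring
end base
end PM

namespace PM
section final

/-- Multiplicities of the bundles. -/
def mult (k m : ℕ) (a : Fin k → ℕ) : BE k → ℕ
  | .u _ => 0
  | .w _ => 0
  | .xt _ => m - 2
  | .xb _ => 0
  | .yt i => a i - 2
  | .yb _ => 0

abbrev GG (k m : ℕ) (a : Fin k → ℕ) : Type := (i : Fin k) → ZMod (m * a i)

/-- `ZZ 0 = 0`, `ZZ (i+1)` is the `i`-th generator. -/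
def ZZ (k m : ℕ) (a : Fin k → ℕ) : ℕ → GG k m a
  | 0 => 0
  | i + 1 => if h : i < k then Pi.single ⟨i, h⟩ 1 else 0

def sg (k m : ℕ) (a : Fin k → ℕ) (i : ℕ) : GG k m a :=
  ∑ l ∈ Finset.range i, (ZZ k m a (l + 1) + ZZ k m a l)

lemma sg_succ (k m : ℕ) (a : Fin k → ℕ) (i : ℕ) :
    sg k m a (i + 1) = sg k m a i + (ZZ k m a (i + 1) + ZZ k m a i) :=
  Finset.sum_range_succ _ _

lemma ZZ_tor (k m : ℕ) (a : Fin k → ℕ) (i : Fin k) :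
    ((a i : ℤ) * m) • ZZ k m a (i.1 + 1) = 0 := by
  simp only [ZZ, i.2, dif_pos]
  rw [← Pi.single_zsmul]
  have : ((a i : ℤ) * m) • (1 : ZMod (m * a i)) = 0 := by
    rw [zsmul_one]
    have h0 := ZMod.natCast_self (m * a i)
    push_cast at h0 ⊢
    linear_combination h0
  rw [this, Pi.single_zero]

variable (k m : ℕ) (a : Fin k → ℕ)

def gR : BR k → ℤ × ℤ × GG k m a
  | .hub => (1, 0, 0)
  | .x i => (1, 0, ZZ k m a (i.1 + 1) + ZZ k m a i.1)
  | .y i => (1, 0, (m : ℤ) • ZZ k m a (i.1 + 1))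

def gC : BC k → ℤ × ℤ × GG k m a
  | .inl i => (0, 1, sg k m a (i.1 + 1) - (m : ℤ) • ZZ k m a (i.1 + 1))
  | .inr i => (0, 1, sg k m a i.1)

def gS : BC k → ℤ × ℤ × GG k m a
  | .inl i => (-1, -1, - sg k m a (i.1 + 1))
  | .inr i => (-1, -1, - sg k m a i.1 - (m : ℤ) • ZZ k m a i.1)

lemma gR_yp (i : Fin (k + 1)) : gR k m a (yp k i) = (1, 0, (m : ℤ) • ZZ k m a i.1) := by
  cases i using Fin.cases with
  | zero => simp [gR, ZZ]
  | succ i => simp [gR]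

lemma g_rel (hm : 2 ≤ m) (ha : ∀ i, 2 ≤ a i) (e : BE k) : gR k m a (bhd k e) + gC k m a (blf k e) + gS k m a (brt k e)
    + (mult k m a e : ℤ) • (gR k m a (bhd k e) - gR k m a (btl k e)) = 0 := by
  have hm' : ((m - 2 : ℕ) : ℤ) = m - 2 := by omega
  rcases e with i | i | i | i | i | i
  · simp only [bhd, blf, brt, gR, gC, gS, mult]
    ext1
    · simp
    ext1
    · simp
    · simp
  · simp only [bhd, blf, brt, gR_yp, gC, gS, mult]
    ext1
    · simp
    ext1
    · simp
    · simp
      ring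
  · simp only [bhd, btl, blf, brt, gR, gC, gS, mult]
    ext1
    · simp
    ext1
    · simp
    · simp only [Prod.snd_add, Prod.smul_snd, Prod.snd_sub, Prod.snd_zero, sg_succ, hm',
        Fin.val_castSucc]
      module
  · simp only [bhd, btl, blf, brt, gR, gC, gS, mult]
    ext1
    · simp
    ext1
    · simp
    · simp only [Prod.snd_add, Prod.smul_snd, Prod.snd_sub, Prod.snd_zero, sg_succ,
        Fin.val_castSucc]
      module
  · have h := ZZ_tor k m a i
    have ha' : ((a i - 2 : ℕ) : ℤ) = a i - 2 := by have := ha i; omega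
    simp only [bhd, btl, blf, brt, gR, gC, gS, mult]
    ext1
    · simp
    ext1
    · simp
    · simp only [Prod.snd_add, Prod.smul_snd, Prod.snd_sub, Prod.snd_zero, ha',
        Fin.val_succ]
      refine Eq.trans (b := -(((a i : ℤ) * m) • ZZ k m a (i.1 + 1))) (by module) (by rw [h, neg_zero])
  · simp only [bhd, btl, blf, brt, gR, gC, gS, mult]
    ext1
    · simp
    ext1
    · simp
    · simp

theorem core (hm : 2 ≤ m) (ha : ∀ i, 2 ≤ a i) (A : Type) [AddCommGroup A] (r : BR k → A) (c s : BC k → A)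
    (rel : ∀ e : BE k, r (bhd k e) + c (blf k e) + s (brt k e)
      + (mult k m a e : ℤ) • (r (bhd k e) - r (btl k e)) = 0)
    (lift : ∃ f : A →+ ℤ × ℤ × GG k m a, (∀ x, f (r x) = gR k m a x) ∧
      (∀ x, f (c x) = gC k m a x) ∧ (∀ x, f (s x) = gS k m a x))
    (top : ∀ K : AddSubgroup A, (∀ x, r x ∈ K) → (∀ x, c x ∈ K) → (∀ x, s x ∈ K) → ∀ x, x ∈ K) :
    Nonempty (AddCommGroup.torsion A ≃+ GG k m a) := by
  have hm' : ((m - 2 : ℕ) : ℤ) = m - 2 := by omega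
  obtain ⟨f, fR, fC, fS⟩ := lift
  -- the recursive generators
  let X : ℕ → A := fun i => if h : i < k then r (.x ⟨i, h⟩) - r .hub else 0
  let z : ℕ → A := fun i => Nat.rec 0 (fun j w => X j - w) i
  have z0 : z 0 = 0 := rfl
  have zs : ∀ i, z (i + 1) = X i - z i := fun i => rfl
  have hX : ∀ i : Fin k, r (.x i) = X i.1 + r .hub := by intro i; simp [X]
  -- relations
  have h1 : ∀ i : Fin k, (m : ℤ) • X i.1 =
      (r (yp k i.castSucc) - r .hub) + (r (.y i) - r .hub) := by
    intro i
    have e1 := rel (.u i)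
    have e2 := rel (.w i.castSucc)
    have e3 := rel (.xt i)
    have e4 := rel (.xb i)
    simp only [bhd, btl, blf, brt, mult, hm', hX] at e1 e2 e3 e4
    rw [← sub_eq_zero]
    have := congrArg₂ (· - ·) (congrArg₂ (· + ·) e3 e4) (congrArg₂ (· + ·) e1 e2)
    simp only [add_zero, sub_zero] at this
    rw [← this]
    module
  have h2 : ∀ i : Fin k, (a i : ℤ) • (r (.y i) - r .hub) = 0 := by
    intro i
    have ha' : ((a i - 2 : ℕ) : ℤ) = a i - 2 := by have := ha i; omega
    have e1 := rel (.u i)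
    have e2 := rel (.w i.succ)
    have e3 := rel (.yt i)
    have e4 := rel (.yb i)
    simp only [bhd, btl, blf, brt, mult, ha', yp_succ] at e1 e2 e3 e4
    have := congrArg₂ (· - ·) (congrArg₂ (· + ·) e1 e2) (congrArg₂ (· + ·) e3 e4)
    simp only [add_zero, sub_zero] at this
    rw [← this]
    module
  have h3 : ∀ i : Fin (k + 1), r (yp k i) - r .hub = (m : ℤ) • z i.1 := by
    intro i
    induction i using Fin.induction with
    | zero => simp [z0]
    | succ i ih =>
      have := h1 i
      rw [ih] at this
      simp only [yp_succ, Fin.val_succ, zs, smul_sub]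
      rw [this]
      simp
  have h4 : ∀ i : Fin k, ((m * a i : ℕ) : ℤ) • z (i.1 + 1) = 0 := by
    intro i
    have := h2 i
    have h := h3 i.succ
    simp only [yp_succ, Fin.val_succ] at h
    rw [h, smul_smul] at this
    push_cast
    rw [mul_comm]
    exact this
  -- the inverse
  let L : (i : Fin k) → ZMod (m * a i) →+ A := fun i =>
    ZMod.lift (m * a i) ⟨zmultiplesHom A (z (i.1 + 1)), by simpa using h4 i⟩
  have hL : ∀ i (t : ℤ), L i (t : ZMod (m * a i)) = t • z (i.1 + 1) := by
    intro i t
    simp [L]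
  let c0 : BC k := .inr 0
  let g2 : GG k m a →+ A := ∑ i, (L i).comp (Pi.evalAddMonoidHom _ i)
  have hg2 : ∀ v, g2 v = ∑ i, L i (v i) := by intro v; simp [g2]
  let g : ℤ × ℤ × GG k m a →+ A :=
    AddMonoidHom.coprod (zmultiplesHom A (r .hub))
      (AddMonoidHom.coprod (zmultiplesHom A (c c0)) g2)
  have hg : ∀ p q v, g (p, q, v) = p • r .hub + (q • c c0 + g2 v) := by
    intro p q v; simp [g]
  have fz : ∀ i, i ≤ k → f (z i) = (0, 0, ZZ k m a i) := by
    intro i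
    induction i with
    | zero => intro _; simp [z0, ZZ]; rfl
    | succ i ih =>
      intro hi
      have hx : X i = r (.x ⟨i, hi⟩) - r .hub := by
        have : i < k := hi
        simp [X, this]
      rw [zs, map_sub, ih (by omega), hx, map_sub, fR, fR]
      simp [gR]
  have fL : ∀ i (t : ZMod (m * a i)), f (L i t) = (0, 0, Pi.single i t) := by
    intro i t
    obtain ⟨t, rfl⟩ := ZMod.intCast_surjective t
    rw [hL, map_zsmul, fz _ i.2]
    simp only [ZZ, i.2, dif_pos, Prod.smul_mk, smul_zero]
    rw [← Pi.single_zsmul]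
    simp
  have fg2 : ∀ v, f (g2 v) = (0, 0, v) := by
    intro v
    rw [hg2, map_sum]
    simp only [fL]
    ext1
    · simp [Prod.fst_sum]
    ext1
    · simp [Prod.fst_sum, Prod.snd_sum]
    · simp only [Prod.snd_sum]
      exact Finset.univ_sum_single v
  have hsurj : ∀ x, x ∈ g.range := by
    have mr : r .hub ∈ g.range := ⟨(1, 0, 0), by rw [hg]; simp⟩
    have mc : c c0 ∈ g.range := ⟨(0, 1, 0), by rw [hg]; simp⟩
    have mz : ∀ i, i ≤ k → z i ∈ g.range := by
      rintro (_ | i) hi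
      · exact zero_mem _
      · refine ⟨(0, 0, Pi.single ⟨i, hi⟩ 1), ?_⟩
        rw [hg, hg2, Finset.sum_eq_single ⟨i, hi⟩]
        · have := hL ⟨i, hi⟩ 1
          simp only [Int.cast_one] at this
          simp [this]
        · intro j _ hj
          rw [Pi.single_eq_of_ne hj, map_zero]
        · simp
    have mX : ∀ i, i < k → X i ∈ g.range := by
      intro i hi
      have : X i = z (i + 1) + z i := by rw [zs]; abel
      rw [this]
      exact add_mem (mz _ hi) (mz _ hi.le)
    have myp : ∀ i, r (yp k i) ∈ g.range := by
      intro i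
      have : r (yp k i) = (m : ℤ) • z i.1 + r .hub := by rw [← h3]; abel
      rw [this]
      exact add_mem (zsmul_mem (mz _ (by omega)) _) mr
    have mR : ∀ x, r x ∈ g.range := by
      rintro (_ | i | i)
      · exact mr
      · rw [hX]; exact add_mem (mX _ i.2) mr
      · have := myp i.succ
        simpa using this
    have key : ∀ e : BE k, c (blf k e) ∈ g.range ↔ s (brt k e) ∈ g.range := by
      intro e
      have h := rel e
      have hR : r (bhd k e) + (mult k m a e : ℤ) • (r (bhd k e) - r (btl k e)) ∈ g.range :=
        add_mem (mR _) (zsmul_mem (sub_mem (mR _) (mR _)) _)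
      have h' : c (blf k e) + s (brt k e) ∈ g.range := by
        have : c (blf k e) + s (brt k e) =
          -(r (bhd k e) + (mult k m a e : ℤ) • (r (bhd k e) - r (btl k e))) := by
          rw [← sub_eq_zero, ← h]; abel
        rw [this]; exact neg_mem hR
      constructor
      · intro hc; exact (AddSubgroup.add_mem_cancel_left _ hc).1 h'
      · intro hs; exact (AddSubgroup.add_mem_cancel_right _ hs).1 h'
    have kc : ∀ i : Fin (k + 1), c (.inr i) ∈ g.range := by
      intro i
      induction i using Fin.induction with
      | zero => exact mc
      | succ i ih => exact (key (.yb i)).2 ((key (.xb i)).1 ih)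
    have ks : ∀ i : Fin (k + 1), s (.inr i) ∈ g.range := fun i => (key (.w i)).1 (kc i)
    refine top _ mR ?_ ?_
    · rintro (i | i)
      · exact (key (.xt i)).2 (ks _)
      · exact kc i
    · rintro (i | i)
      · exact (key (.xb i)).1 (kc _)
      · exact ks i
  -- conclusion
  have hpos : 0 < ∏ i, (m * a i) :=
    Finset.prod_pos fun i _ => Nat.mul_pos (by omega) (by have := ha i; omega)
  have htor : ∀ v, g2 v ∈ AddCommGroup.torsion A := by
    intro v
    refine isOfFinAddOrder_iff_nsmul_eq_zero.2 ⟨_, hpos, ?_⟩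
    rw [← map_nsmul]
    have : (∏ i, (m * a i)) • v = 0 := by
      funext i
      rw [Pi.smul_apply, nsmul_eq_mul, Pi.zero_apply]
      have : ((∏ i, (m * a i) : ℕ) : ZMod (m * a i)) = 0 :=
        (ZMod.natCast_eq_zero_iff _ _).2 (Finset.dvd_prod_of_mem _ (Finset.mem_univ i))
      rw [this, zero_mul]
    rw [this, map_zero]
  let φ : GG k m a →+ AddCommGroup.torsion A := g2.codRestrict _ htor
  have hφ : Function.Bijective φ := by
    constructor
    · intro v w h
      have h : g2 v = g2 w := congrArg Subtype.val h
      have := congrArg f h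
      rw [fg2, fg2] at this
      exact congrArg (fun t => t.2.2) this
    · rintro ⟨x, hx⟩
      obtain ⟨⟨p, q, v⟩, hpq⟩ := hsurj x
      obtain ⟨N, hN, hN0⟩ := isOfFinAddOrder_iff_nsmul_eq_zero.1 hx
      have hf : f x = (p, q, v + 0) := by
        rw [← hpq, hg, map_add, map_add, map_zsmul, map_zsmul, fR, fC, fg2]
        simp [gR, gC, c0, sg]
      have h0 := congrArg f hN0
      rw [map_nsmul, hf, map_zero] at h0
      have hp : N • p = 0 := congrArg (fun t => t.1) h0
      have hq : N • q = 0 := congrArg (fun t => t.2.1) h0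
      have hp : p = 0 := by
        rcases smul_eq_zero.1 hp with h | h
        · omega
        · exact h
      have hq : q = 0 := by
        rcases smul_eq_zero.1 hq with h | h
        · omega
        · exact h
      refine ⟨v, Subtype.ext ?_⟩
      change g2 v = x
      rw [← hpq, hg, hp, hq]
      simp
  exact ⟨(AddEquiv.ofBijective φ hφ).symm⟩

end final
end PM

/-- For `k ≥ 1` and `m, a_1, …, a_k ≥ 2` there is a spherical latin bitrade whose canonical
group is isomorphic to `ℤ/(m·a_1) ⊕ ⋯ ⊕ ℤ/(m·a_k)`. -/
theorem exists_spherical_bitrade_canonical_group_composites_with_common_factor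
    (k m : ℕ) (hk : 1 ≤ k) (hm : 2 ≤ m) (a : Fin k → ℕ) (ha : ∀ i, 2 ≤ a i) :
    ∃ T : SphericalLatinBitrade,
      Nonempty (CanonicalGroup T ≃+ ((i : Fin k) → ZMod (m * a i))) := by
  refine ⟨((PM.base k hk).expand (PM.mult k m a)).toBitrade, ?_⟩
  exact PM.core k m a hm ha ((PM.base k hk).expand (PM.mult k m a)).A
    ((PM.base k hk).xR (PM.mult k m a)) ((PM.base k hk).xC (PM.mult k m a))
    ((PM.base k hk).xS (PM.mult k m a))
    ((PM.base k hk).x_rel (PM.mult k m a))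
    ((PM.base k hk).x_lift (PM.mult k m a) (PM.gR k m a) (PM.gC k m a) (PM.gS k m a)
      (PM.g_rel k m a hm ha))
    ((PM.base k hk).x_eq_top (PM.mult k m a))
end

section
/- Let k ≥ 1 and let n_1, n_2, …, n_k be composite integers (i.e. each n_i = b_i·c_i for some integers b_i, c_i ≥ 2). Then there exists a spherical latin bitrade whose canonical group is isomorphic to Z_{n_1} ⊕ Z_{n_2} ⊕ … ⊕ Z_{n_k}. -/
namespace BT

/-- An arc-based description of a plane alternating digraph: every arc `e` has a tail `t e`,
a head `h e`, and the two faces `c e`, `s e` on its sides; `e0` is a marked arc. -/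
structure Pre where
  R : Type
  C : Type
  S : Type
  E : Type
  fR : Fintype R
  fC : Fintype C
  fS : Fintype S
  fE : Fintype E
  t : E → R
  h : E → R
  c : E → C
  s : E → S
  e0 : E
  inj_cs : ∀ e f, c e = c f → s e = s f → e = f
  inj_tc : ∀ e f, t e = t f → c e = c f → e = f
  inj_ts : ∀ e f, t e = t f → s e = s f → e = f
  inj_hc : ∀ e f, h e = h f → c e = c f → e = f
  inj_hs : ∀ e f, h e = h f → s e = s f → e = f
  ex_hc : ∀ e, ∃ f, h f = t e ∧ c f = c e
  ex_hs : ∀ e, ∃ f, h f = t e ∧ s f = s e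
  ex_tc : ∀ e, ∃ f, t f = h e ∧ c f = c e
  ex_ts : ∀ e, ∃ f, t f = h e ∧ s f = s e
  surj_t : ∀ r, ∃ e, t e = r
  surj_h : ∀ r, ∃ e, h e = r
  surj_c : ∀ r, ∃ e, c e = r
  surj_s : ∀ r, ∃ e, s e = r
  conn : ∀ P : E → Prop, (∀ e f, h f = t e → (c f = c e ∨ s f = s e) → (P e ↔ P f)) →
    P e0 → ∀ f, P f
  card : @Fintype.card R fR + @Fintype.card C fC + @Fintype.card S fS = @Fintype.card E fE + 2

attribute [instance] Pre.fR Pre.fC Pre.fS Pre.fE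

/-- Reverse all arcs. -/
def Pre.rev (T : Pre) : Pre where
  R := T.R
  C := T.C
  S := T.S
  E := T.E
  fR := T.fR
  fC := T.fC
  fS := T.fS
  fE := T.fE
  t := T.h
  h := T.t
  c := T.c
  s := T.s
  e0 := T.e0
  inj_cs := T.inj_cs
  inj_tc := T.inj_hc
  inj_ts := T.inj_hs
  inj_hc := T.inj_tc
  inj_hs := T.inj_ts
  ex_hc := T.ex_tc
  ex_hs := T.ex_ts
  ex_tc := T.ex_hc
  ex_ts := T.ex_hs
  surj_t := T.surj_h
  surj_h := T.surj_t
  surj_c := T.surj_c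
  surj_s := T.surj_s
  conn := fun P hP h0 => T.conn P (fun e f h1 h2 =>
    (hP f e h1.symm (h2.imp Eq.symm Eq.symm)).symm) h0
  card := T.card

/-- The trivial (degenerate) starting configuration: one loop. -/
def Pre.base : Pre where
  R := Unit
  C := Unit
  S := Unit
  E := Unit
  fR := inferInstance
  fC := inferInstance
  fS := inferInstance
  fE := inferInstance
  t := id
  h := id
  c := id
  s := id
  e0 := ()
  inj_cs := by simp
  inj_tc := by simp
  inj_ts := by simp
  inj_hc := by simp
  inj_hs := by simp
  ex_hc := by simp
  ex_hs := by simp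
  ex_tc := by simp
  ex_ts := by simp
  surj_t := by simp
  surj_h := by simp
  surj_c := by simp
  surj_s := by simp
  conn := fun P _ h0 _ => h0
  card := by simp

/-- Column face of the `j`-th outgoing arc of a chain. -/
def gC {C : Type} {N : ℕ} (c : C) : Fin (N + 1) → C ⊕ Fin N := Fin.cases (Sum.inl c) Sum.inr

/-- Symbol face of the `j`-th outgoing arc of a chain. -/
def gS {S : Type} {N : ℕ} (s : S) : Fin (N + 1) → S ⊕ Fin N := Fin.lastCases (Sum.inl s) Sum.inr

@[simp] lemma gC_zero {C : Type} {N : ℕ} (c : C) : gC (N := N) c 0 = Sum.inl c := rfl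
@[simp] lemma gC_succ {C : Type} {N : ℕ} (c : C) (i : Fin N) : gC c i.succ = Sum.inr i := rfl
@[simp] lemma gS_last {S : Type} {N : ℕ} (s : S) : gS s (Fin.last N) = Sum.inl s := by simp [gS]
@[simp] lemma gS_cast {S : Type} {N : ℕ} (s : S) (i : Fin N) : gS s i.castSucc = Sum.inr i := by
  simp [gS]

lemma gC_inj {C : Type} {N : ℕ} (c : C) (i j : Fin (N + 1)) (h : gC c i = gC c j) : i = j := by
  induction i using Fin.cases <;> induction j using Fin.cases <;> simp_all

lemma gS_inj {C : Type} {N : ℕ} (c : C) (i j : Fin (N + 1)) (h : gS c i = gS c j) : i = j := by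
  induction i using Fin.lastCases <;> induction j using Fin.lastCases <;> simp_all

lemma gC_inl {C : Type} {N : ℕ} (c c' : C) (i : Fin (N + 1)) (h : gC c i = Sum.inl c') :
    i = 0 ∧ c' = c := by
  induction i using Fin.cases <;> simp_all

lemma gC_inr {C : Type} {N : ℕ} (c : C) (i : Fin (N + 1)) (j) (h : gC c i = Sum.inr j) :
    i = j.succ := by
  induction i using Fin.cases <;> simp_all

lemma gS_inl {C : Type} {N : ℕ} (c c' : C) (i : Fin (N + 1)) (h : gS c i = Sum.inl c') :
    i = Fin.last N ∧ c' = c := by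
  induction i using Fin.lastCases <;> simp_all

lemma gS_inr {C : Type} {N : ℕ} (c : C) (i : Fin (N + 1)) (j) (h : gS c i = Sum.inr j) :
    i = j.castSucc := by
  induction i using Fin.lastCases <;> simp_all

section ext
variable (T : Pre) (n : ℕ)

/-- arcs after inserting a vertex -/
abbrev EE : Type := T.E ⊕ Fin (n + 1 + 1) ⊕ Fin (n + 1)

/-- new tails -/
def xt : EE T n → Option T.R
  | .inl e => some (T.t e)
  | .inr (.inl _) => none
  | .inr (.inr _) => some (T.h T.e0)

open Classical in
/-- new heads -/
noncomputable def xh : EE T n → Option T.R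
  | .inl e => if e = T.e0 then none else some (T.h e)
  | .inr (.inl _) => some (T.h T.e0)
  | .inr (.inr _) => none

/-- new column faces -/
def xc : EE T n → T.C ⊕ Fin (n + 1)
  | .inl e => .inl (T.c e)
  | .inr (.inl j) => gC (T.c T.e0) j
  | .inr (.inr i) => .inr i

/-- new symbol faces -/
def xs : EE T n → T.S ⊕ Fin (n + 1)
  | .inl e => .inl (T.s e)
  | .inr (.inl j) => gS (T.s T.e0) j
  | .inr (.inr i) => .inr i

lemma x_conn (P : EE T n → Prop)
    (hP : ∀ e f, xh T n f = xt T n e → (xc T n f = xc T n e ∨ xs T n f = xs T n e) → (P e ↔ P f))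
    (h0 : P (.inl T.e0)) (f : EE T n) : P f := by
  have hold : ∀ e : T.E, P (.inl e) := by
    apply T.conn (fun e => P (.inl e)) _ h0
    intro e f h1 h2
    by_cases hf : f = T.e0
    · subst hf
      rcases h2 with h2 | h2
      · rw [hP (.inl e) (.inr (.inl 0)) (by simp [xh, xt, h1]) (by simp [xc, h2]),
          hP (.inr (.inl 0)) (.inl T.e0) (by simp [xh, xt]) (by simp [xc])]
      · rw [hP (.inl e) (.inr (.inl (Fin.last _))) (by simp [xh, xt, h1]) (by simp [xs, h2]),
          hP (.inr (.inl (Fin.last _))) (.inl T.e0) (by simp [xh, xt]) (by simp [xs])]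
    · exact hP _ _ (by simp [xh, xt, hf, h1]) (by simpa [xc, xs] using h2)
  have hG0 : P (.inr (.inl 0)) := by
    rw [hP (.inr (.inl 0)) (.inl T.e0) (by simp [xh, xt]) (by simp [xc])]; exact h0
  have hDG : ∀ i : Fin (n + 1), P (.inr (.inr i)) ↔ P (.inr (.inl i.castSucc)) := fun i =>
    hP _ _ (by simp [xh, xt]) (by simp [xs])
  have hGD : ∀ i : Fin (n + 1), P (.inr (.inr i)) ↔ P (.inr (.inl i.succ)) := fun i =>
    hP _ _ (by simp [xh, xt]) (by simp [xc])
  have hG : ∀ j : Fin (n + 1 + 1), P (.inr (.inl j)) := by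
    intro j
    induction j using Fin.induction with
    | zero => exact hG0
    | succ i ih => rw [← hGD, hDG]; exact ih
  rcases f with e | j | i
  · exact hold e
  · exact hG j
  · rw [hDG]; exact hG _

/-- Insert a vertex on the marked arc, joined to the head of the marked arc. -/
noncomputable def Pre.ext : Pre where
  R := Option T.R
  C := T.C ⊕ Fin (n + 1)
  S := T.S ⊕ Fin (n + 1)
  E := EE T n
  fR := inferInstance
  fC := inferInstance
  fS := inferInstance
  fE := inferInstance
  t := xt T n
  h := xh T n
  c := xc T n
  s := xs T n
  e0 := .inr (.inr 0)
  inj_cs := by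
    have key : ∀ (e : T.E) (j : Fin (n+1+1)), gC (T.c T.e0) j = Sum.inl (T.c e) →
        gS (T.s T.e0) j = Sum.inl (T.s e) → False := by
      intro e j h1 h2
      have a := (gC_inl _ _ _ h1).1
      have b := (gS_inl _ _ _ h2).1
      rw [a] at b
      simp [Fin.ext_iff] at b
    have key2 : ∀ (i : Fin (n+1)) (j : Fin (n+1+1)), gC (T.c T.e0) j = Sum.inr i →
        gS (T.s T.e0) j = Sum.inr i → False := by
      intro e j h1 h2
      have a := (gC_inr _ _ _ h1)
      have b := (gS_inr _ _ _ h2)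
      rw [a] at b
      simp [Fin.ext_iff] at b
    rintro (e | j | i) (e' | j' | i') h1 h2
    · have := T.inj_cs e e' (by simpa [xc] using h1) (by simpa [xs] using h2)
      rw [this]
    · exact (key e j' h1.symm h2.symm).elim
    · simp [xc] at h1
    · exact (key e' j h1 h2).elim
    · rw [gC_inj _ _ _ h1]
    · simp only [xc, xs] at h1 h2
      exact (key2 i' j h1 h2).elim
    · simp [xc] at h1
    · simp only [xc, xs] at h1 h2
      exact (key2 i j' h1.symm h2.symm).elim
    · simp only [xc, Sum.inr.injEq] at h1; rw [h1]
  inj_tc := by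
    rintro (e | j | i) (e' | j' | i') h1 h2 <;> simp only [xt, xc] at h1 h2
    · rw [T.inj_tc e e' (by simpa using h1) (by simpa using h2)]
    · simp at h1
    · simp at h2
    · simp at h1
    · rw [gC_inj _ _ _ h2]
    · simp at h1
    · simp at h2
    · simp at h1
    · simp at h2; rw [h2]
  inj_ts := by
    rintro (e | j | i) (e' | j' | i') h1 h2 <;> simp only [xt, xs] at h1 h2
    · rw [T.inj_ts e e' (by simpa using h1) (by simpa using h2)]
    · simp at h1
    · simp at h2
    · simp at h1
    · rw [gS_inj _ _ _ h2]
    · simp at h1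
    · simp at h2
    · simp at h1
    · simp at h2; rw [h2]
  inj_hc := by
    have key : ∀ (e : T.E) (j : Fin (n+1+1)), xh T n (.inl e) = some (T.h T.e0) →
        gC (T.c T.e0) j = Sum.inl (T.c e) → False := by
      intro e j h1 h2
      have a := (gC_inl _ _ _ h2).2
      by_cases he : e = T.e0
      · simp [xh, he] at h1
      · simp [xh, he] at h1
        exact he (T.inj_hc _ _ h1 a)
    rintro (e | j | i) (e' | j' | i') h1 h2
    · by_cases he : e = T.e0 <;> by_cases he' : e' = T.e0 <;> simp [xh, xc, he, he'] at h1 h2 ⊢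
      exact T.inj_hc e e' h1 h2
    · exact (key _ _ h1 h2.symm).elim
    · simp [xc] at h2
    · exact (key _ _ h1.symm h2).elim
    · rw [gC_inj _ _ _ h2]
    · simp [xh] at h1
    · simp [xc] at h2
    · simp [xh] at h1
    · simp [xc] at h2; rw [h2]
  inj_hs := by
    have key : ∀ (e : T.E) (j : Fin (n+1+1)), xh T n (.inl e) = some (T.h T.e0) →
        gS (T.s T.e0) j = Sum.inl (T.s e) → False := by
      intro e j h1 h2
      have a := (gS_inl _ _ _ h2).2
      by_cases he : e = T.e0
      · simp [xh, he] at h1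
      · simp [xh, he] at h1
        exact he (T.inj_hs _ _ h1 a)
    rintro (e | j | i) (e' | j' | i') h1 h2
    · by_cases he : e = T.e0 <;> by_cases he' : e' = T.e0 <;> simp [xh, xs, he, he'] at h1 h2 ⊢
      exact T.inj_hs e e' h1 h2
    · exact (key _ _ h1 h2.symm).elim
    · simp [xs] at h2
    · exact (key _ _ h1.symm h2).elim
    · rw [gS_inj _ _ _ h2]
    · simp [xh] at h1
    · simp [xs] at h2
    · simp [xh] at h1
    · simp [xs] at h2; rw [h2]
  ex_hc := by
    rintro (e | j | i)
    · obtain ⟨f, h1, h2⟩ := T.ex_hc e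
      by_cases hf : f = T.e0
      · subst hf; exact ⟨.inr (.inl 0), by simp [xh, xt, h1], by simp [xc, h2]⟩
      · exact ⟨.inl f, by simp [xh, xt, hf, h1], by simp [xc, h2]⟩
    · induction j using Fin.cases with
      | zero => exact ⟨.inl T.e0, by simp [xh, xt], by simp [xc]⟩
      | succ i => exact ⟨.inr (.inr i), by simp [xh, xt], by simp [xc]⟩
    · exact ⟨.inr (.inl i.succ), by simp [xh, xt], by simp [xc]⟩
  ex_hs := by
    rintro (e | j | i)
    · obtain ⟨f, h1, h2⟩ := T.ex_hs e
      by_cases hf : f = T.e0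
      · subst hf; exact ⟨.inr (.inl (Fin.last _)), by simp [xh, xt, h1], by simp [xs, h2]⟩
      · exact ⟨.inl f, by simp [xh, xt, hf, h1], by simp [xs, h2]⟩
    · induction j using Fin.lastCases with
      | last => exact ⟨.inl T.e0, by simp [xh, xt], by simp [xs]⟩
      | cast i => exact ⟨.inr (.inr i), by simp [xh, xt], by simp [xs]⟩
    · exact ⟨.inr (.inl i.castSucc), by simp [xh, xt], by simp [xs]⟩
  ex_tc := by
    rintro (e | j | i)
    · by_cases he : e = T.e0
      · subst he; exact ⟨.inr (.inl 0), by simp [xh, xt], by simp [xc]⟩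
      · obtain ⟨f, h1, h2⟩ := T.ex_tc e
        exact ⟨.inl f, by simp [xh, xt, he, h1], by simp [xc, h2]⟩
    · induction j using Fin.cases with
      | zero =>
        obtain ⟨f, h1, h2⟩ := T.ex_tc T.e0
        exact ⟨.inl f, by simp [xh, xt, h1], by simp [xc, h2]⟩
      | succ i => exact ⟨.inr (.inr i), by simp [xh, xt], by simp [xc]⟩
    · exact ⟨.inr (.inl i.succ), by simp [xh, xt], by simp [xc]⟩
  ex_ts := by
    rintro (e | j | i)
    · by_cases he : e = T.e0
      · subst he; exact ⟨.inr (.inl (Fin.last _)), by simp [xh, xt], by simp [xs]⟩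
      · obtain ⟨f, h1, h2⟩ := T.ex_ts e
        exact ⟨.inl f, by simp [xh, xt, he, h1], by simp [xs, h2]⟩
    · induction j using Fin.lastCases with
      | last =>
        obtain ⟨f, h1, h2⟩ := T.ex_ts T.e0
        exact ⟨.inl f, by simp [xh, xt, h1], by simp [xs, h2]⟩
      | cast i => exact ⟨.inr (.inr i), by simp [xh, xt], by simp [xs]⟩
    · exact ⟨.inr (.inl i.castSucc), by simp [xh, xt], by simp [xs]⟩
  surj_t := by
    rintro (_ | r)
    · exact ⟨.inr (.inl 0), rfl⟩
    · obtain ⟨e, rfl⟩ := T.surj_t r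
      exact ⟨.inl e, rfl⟩
  surj_h := by
    rintro (_ | r)
    · exact ⟨.inr (.inr 0), rfl⟩
    · obtain ⟨e, rfl⟩ := T.surj_h r
      by_cases he : e = T.e0
      · subst he; exact ⟨.inr (.inl 0), rfl⟩
      · exact ⟨.inl e, by simp [xh, he]⟩
  surj_c := by
    rintro (r | i)
    · obtain ⟨e, rfl⟩ := T.surj_c r
      exact ⟨.inl e, rfl⟩
    · exact ⟨.inr (.inr i), rfl⟩
  surj_s := by
    rintro (r | i)
    · obtain ⟨e, rfl⟩ := T.surj_s r
      exact ⟨.inl e, rfl⟩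
    · exact ⟨.inr (.inr i), rfl⟩
  conn := by
    intro P hP h0
    refine x_conn T n P hP ?_
    rw [← hP (.inr (.inl 0)) (.inl T.e0) (by simp [xh, xt]) (by simp [xc])]
    rwa [← hP (.inr (.inr 0)) (.inr (.inl 0)) (by simp [xh, xt]) (by right; exact gS_cast _ 0)]
  card := by
    have := T.card
    simp only [Fintype.card_option, Fintype.card_sum, Fintype.card_fin]
    omega

lemma ext_ne (hT : ∀ f, f ≠ T.e0 → T.t f ≠ T.h f) (f : (T.ext n).E) :
    (T.ext n).t f ≠ (T.ext n).h f := by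
  rcases f with e | j | i
  · by_cases he : e = T.e0
    · simp [Pre.ext, xt, xh, he]
    · simpa [Pre.ext, xt, xh, he] using hT e he
  · simp [Pre.ext, xt, xh]
  · simp [Pre.ext, xt, xh]

end ext

open Classical in
/-- The triples (tail, face, face). -/
noncomputable def Pre.tri (T : Pre) : Finset (T.R × T.C × T.S) :=
  Finset.univ.image (fun e => (T.t e, T.c e, T.s e))

lemma Pre.mem_tri (T : Pre) (x) : x ∈ T.tri ↔ ∃ e, (T.t e, T.c e, T.s e) = x := by
  simp [Pre.tri]

lemma tri_pls (T : Pre) : IsPartialLatinSquare T.tri := by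
  refine ⟨?_, ?_, ?_, ?_⟩
  · intro a ha b hb hab
    obtain ⟨e, rfl⟩ := (T.mem_tri _).1 ha
    obtain ⟨f, rfl⟩ := (T.mem_tri _).1 hb
    refine ⟨?_, ?_, ?_⟩
    · rintro ⟨h1, h2⟩
      exact hab (by rw [T.inj_tc e f h1 h2])
    · rintro ⟨h1, h2⟩
      exact hab (by rw [T.inj_ts e f h1 h2])
    · rintro ⟨h1, h2⟩
      exact hab (by rw [T.inj_cs e f h1 h2])
  · intro r
    obtain ⟨e, rfl⟩ := T.surj_t r
    exact ⟨_, (T.mem_tri _).2 ⟨e, rfl⟩, rfl⟩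
  · intro r
    obtain ⟨e, rfl⟩ := T.surj_c r
    exact ⟨_, (T.mem_tri _).2 ⟨e, rfl⟩, rfl⟩
  · intro r
    obtain ⟨e, rfl⟩ := T.surj_s r
    exact ⟨_, (T.mem_tri _).2 ⟨e, rfl⟩, rfl⟩

lemma tri_trade (T : Pre) (hT : ∀ f, T.t f ≠ T.h f) :
    TradeCond (R := T.R) (C := T.C) (S := T.S) T.tri T.rev.tri := by
  have hmem : ∀ x : T.R × T.C × T.S, x ∈ T.rev.tri ↔ ∃ e, (T.h e, T.c e, T.s e) = x :=
    fun x => T.rev.mem_tri x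
  intro a ha
  obtain ⟨e, rfl⟩ := (T.mem_tri _).1 ha
  refine ⟨⟨T.h e, ⟨(hT e).symm, (hmem _).2 ⟨e, rfl⟩⟩, ?_⟩, ?_, ?_⟩
  · rintro r ⟨-, hr⟩
    obtain ⟨f, hf⟩ := (hmem _).1 hr
    simp only [Prod.mk.injEq] at hf
    rw [← hf.1, T.inj_cs f e hf.2.1 hf.2.2]
  · obtain ⟨f, h1, h2⟩ := T.ex_hs e
    refine ⟨T.c f, ⟨?_, (hmem _).2 ⟨f, by simp [h1, h2]⟩⟩, ?_⟩
    · intro h3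
      have := T.inj_cs f e h3 h2
      subst this
      exact hT _ h1.symm
    · rintro r ⟨-, hr⟩
      obtain ⟨f', hf⟩ := (hmem _).1 hr
      simp only [Prod.mk.injEq] at hf
      rw [← hf.2.1, T.inj_hs f' f (hf.1.trans h1.symm) (hf.2.2.trans h2.symm)]
  · obtain ⟨f, h1, h2⟩ := T.ex_hc e
    refine ⟨T.s f, ⟨?_, (hmem _).2 ⟨f, by simp [h1, h2]⟩⟩, ?_⟩
    · intro h3
      have := T.inj_cs f e h2 h3
      subst this
      exact hT _ h1.symm
    · rintro r ⟨-, hr⟩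
      obtain ⟨f', hf⟩ := (hmem _).1 hr
      simp only [Prod.mk.injEq] at hf
      rw [← hf.2.2, T.inj_hc f' f (hf.1.trans h1.symm) (hf.2.1.trans h2.symm)]

lemma sub_step (T : Pre) (W' B' : Finset (T.R × T.C × T.S)) (hB : B' ⊆ T.rev.tri)
    (hc : TradeCond W' B') :
    (∀ e, (T.t e, T.c e, T.s e) ∈ W' → (T.h e, T.c e, T.s e) ∈ B') ∧
    (∀ e f, T.h f = T.t e → (T.c f = T.c e ∨ T.s f = T.s e) →
      (T.t e, T.c e, T.s e) ∈ W' → (T.h f, T.c f, T.s f) ∈ B') := by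
  have hmem : ∀ x : T.R × T.C × T.S, x ∈ T.rev.tri ↔ ∃ e, (T.h e, T.c e, T.s e) = x :=
    fun x => T.rev.mem_tri x
  constructor
  · intro e he
    obtain ⟨⟨r, ⟨-, hr⟩, -⟩, -, -⟩ := hc _ he
    obtain ⟨f, hf⟩ := (hmem _).1 (hB hr)
    rw [← hf] at hr
    simp only [Prod.mk.injEq] at hf
    rwa [T.inj_cs f e hf.2.1 hf.2.2] at hr
  · rintro e f h1 (h2 | h2) he
    · obtain ⟨-, -, ⟨r, ⟨-, hr⟩, -⟩⟩ := hc _ he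
      obtain ⟨f', hf⟩ := (hmem _).1 (hB hr)
      rw [← hf] at hr
      simp only [Prod.mk.injEq] at hf
      rwa [T.inj_hc f' f (hf.1.trans h1.symm) (hf.2.1.trans h2.symm)] at hr
    · obtain ⟨-, ⟨r, ⟨-, hr⟩, -⟩, -⟩ := hc _ he
      obtain ⟨f', hf⟩ := (hmem _).1 (hB hr)
      rw [← hf] at hr
      simp only [Prod.mk.injEq] at hf
      rwa [T.inj_hs f' f (hf.1.trans h1.symm) (hf.2.2.trans h2.symm)] at hr

lemma tri_conn (T : Pre) : ¬ ∃ (W' B' : Finset (T.R × T.C × T.S)), W' ⊂ T.tri ∧ B' ⊂ T.rev.tri ∧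
      W'.Nonempty ∧ B'.Nonempty ∧ TradeCond W' B' ∧ TradeCond B' W' := by
  rintro ⟨W', B', hW, hB, hWn, -, h1, h2⟩
  obtain ⟨a1, a2⟩ := sub_step T W' B' hB.1 h1
  obtain ⟨b1, b2⟩ := sub_step T.rev B' W' hW.1 h2
  have hcl : ∀ e f, T.h f = T.t e → (T.c f = T.c e ∨ T.s f = T.s e) →
      ((T.t e, T.c e, T.s e) ∈ W' ↔ (T.t f, T.c f, T.s f) ∈ W') := by
    intro e f h3 h4
    constructor
    · intro he
      exact b1 f (a2 e f h3 h4 he)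
    · intro hf
      exact b2 f e h3.symm (h4.imp Eq.symm Eq.symm) (a1 f hf)
  by_cases h0 : (T.t T.e0, T.c T.e0, T.s T.e0) ∈ W'
  · have := T.conn _ hcl h0
    apply hW.2
    intro x hx
    obtain ⟨e, rfl⟩ := (T.mem_tri _).1 hx
    exact this e
  · have := T.conn (fun e => ¬ (T.t e, T.c e, T.s e) ∈ W')
      (fun e f h3 h4 => not_congr (hcl e f h3 h4)) h0
    obtain ⟨x, hx⟩ := hWn
    obtain ⟨e, rfl⟩ := (T.mem_tri _).1 (hW.1 hx)
    exact this e hx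

/-- The bitrade of an arc configuration without loops. -/
noncomputable def Pre.bitrade (T : Pre) (hT : ∀ f, T.t f ≠ T.h f) : SphericalLatinBitrade where
  R := T.R
  C := T.C
  S := T.S
  instR := T.fR
  instC := T.fC
  instS := T.fS
  W := T.tri
  B := T.rev.tri
  W_nonempty := ⟨_, (T.mem_tri _).2 ⟨T.e0, rfl⟩⟩
  B_nonempty := ⟨_, (T.rev.mem_tri _).2 ⟨T.e0, rfl⟩⟩
  W_pls := tri_pls T
  B_pls := tri_pls T.rev
  tradeWB := tri_trade T hT
  tradeBW := tri_trade T.rev (fun f => (hT f).symm)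
  connected := tri_conn T
  spherical := by
    classical
    rw [T.card, Pre.tri, Finset.card_image_of_injective]
    · rfl
    · intro e f h
      simp only [Prod.mk.injEq] at h
      exact T.inj_cs e f h.2.1 h.2.2

/-- Labelling of vertices and faces satisfying the relations. -/
def Sol (T : Pre) {X : Type} [AddCommGroup X] (ρ : T.R → X) (γ : T.C → X) (σ : T.S → X) : Prop :=
  ∀ e, ρ (T.t e) + γ (T.c e) + σ (T.s e) = 0

/-- A universal solution. -/
structure IsUniv (T : Pre) (U : Type) [AddCommGroup U]
    (ρ : T.R → U) (γ : T.C → U) (σ : T.S → U) : Prop where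
  sol : Sol T ρ γ σ
  gen : ∀ H : AddSubgroup U, (∀ r, ρ r ∈ H) → (∀ r, γ r ∈ H) → (∀ r, σ r ∈ H) → H = ⊤
  univ : ∀ (X : Type) [AddCommGroup X] (ρ' : T.R → X) (γ' : T.C → X) (σ' : T.S → X),
    Sol T ρ' γ' σ' → ∃ θ : U →+ X, (∀ r, θ (ρ r) = ρ' r) ∧ (∀ r, θ (γ r) = γ' r) ∧
      (∀ r, θ (σ r) = σ' r)

lemma univ_equiv_aux (T : SphericalLatinBitrade) (U : Type) [AddCommGroup U]
    (ρ : T.R → U) (γ : T.C → U) (σ : T.S → U)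
    (hs : ∀ x ∈ T.W, ρ x.1 + γ x.2.1 + σ x.2.2 = 0)
    (gen : ∀ H : AddSubgroup U, (∀ r, ρ r ∈ H) → (∀ r, γ r ∈ H) → (∀ r, σ r ∈ H) → H = ⊤)
    (univ : ∀ (X : Type) [AddCommGroup X] (ρ' : T.R → X) (γ' : T.C → X) (σ' : T.S → X),
      (∀ x ∈ T.W, ρ' x.1 + γ' x.2.1 + σ' x.2.2 = 0) →
      ∃ θ : U →+ X, (∀ r, θ (ρ r) = ρ' r) ∧ (∀ r, θ (γ r) = γ' r) ∧ (∀ r, θ (σ r) = σ' r)) :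
    Nonempty (groupAW T ≃+ U) := by
  let q : FreeAbelianGroup (T.R ⊕ T.C ⊕ T.S) →+ groupAW T :=
    QuotientAddGroup.mk' (bitradeRelations T)
  let φ0 : FreeAbelianGroup (T.R ⊕ T.C ⊕ T.S) →+ U :=
    FreeAbelianGroup.lift (Sum.elim ρ (Sum.elim γ σ))
  have hφ0 : bitradeRelations T ≤ φ0.ker := by
    unfold bitradeRelations
    rw [AddSubgroup.closure_le]
    rintro _ ⟨x, hx, rfl⟩
    have := hs x hx
    simpa [φ0, AddMonoidHom.mem_ker] using this
  let φ : groupAW T →+ U := QuotientAddGroup.lift _ φ0 hφ0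
  have hφq : ∀ x, φ (q x) = φ0 x := fun x => rfl
  obtain ⟨θ, h1, h2, h3⟩ := univ _ (fun r => q (.of (.inl r))) (fun r => q (.of (.inr (.inl r))))
      (fun r => q (.of (.inr (.inr r)))) (by
    intro x hx
    rw [← map_add, ← map_add]
    refine (QuotientAddGroup.eq_zero_iff _).2 ?_
    apply AddSubgroup.subset_closure
    exact ⟨x, hx, rfl⟩)
  have hθφ : ∀ x, θ (φ x) = x := by
    intro x
    obtain ⟨y, rfl⟩ := QuotientAddGroup.mk'_surjective _ x
    change (θ.comp φ0) y = q y
    congr 1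
    ext z
    rcases z with r | r | r
    · simpa [φ0] using h1 r
    · simpa [φ0] using h2 r
    · simpa [φ0] using h3 r
  have hsurj : Function.Surjective φ := by
    rw [← AddMonoidHom.range_eq_top]
    apply gen
    · intro r
      exact ⟨q (.of (.inl r)), by rw [hφq]; simp [φ0]⟩
    · intro r
      exact ⟨q (.of (.inr (.inl r))), by rw [hφq]; simp [φ0]⟩
    · intro r
      exact ⟨q (.of (.inr (.inr r))), by rw [hφq]; simp [φ0]⟩
  exact ⟨AddEquiv.ofBijective φ ⟨Function.LeftInverse.injective hθφ, hsurj⟩⟩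

lemma univ_equiv (T : Pre) (hT : ∀ f, T.t f ≠ T.h f) (U : Type) [AddCommGroup U]
    (ρ : T.R → U) (γ : T.C → U) (σ : T.S → U) (hU : IsUniv T U ρ γ σ) :
    Nonempty (groupAW (T.bitrade hT) ≃+ U) := by
  refine univ_equiv_aux (T.bitrade hT) U ρ γ σ ?_ hU.gen ?_
  · intro x hx
    obtain ⟨e, rfl⟩ := (T.mem_tri _).1 hx
    exact hU.sol e
  · intro X _ ρ' γ' σ' h
    exact hU.univ X ρ' γ' σ' (fun e => h _ ((T.mem_tri _).2 ⟨e, rfl⟩))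

lemma torsion_equiv {A F : Type} [AddCommGroup A] [AddCommGroup F] [Finite F]
    (e : A ≃+ (ℤ × ℤ) × F) : Nonempty (AddCommGroup.torsion A ≃+ F) := by
  have hmem : ∀ f : F, e.symm (0, f) ∈ AddCommGroup.torsion A := by
    intro f
    obtain ⟨m, hm, h⟩ := (isOfFinAddOrder_iff_nsmul_eq_zero).1 (isOfFinAddOrder_of_finite f)
    refine (isOfFinAddOrder_iff_nsmul_eq_zero).2 ⟨m, hm, ?_⟩
    rw [← map_nsmul]
    simp [h]
  let g : F →+ AddCommGroup.torsion A :=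
    (e.symm.toAddMonoidHom.comp (AddMonoidHom.inr (ℤ × ℤ) F)).codRestrict _ hmem
  have hg : ∀ f, (g f : A) = e.symm (0, f) := fun f => rfl
  refine ⟨(AddEquiv.ofBijective g ⟨?_, ?_⟩).symm⟩
  · intro f f' h
    have := congrArg Subtype.val h
    rw [hg, hg] at this
    simpa using this
  · rintro ⟨a, ha⟩
    refine ⟨(e a).2, Subtype.ext ?_⟩
    rw [hg, AddEquiv.symm_apply_eq]
    obtain ⟨m, hm, h⟩ := (isOfFinAddOrder_iff_nsmul_eq_zero).1 ha
    have h' : m • e a = 0 := by rw [← map_nsmul, h, map_zero]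
    have h1 : (e a).1 = 0 := by
      have := congrArg Prod.fst h'
      simp only [Prod.smul_fst, Prod.fst_zero] at this
      exact (smul_eq_zero.1 this).resolve_left (by omega)
    rw [← h1]


/-- Face potentials along a chain. -/
lemma chain_formula {C S X : Type} [AddCommGroup X] (n : ℕ) (c : C) (s : S)
    (γ : C ⊕ Fin (n + 1) → X) (σ : S ⊕ Fin (n + 1) → X) (p q0 q1 : X)
    (hG : ∀ j, p + γ (gC c j) + σ (gS s j) = 0)
    (hD : ∀ i : Fin (n + 1), (if i = 0 then q0 else q1) + γ (.inr i) + σ (.inr i) = 0) :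
    (∀ i : Fin (n + 1), γ (.inr i) = γ (.inl c) + (p - q0) + (i : ℕ) • (p - q1)) ∧
    p + (γ (.inl c) + (p - q0) + n • (p - q1)) + σ (.inl s) = 0 := by
  have h1 : ∀ i : Fin (n + 1), γ (.inr i) = γ (.inl c) + (p - q0) + (i : ℕ) • (p - q1) := by
    intro i
    induction i using Fin.induction with
    | zero =>
      have a := hG (Fin.castSucc 0)
      have b := hD 0
      rw [gS_cast] at a
      simp only [Fin.castSucc_zero, gC_zero, if_true] at a b
      simp only [Fin.val_zero, zero_smul, add_zero]
      linear_combination (norm := module) b - a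
    | succ i ih =>
      have a := hG (Fin.castSucc i.succ)
      have b := hD i.succ
      rw [gS_cast, ← Fin.succ_castSucc, gC_succ] at a
      rw [if_neg (Fin.succ_ne_zero i)] at b
      simp only [Fin.val_castSucc, Fin.val_succ] at ih ⊢
      rw [ih] at a
      rw [succ_nsmul]
      linear_combination (norm := module) b - a
  refine ⟨h1, ?_⟩
  have a := hG (Fin.last (n + 1))
  rw [gS_last, ← Fin.succ_last, gC_succ, h1] at a
  simpa using a

/-- Existence of face potentials along a chain. -/
lemma chain_exists {C S X : Type} [AddCommGroup X] (n : ℕ) (c : C) (s : S)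
    (γ : C → X) (σ : S → X) (p q0 q1 : X)
    (h : p + (γ c + (p - q0) + n • (p - q1)) + σ s = 0) :
    ∃ (γ' : Fin (n + 1) → X) (σ' : Fin (n + 1) → X),
    (∀ j, p + Sum.elim γ γ' (gC c j) + Sum.elim σ σ' (gS s j) = 0) ∧
    (∀ i : Fin (n + 1), (if i = 0 then q0 else q1) + γ' i + σ' i = 0) := by
  refine ⟨fun i => γ c + (p - q0) + (i : ℕ) • (p - q1),
    fun i => - (if i = 0 then q0 else q1) - (γ c + (p - q0) + (i : ℕ) • (p - q1)), ?_, ?_⟩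
  · intro j
    induction j using Fin.lastCases with
    | last =>
      rw [gS_last, ← Fin.succ_last, gC_succ]
      simpa using h
    | cast i =>
      rw [gS_cast]
      induction i using Fin.cases with
      | zero => simp only [Fin.castSucc_zero, gC_zero, Sum.elim_inl, Sum.elim_inr, if_true,
                  Fin.val_zero, zero_smul]; abel
      | succ i =>
        rw [← Fin.succ_castSucc, gC_succ]
        simp only [Sum.elim_inr, if_neg (Fin.succ_ne_zero i), Fin.val_castSucc, Fin.val_succ,
          succ_nsmul]
        abel
  · intro i
    simp only
    abel

/-- The combined step: insert two vertices. -/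
noncomputable def Pre.step (T : Pre) (n m : ℕ) : Pre := ((T.ext n).rev.ext m).rev

lemma step_ne (T : Pre) (n m : ℕ) (hT : ∀ f, f ≠ T.e0 → T.t f ≠ T.h f) (f : (T.step n m).E) :
    (T.step n m).t f ≠ (T.step n m).h f :=
  (ext_ne (T.ext n).rev m (fun f _ => (ext_ne T n hT f).symm) f).symm

lemma sol_step_iff (T : Pre) (n m : ℕ) {X : Type} [AddCommGroup X]
    (ρ : Option (Option T.R) → X) (γ : (T.C ⊕ Fin (n + 1)) ⊕ Fin (m + 1) → X)
    (σ : (T.S ⊕ Fin (n + 1)) ⊕ Fin (m + 1) → X) :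
    Sol (T.step n m) ρ γ σ ↔
      (∀ e, ρ (some (some (T.t e))) + γ (.inl (.inl (T.c e))) + σ (.inl (.inl (T.s e))) = 0) ∧
      (∀ j, ρ (some none) + γ (.inl (gC (T.c T.e0) j)) + σ (.inl (gS (T.s T.e0) j)) = 0) ∧
      (∀ i : Fin (n + 1), (if i = 0 then ρ none else ρ (some (some (T.h T.e0))))
        + γ (.inl (.inr i)) + σ (.inl (.inr i)) = 0) ∧
      (∀ j, ρ (some (some (T.h T.e0))) + γ (gC (.inr 0) j) + σ (gS (.inr 0) j) = 0) ∧
      (∀ i : Fin (m + 1), ρ none + γ (.inr i) + σ (.inr i) = 0) := by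
  constructor
  · intro h
    refine ⟨fun e => ?_, fun j => ?_, fun i => ?_, fun j => ?_, fun i => ?_⟩
    · simpa [Pre.step, Pre.rev, Pre.ext, xt, xh, xc, xs] using h (.inl (.inl e))
    · simpa [Pre.step, Pre.rev, Pre.ext, xt, xh, xc, xs] using h (.inl (.inr (.inl j)))
    · have := h (.inl (.inr (.inr i)))
      by_cases hi : i = 0 <;>
      simpa [Pre.step, Pre.rev, Pre.ext, xt, xh, xc, xs, hi] using this
    · exact h (.inr (.inl j))
    · exact h (.inr (.inr i))
  · rintro ⟨h1, h2, h3, h4, h5⟩ ((e | j | i) | j | i)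
    · simpa [Pre.step, Pre.rev, Pre.ext, xt, xh, xc, xs] using h1 e
    · simpa [Pre.step, Pre.rev, Pre.ext, xt, xh, xc, xs] using h2 j
    · have := h3 i
      by_cases hi : i = 0 <;>
      simpa [Pre.step, Pre.rev, Pre.ext, xt, xh, xc, xs, hi] using this
    · exact h4 j
    · exact h5 i

/-- Consequences of the relations after a step. -/
lemma sol_step_rel (T : Pre) (n m : ℕ) {X : Type} [AddCommGroup X]
    (ρ : Option (Option T.R) → X) (γ : (T.C ⊕ Fin (n + 1)) ⊕ Fin (m + 1) → X)
    (σ : (T.S ⊕ Fin (n + 1)) ⊕ Fin (m + 1) → X) (h : Sol (T.step n m) ρ γ σ) :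
    Sol T (fun r => ρ (some (some r))) (fun r => γ (.inl (.inl r))) (fun r => σ (.inl (.inl r))) ∧
    (ρ none - ρ (some (some (T.h T.e0)))) =
      (n + 2) • (ρ (some none) - ρ (some (some (T.h T.e0)))) -
       (ρ (some (some (T.t T.e0))) - ρ (some (some (T.h T.e0)))) ∧
    (m + 2) • (ρ none - ρ (some (some (T.h T.e0)))) = 0 := by
  obtain ⟨h1, h2, h3, h4, h5⟩ := (sol_step_iff T n m ρ γ σ).1 h
  refine ⟨h1, ?_, ?_⟩
  · obtain ⟨-, b⟩ := chain_formula n (T.c T.e0) (T.s T.e0) (fun x => γ (.inl x))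
      (fun x => σ (.inl x)) (ρ (some none)) (ρ none) (ρ (some (some (T.h T.e0)))) h2 h3
    have := h1 T.e0
    linear_combination (norm := module) this - b
  · obtain ⟨-, b⟩ := chain_formula m (.inr 0) (.inr 0) γ σ
      (ρ (some (some (T.h T.e0)))) (ρ none) (ρ none) h4 (by simpa using h5)
    have := h3 0
    simp only [if_true] at this
    linear_combination (norm := module) this - b

/-- A solution after a step is determined by the old values and the new vertex. -/
lemma sol_step_zero (T : Pre) (n m : ℕ) {X : Type} [AddCommGroup X]
    (ρ : Option (Option T.R) → X) (γ : (T.C ⊕ Fin (n + 1)) ⊕ Fin (m + 1) → X)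
    (σ : (T.S ⊕ Fin (n + 1)) ⊕ Fin (m + 1) → X) (h : Sol (T.step n m) ρ γ σ)
    (H : AddSubgroup X)
    (k1 : ∀ r, ρ (some (some r)) ∈ H) (k2 : ∀ r, γ (.inl (.inl r)) ∈ H)
    (k3 : ∀ r, σ (.inl (.inl r)) ∈ H) (k4 : ρ (some none) ∈ H) :
    (∀ r, ρ r ∈ H) ∧ (∀ r, γ r ∈ H) ∧ (∀ r, σ r ∈ H) := by
  obtain ⟨-, r1, -⟩ := sol_step_rel T n m ρ γ σ h
  obtain ⟨h1, h2, h3, h4, h5⟩ := (sol_step_iff T n m ρ γ σ).1 h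
  obtain ⟨a, -⟩ := chain_formula n (T.c T.e0) (T.s T.e0) (fun x => γ (.inl x))
      (fun x => σ (.inl x)) (ρ (some none)) (ρ none) (ρ (some (some (T.h T.e0)))) h2 h3
  obtain ⟨b, -⟩ := chain_formula m (.inr 0) (.inr 0) γ σ
      (ρ (some (some (T.h T.e0)))) (ρ none) (ρ none) h4 (by simpa using h5)
  have k5 : ρ none ∈ H := by
    rw [sub_eq_iff_eq_add] at r1
    rw [r1]
    exact H.add_mem (H.sub_mem (H.nsmul_mem (H.sub_mem k4 (k1 _)) _) (H.sub_mem (k1 _) (k1 _)))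
      (k1 _)
  have k6 : ∀ i, γ (.inl (.inr i)) ∈ H := fun i => by
    rw [a i]
    exact H.add_mem (H.add_mem (k2 _) (H.sub_mem k4 k5)) (H.nsmul_mem (H.sub_mem k4 (k1 _)) _)
  have k7 : ∀ i, γ (.inr i) ∈ H := fun i => by
    rw [b i]
    exact H.add_mem (H.add_mem (k6 _) (H.sub_mem (k1 _) k5)) (H.nsmul_mem (H.sub_mem (k1 _) k5) _)
  refine ⟨?_, ?_, ?_⟩
  · rintro (_ | _ | r)
    exacts [k5, k4, k1 r]
  · rintro ((r | i) | i)
    exacts [k2 r, k6 i, k7 i]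
  · rintro ((r | i) | i)
    · exact k3 r
    · rw [eq_neg_of_add_eq_zero_right (h3 i)]
      refine H.neg_mem (H.add_mem ?_ (k6 i))
      split_ifs
      exacts [k5, k1 _]
    · rw [eq_neg_of_add_eq_zero_right (h5 i)]
      exact H.neg_mem (H.add_mem k5 (k7 i))

/-- Extending a solution. -/
lemma sol_step_exists (T : Pre) (n m : ℕ) {X : Type} [AddCommGroup X]
    (ρ : T.R → X) (γ : T.C → X) (σ : T.S → X) (h : Sol T ρ γ σ) (g x : X)
    (hx : x = (n + 2) • g - (ρ (T.t T.e0) - ρ (T.h T.e0))) (hm : (m + 2) • x = 0) :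
    ∃ (ρ' : Option (Option T.R) → X) (γ' : (T.C ⊕ Fin (n + 1)) ⊕ Fin (m + 1) → X)
    (σ' : (T.S ⊕ Fin (n + 1)) ⊕ Fin (m + 1) → X), Sol (T.step n m) ρ' γ' σ' ∧
    (∀ r, ρ' (some (some r)) = ρ r) ∧ (∀ r, γ' (.inl (.inl r)) = γ r) ∧
    (∀ r, σ' (.inl (.inl r)) = σ r) ∧ ρ' (some none) = g + ρ (T.h T.e0) ∧
    ρ' none = x + ρ (T.h T.e0) := by
  obtain ⟨γ1, σ1, a1, b1⟩ := chain_exists n (T.c T.e0) (T.s T.e0) γ σ (g + ρ (T.h T.e0))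
    (x + ρ (T.h T.e0)) (ρ (T.h T.e0)) (by
      have := h T.e0
      rw [hx]
      linear_combination (norm := module) this)
  obtain ⟨γ2, σ2, a2, b2⟩ := chain_exists m (.inr 0) (.inr 0) (Sum.elim γ γ1) (Sum.elim σ σ1)
    (ρ (T.h T.e0)) (x + ρ (T.h T.e0)) (x + ρ (T.h T.e0)) (by
      have := b1 0
      simp only [if_true] at this
      simp only [Sum.elim_inr]
      linear_combination (norm := module) this - hm)
  refine ⟨fun r => r.elim (x + ρ (T.h T.e0)) (fun r => r.elim (g + ρ (T.h T.e0)) ρ),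
    Sum.elim (Sum.elim γ γ1) γ2, Sum.elim (Sum.elim σ σ1) σ2, ?_, ?_⟩
  · rw [sol_step_iff]
    exact ⟨h, a1, b1, a2, by simpa using b2⟩
  · simp


lemma univ_step (T : Pre) (n m : ℕ) (U : Type) [AddCommGroup U]
    (ρ : T.R → U) (γ : T.C → U) (σ : T.S → U) (hU : IsUniv T U ρ γ σ) (p : ℕ) (τ : ℤ)
    (hp : p • (ρ (T.t T.e0) - ρ (T.h T.e0)) = 0)
    (hτ : (p : ℤ) ∣ ((m + 2) * (n + 2) : ℕ) * τ - ((m + 2 : ℕ) : ℤ)) :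
    ∃ (ρ' : (T.step n m).R → U × ZMod ((m + 2) * (n + 2)))
      (γ' : (T.step n m).C → U × ZMod ((m + 2) * (n + 2)))
      (σ' : (T.step n m).S → U × ZMod ((m + 2) * (n + 2))),
      IsUniv (T.step n m) (U × ZMod ((m + 2) * (n + 2))) ρ' γ' σ' ∧
      (m + 2) • (ρ' ((T.step n m).t (T.step n m).e0) - ρ' ((T.step n m).h (T.step n m).e0)) = 0 := by
  -- multiples of the element killed by `p`
  have hkill : ∀ (X : Type) [AddCommGroup X] (y : X), p • y = 0 →
      (((m + 2) * (n + 2) : ℕ) * τ) • y = (m + 2) • y := by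
    intro X _ y hy
    obtain ⟨d, hd⟩ := hτ
    have h1 : (((m + 2) * (n + 2) : ℕ) : ℤ) * τ = d * p + ((m + 2 : ℕ) : ℤ) := by linarith
    rw [h1, add_smul, mul_smul, natCast_zsmul, natCast_zsmul, hy, smul_zero, zero_add]
  set x0 := ρ (T.t T.e0) - ρ (T.h T.e0) with hx0
  have hz : (((m + 2) * (n + 2) : ℕ)) • (1 : ZMod ((m + 2) * (n + 2))) = 0 := by
    rw [nsmul_eq_mul, mul_one, ZMod.natCast_self]
  obtain ⟨ρ', γ', σ', hsol, k1, k2, k3, k4, k5⟩ := sol_step_exists T n m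
    (X := U × ZMod ((m + 2) * (n + 2)))
    (fun r => (ρ r, 0)) (fun r => (γ r, 0)) (fun r => (σ r, 0))
    (fun e => by simp [hU.sol e]) (τ • x0, 1) ((n + 2) • (τ • x0, 1) - ((x0, 0))) (by simp [hx0])
    (by
      rw [smul_sub, ← mul_smul]
      ext
      · have := hkill U x0 hp
        rw [mul_smul, natCast_zsmul] at this
        simp only [Prod.fst_sub, Prod.smul_fst, this, sub_self, Prod.fst_zero]
      · simp only [Prod.snd_sub, Prod.smul_snd, hz, smul_zero, sub_self, Prod.snd_zero])
  refine ⟨ρ', γ', σ', ⟨hsol, ?_, ?_⟩, ?_⟩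
  · intro H h1' h2' h3'
    have h1 : ∀ r : Option (Option T.R), ρ' r ∈ H := h1'
    have h2 : ∀ r : (T.C ⊕ Fin (n + 1)) ⊕ Fin (m + 1), γ' r ∈ H := h2'
    have h3 : ∀ r : (T.S ⊕ Fin (n + 1)) ⊕ Fin (m + 1), σ' r ∈ H := h3'
    have hin : ∀ u : U, (u, (0 : ZMod ((m + 2) * (n + 2)))) ∈ H := by
      have : H.comap (AddMonoidHom.inl U (ZMod ((m + 2) * (n + 2)))) = ⊤ := by
        apply hU.gen
        · intro r; have := h1 (some (some r)); rw [k1] at this; exact this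
        · intro r; have := h2 (.inl (.inl r)); rw [k2] at this; exact this
        · intro r; have := h3 (.inl (.inl r)); rw [k3] at this; exact this
      intro u
      have hu : u ∈ H.comap (AddMonoidHom.inl U (ZMod ((m + 2) * (n + 2)))) := by
        rw [this]; trivial
      exact hu
    have hone : ((0 : U), (1 : ZMod ((m + 2) * (n + 2)))) ∈ H := by
      have := h1 (some none)
      rw [k4] at this
      have h5 := H.sub_mem this (hin (τ • x0 + ρ (T.h T.e0)))
      simpa using h5
    rw [eq_top_iff]
    rintro ⟨u, z⟩ -
    obtain ⟨a, rfl⟩ := ZMod.intCast_surjective z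
    have := H.add_mem (hin u) (H.zsmul_mem hone a)
    simpa using this
  · intro X _ (ρ2 : Option (Option T.R) → X) (γ2 : (T.C ⊕ Fin (n + 1)) ⊕ Fin (m + 1) → X)
      (σ2 : (T.S ⊕ Fin (n + 1)) ⊕ Fin (m + 1) → X) h2
    obtain ⟨s1, s2, s3⟩ := sol_step_rel T n m ρ2 γ2 σ2 h2
    obtain ⟨θ, t1, t2, t3⟩ := hU.univ X _ _ _ s1
    set g := ρ2 (some none) - ρ2 (some (some (T.h T.e0))) with hg
    set x := ρ2 (some (some (T.t T.e0))) - ρ2 (some (some (T.h T.e0))) with hx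
    have hθx : θ x0 = x := by rw [hx0, map_sub, t1, t1]
    have hpx : p • x = 0 := by rw [← hθx, ← map_nsmul, hp, map_zero]
    have hy : (((m + 2) * (n + 2) : ℕ) : ℤ) • (g - τ • x) = 0 := by
      rw [smul_sub, ← mul_smul, hkill X x hpx, natCast_zsmul, mul_smul, ← smul_sub, ← s2, s3]
    let ζ : ZMod ((m + 2) * (n + 2)) →+ X :=
      ZMod.lift _ ⟨zmultiplesHom X (g - τ • x), by simpa using hy⟩
    have hζ : ζ 1 = g - τ • x := by
      have := ZMod.lift_coe ((m + 2) * (n + 2))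
        ⟨zmultiplesHom X (g - τ • x), by simpa using hy⟩ 1
      simpa [ζ] using this
    let Θ : U × ZMod ((m + 2) * (n + 2)) →+ X := θ.coprod ζ
    have hΘ : ∀ u z, Θ (u, z) = θ u + ζ z := fun u z => rfl
    have hdiff : Sol (T.step n m) (fun r => Θ (ρ' r) - ρ2 r) (fun r => Θ (γ' r) - γ2 r)
        (fun r => Θ (σ' r) - σ2 r) := by
      intro e
      have a := congrArg Θ (hsol e)
      have b := h2 e
      rw [map_add, map_add, map_zero] at a
      linear_combination (norm := module) a - b
    obtain ⟨u1, u2, u3⟩ := sol_step_zero T n m _ _ _ hdiff ⊥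
      (fun r => by simp [k1, hΘ, t1])
      (fun r => by simp [k2, hΘ, t2])
      (fun r => by simp [k3, hΘ, t3])
      (by
        rw [AddSubgroup.mem_bot, k4, Prod.mk_add_mk, hΘ, add_zero, map_add, hζ, map_zsmul, hθx, t1,
          hg]
        abel)
    refine ⟨Θ, fun r => ?_, fun r => ?_, fun r => ?_⟩
    · simpa [sub_eq_zero] using u1 r
    · simpa [sub_eq_zero] using u2 r
    · simpa [sub_eq_zero] using u3 r
  · have := (sol_step_rel T n m ρ' γ' σ' hsol).2.2
    exact this

lemma univ_base : IsUniv Pre.base (ℤ × ℤ) (fun _ => (1, 0)) (fun _ => (0, 1)) (fun _ => (-1, -1)) where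
  sol := by intro e; simp
  gen := by
    intro H h1 h2 _
    rw [eq_top_iff]
    rintro ⟨a, b⟩ -
    have := H.add_mem (H.zsmul_mem (h1 ()) a) (H.zsmul_mem (h2 ()) b)
    simpa using this
  univ := by
    intro X _ ρ' γ' σ' h
    refine ⟨(zmultiplesHom X (ρ' ())).coprod (zmultiplesHom X (γ' ())), ?_, ?_, ?_⟩
    · intro r; simp; rfl
    · intro r; simp; rfl
    · intro r
      have : ρ' () + γ' () + σ' () = 0 := h ()
      have hfin : (-1 : ℤ) • ρ' () + (-1 : ℤ) • γ' () = σ' () := by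
        rw [eq_neg_of_add_eq_zero_right this, neg_one_smul, neg_one_smul, neg_add]
      exact hfin

/-- Choice of the factorisation of the next composite number. -/
lemma choose_factor (p N : ℕ) (hp : p.Prime) (hN : ∃ b c : ℕ, 2 ≤ b ∧ 2 ≤ c ∧ N = b * c) :
    ∃ (n m : ℕ) (τ : ℤ), N = (m + 2) * (n + 2) ∧ (m + 2).Prime ∧
      (p : ℤ) ∣ ((m + 2) * (n + 2) : ℕ) * τ - ((m + 2 : ℕ) : ℤ) := by
  obtain ⟨b, c, hb, hc, hbc⟩ := hN
  have hN0 : 0 < N := by rw [hbc]; positivity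
  have hnp : ¬ N.Prime := by rw [hbc]; exact Nat.not_prime_mul (by omega) (by omega)
  have split : ∀ q : ℕ, q.Prime → q ∣ N → ∃ n m : ℕ, N = (m + 2) * (n + 2) ∧ q = m + 2 := by
    rintro q hq ⟨d, hd⟩
    have hd0 : d ≠ 0 := by rintro rfl; omega
    have hd1 : d ≠ 1 := by rintro rfl; rw [mul_one] at hd; exact hnp (hd ▸ hq)
    have := hq.two_le
    refine ⟨d - 2, q - 2, ?_, by omega⟩
    rw [hd]; congr 1 <;> omega
  by_cases h : p ∣ N
  · obtain ⟨n, m, h1, h2⟩ := split p hp h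
    refine ⟨n, m, 0, h1, h2 ▸ hp, ?_⟩
    rw [h2, mul_zero, zero_sub, dvd_neg]
  · have hq : N.minFac.Prime := Nat.minFac_prime (by
      rw [hbc]; intro h; have := Nat.eq_one_of_mul_eq_one_right h; omega)
    obtain ⟨n, m, h1, h2⟩ := split _ hq N.minFac_dvd
    have hco : IsCoprime (p : ℤ) (N : ℤ) := by
      rw [Nat.isCoprime_iff_coprime]; exact (Nat.Prime.coprime_iff_not_dvd hp).2 h
    obtain ⟨u, w, huw⟩ := hco
    refine ⟨n, m, w * ((m + 2 : ℕ) : ℤ), h1, h2 ▸ hq, ?_⟩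
    rw [← h1]
    refine ⟨-u * ((m + 2 : ℕ) : ℤ), ?_⟩
    linear_combination ((m + 2 : ℕ) : ℤ) * huw

/-- Splitting off the first factor of a product. -/
def consAdd (k : ℕ) (n : Fin (k + 1) → ℕ) :
    ((i : Fin k) → ZMod (n i.succ)) × ZMod (n 0) ≃+ ((i : Fin (k + 1)) → ZMod (n i)) where
  toFun x := Fin.cons (α := fun i => ZMod (n i)) x.2 x.1
  invFun y := (fun i => y i.succ, y 0)
  left_inv x := by simp
  right_inv y := by
    funext i
    induction i using Fin.cases <;> simp
  map_add' x y := by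
    funext i
    induction i using Fin.cases <;> simp

lemma main_induction (k : ℕ) : ∀ (n : Fin k → ℕ)
    (_ : ∀ i, ∃ b c : ℕ, 2 ≤ b ∧ 2 ≤ c ∧ n i = b * c),
    ∃ (T : Pre) (U : Type) (_ : AddCommGroup U) (ρ : T.R → U) (γ : T.C → U) (σ : T.S → U) (p : ℕ),
      (∀ f, f ≠ T.e0 → T.t f ≠ T.h f) ∧ (1 ≤ k → ∀ f, T.t f ≠ T.h f) ∧
      IsUniv T U ρ γ σ ∧ p.Prime ∧ p • (ρ (T.t T.e0) - ρ (T.h T.e0)) = 0 ∧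
      Nonempty (U ≃+ (ℤ × ℤ) × ((i : Fin k) → ZMod (n i))) := by
  induction k with
  | zero =>
    intro n _
    refine ⟨Pre.base, ℤ × ℤ, inferInstance, _, _, _, 2, ?_, by simp, univ_base, Nat.prime_two,
      by simp, ⟨(AddEquiv.prodUnique (M := ℤ × ℤ) (N := (i : Fin 0) → ZMod (n i))).symm⟩⟩
    intro f hf
    exact (hf rfl).elim
  | succ k ih =>
    intro n hn
    obtain ⟨T, U, _, ρ, γ, σ, p, h1, -, h3, h4, h5, ⟨e⟩⟩ :=
      ih (fun i => n i.succ) (fun i => hn i.succ)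
    obtain ⟨a, m, τ, hN, hq, hτ⟩ := choose_factor p (n 0) h4 (hn 0)
    obtain ⟨ρ', γ', σ', u1, u2⟩ := univ_step T a m U ρ γ σ h3 p τ h5 hτ
    refine ⟨T.step a m, U × ZMod ((m + 2) * (a + 2)), inferInstance, ρ', γ', σ', m + 2,
      fun f _ => step_ne T a m h1 f, fun _ => step_ne T a m h1, u1, hq, u2, ?_⟩
    rw [← hN]
    exact ⟨(e.prodCongr (AddEquiv.refl _)).trans
      (AddEquiv.prodAssoc.trans ((AddEquiv.refl _).prodCongr (consAdd k n)))⟩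

end BT

/-- For `k ≥ 1` and composite integers `n_1, …, n_k` there is a spherical latin bitrade
whose canonical group is isomorphic to `ℤ/n_1 ⊕ ⋯ ⊕ ℤ/n_k`. -/
theorem exists_spherical_bitrade_canonical_group_composites
    (k : ℕ) (hk : 1 ≤ k) (n : Fin k → ℕ)
    (hn : ∀ i, ∃ b c : ℕ, 2 ≤ b ∧ 2 ≤ c ∧ n i = b * c) :
    ∃ T : SphericalLatinBitrade,
      Nonempty (CanonicalGroup T ≃+ ((i : Fin k) → ZMod (n i))) := by
  obtain ⟨T, U, _, ρ, γ, σ, p, -, h2, h3, -, -, ⟨e⟩⟩ := BT.main_induction k n hn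
  refine ⟨T.bitrade (h2 hk), ?_⟩
  obtain ⟨e'⟩ := BT.univ_equiv T (h2 hk) U ρ γ σ h3
  have : ∀ i, NeZero (n i) := fun i => ⟨by
    obtain ⟨b, c, hb, hc, h⟩ := hn i
    rw [h]; positivity⟩
  exact BT.torsion_equiv (e'.trans e)
end

section
/- Let p be a prime, let k ≥ 1, let a_1, a_2, …, a_k ≥ 2 be integers, and let n be a nonnegative integer with n ≤ 1 + 2·∑_{i=1}^k (a_i − 1). Then there exists a spherical latin bitrade whose canonical group is isomorphic to (Z_p)^n ⊕ Z_{p·a_1} ⊕ Z_{p·a_2} ⊕ … ⊕ Z_{p·a_k}. -/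
namespace SLB

abbrev Tr := Fin 3 → ℕ

/-- the triples agree in all coordinates except possibly `i` -/
def Ag (i : Fin 3) (t t' : Tr) : Prop := ∀ j, j ≠ i → t j = t' j

lemma Ag.symm {i : Fin 3} {t t' : Tr} (h : Ag i t t') : Ag i t' t := fun j hj => (h j hj).symm

def verts (W : Finset Tr) (i : Fin 3) : Finset ℕ := W.image (fun t => t i)

lemma mem_verts {W : Finset Tr} {i : Fin 3} {t : Tr} (h : t ∈ W) : t i ∈ verts W i :=
  Finset.mem_image_of_mem (fun t : Tr => t i) h

def Conn (W B : Finset Tr) : Prop :=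
  ∀ f g : Tr → Prop, (∀ t ∈ W, ∀ t' ∈ B, ∀ i, Ag i t t' → (f t ↔ g t')) →
    ∃ q : Prop, (∀ t ∈ W, (f t ↔ q)) ∧ (∀ t ∈ B, (g t ↔ q))

lemma Conn.symm {W B : Finset Tr} (h : Conn W B) : Conn B W := by
  intro f g hfg
  obtain ⟨q, h1, h2⟩ := h g f (fun t ht t' ht' i hi => (hfg t' ht' t ht i hi.symm).symm)
  exact ⟨q, h2, h1⟩

def Pls (W : Finset Tr) : Prop := ∀ t ∈ W, ∀ t' ∈ W, ∀ i, Ag i t t' → t = t'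

def Tc (W B : Finset Tr) : Prop := ∀ t ∈ W, ∀ i, ∃ t' ∈ B, Ag i t t'

structure PB (W B : Finset Tr) : Prop where
  plsW : Pls W
  plsB : Pls B
  tWB : Tc W B
  tBW : Tc B W
  conn : Conn W B
  euler : (verts W 0).card + (verts W 1).card + (verts W 2).card = W.card + 2

lemma exists_ne (i : Fin 3) : ∃ j : Fin 3, i ≠ j := by
  fin_cases i
  · exact ⟨1, by decide⟩
  · exact ⟨0, by decide⟩
  · exact ⟨0, by decide⟩

lemma Tc.verts {W B : Finset Tr} (h : Tc W B) (i : Fin 3) : verts W i ⊆ verts B i := by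
  intro a ha
  simp only [SLB.verts, Finset.mem_image] at ha ⊢
  obtain ⟨t, ht, rfl⟩ := ha
  obtain ⟨j, hj⟩ := exists_ne i
  obtain ⟨t', ht', h'⟩ := h t ht j
  exact ⟨t', ht', (h' i hj).symm⟩

lemma conn_of_erase {W B : Finset Tr} {w : Tr} (hT : Tc W B)
    (h : Conn (W.erase w) B) : Conn W B := by
  intro f g hfg
  obtain ⟨q, h1, h2⟩ := h f g (fun t ht => hfg t (Finset.mem_of_mem_erase ht))
  refine ⟨q, fun t ht => ?_, h2⟩
  obtain ⟨b, hb, hab⟩ := hT t ht 0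
  exact (hfg t ht b hb 0 hab).trans (h2 b hb)

/-- overlap condition -/
def Ov (X Y : Finset Tr) (w : Tr) : Prop := ∀ t ∈ X, ∀ t' ∈ Y, ∀ i, t i = t' i → t i = w i

lemma Ov.symm {X Y : Finset Tr} {w : Tr} (h : Ov X Y w) : Ov Y X w :=
  fun t ht t' ht' i hi => hi.trans (h t' ht' t ht i hi.symm)

lemma Ov.of_verts {X Y X' Y' : Finset Tr} {w : Tr} (h : Ov X Y w)
    (hX : ∀ i, verts X' i ⊆ verts X i) (hY : ∀ i, verts Y' i ⊆ verts Y i) : Ov X' Y' w := by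
  intro t ht t' ht' i hi
  have h1 := hX i (mem_verts ht)
  have h2 := hY i (mem_verts ht')
  simp only [verts, Finset.mem_image] at h1 h2
  obtain ⟨s, hs, e⟩ := h1
  obtain ⟨s', hs', e'⟩ := h2
  rw [← e]
  exact h s hs s' hs' i (by rw [e, e', hi])

lemma glue_pls {W1 W2 : Finset Tr} {w : Tr} (h1 : Pls W1) (h2 : Pls W2) (hw : w ∈ W1)
    (ho : Ov W1 W2 w) : Pls (W1.erase w ∪ W2) := by
  have key : ∀ t ∈ W1.erase w, ∀ t' ∈ W2, ∀ i, ¬ Ag i t t' := by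
    intro t ht t' ht' i hi
    rw [Finset.mem_erase] at ht
    exact ht.1 (h1 t ht.2 w hw i (fun j hj => ho t ht.2 t' ht' j (hi j hj)))
  intro t ht t' ht' i hi
  rw [Finset.mem_union] at ht ht'
  rcases ht with ht | ht <;> rcases ht' with ht' | ht'
  · exact h1 t (Finset.mem_of_mem_erase ht) t' (Finset.mem_of_mem_erase ht') i hi
  · exact absurd hi (key t ht t' ht' i)
  · exact absurd hi.symm (key t' ht' t ht i)
  · exact h2 t ht t' ht' i hi

lemma glue_tc {W1 W2 B1 B2 : Finset Tr} {w : Tr} (h1 : Tc W1 B1) (h2 : Tc W2 B2) (hw : w ∈ W1) :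
    Tc (W1.erase w ∪ W2) (B1 ∪ B2.erase w) := by
  intro t ht i
  rw [Finset.mem_union] at ht
  rcases ht with ht | ht
  · obtain ⟨t', ht', h'⟩ := h1 t (Finset.mem_of_mem_erase ht) i
    exact ⟨t', Finset.mem_union_left _ ht', h'⟩
  · obtain ⟨t', ht', h'⟩ := h2 t ht i
    by_cases e : t' = w
    · subst e
      obtain ⟨t'', ht'', h''⟩ := h1 t' hw i
      exact ⟨t'', Finset.mem_union_left _ ht'', fun j hj => (h' j hj).trans (h'' j hj)⟩
    · exact ⟨t', Finset.mem_union_right _ (Finset.mem_erase.2 ⟨e, ht'⟩), h'⟩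

lemma glue_conn {W1 W2 B1 B2 : Finset Tr} {w : Tr} (h1 : Tc W1 B1) (hw : w ∈ W1)
    (hc1 : Conn (W1.erase w) B1) (hc2 : Conn W2 B2) (hw2 : w ∈ B2) :
    Conn (W1.erase w ∪ W2) (B1 ∪ B2.erase w) := by
  classical
  intro f g hfg
  obtain ⟨q, ha, hb⟩ := hc1 f g (fun t ht t' ht' i hi =>
    hfg t (Finset.mem_union_left _ ht) t' (Finset.mem_union_left _ ht') i hi)
  obtain ⟨q', ha', hb'⟩ := hc2 f (fun t => if t = w then q else g t) (by
    intro t ht t' ht' i hi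
    by_cases e : t' = w
    · subst e
      obtain ⟨t'', ht'', h''⟩ := h1 t' hw i
      simp only [if_true]
      rw [← hb t'' ht'']
      exact hfg t (Finset.mem_union_right _ ht) t'' (Finset.mem_union_left _ ht'') i
        (fun j hj => (hi j hj).trans (h'' j hj))
    · simp only [e, if_false]
      exact hfg t (Finset.mem_union_right _ ht) t'
        (Finset.mem_union_right _ (Finset.mem_erase.2 ⟨e, ht'⟩)) i hi)
  have hq : q ↔ q' := by simpa using hb' w hw2
  refine ⟨q, fun t ht => ?_, fun t ht => ?_⟩
  · rw [Finset.mem_union] at ht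
    rcases ht with ht | ht
    · exact ha t ht
    · rw [hq]; exact ha' t ht
  · rw [Finset.mem_union] at ht
    rcases ht with ht | ht
    · exact hb t ht
    · rw [hq]
      have := hb' t (Finset.mem_of_mem_erase ht)
      rwa [if_neg (Finset.ne_of_mem_erase ht)] at this

lemma glue_verts {W1 W2 B2 : Finset Tr} {w : Tr} (h2 : PB W2 B2)
    (hw2 : w ∈ B2) (i : Fin 3) :
    verts (W1.erase w ∪ W2) i = verts W1 i ∪ verts W2 i := by
  ext a
  simp only [verts, Finset.mem_union, Finset.mem_image, Finset.mem_erase]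
  constructor
  · rintro ⟨t, ht | ht, rfl⟩
    · exact Or.inl ⟨t, ht.2, rfl⟩
    · exact Or.inr ⟨t, ht, rfl⟩
  · rintro (⟨t, ht, rfl⟩ | ⟨t, ht, rfl⟩)
    · by_cases e : t = w
      · subst e
        have := h2.tBW.verts i (mem_verts hw2)
        simp only [verts, Finset.mem_image] at this
        obtain ⟨s, hs, e⟩ := this
        exact ⟨s, Or.inr hs, e⟩
      · exact ⟨t, Or.inl ⟨e, ht⟩, rfl⟩
    · exact ⟨t, Or.inr ht, rfl⟩

lemma glue {W1 W2 B1 B2 : Finset Tr} {w : Tr} (h1 : PB W1 B1) (h2 : PB W2 B2)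
    (hw : w ∈ W1) (hw2 : w ∈ B2) (ho : Ov W1 W2 w)
    (hc : Conn (W1.erase w) B1 ∨ Conn W2 (B2.erase w)) :
    PB (W1.erase w ∪ W2) (B1 ∪ B2.erase w) := by
  have hoB : Ov B1 B2 w := ho.of_verts h1.tBW.verts h2.tBW.verts
  have hv : ∀ i, verts (W1.erase w ∪ W2) i = verts W1 i ∪ verts W2 i := fun i => glue_verts h2 hw2 i
  refine ⟨glue_pls h1.plsW h2.plsW hw ho, ?_, glue_tc h1.tWB h2.tWB hw, ?_, ?_, ?_⟩
  · rw [Finset.union_comm]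
    exact glue_pls h2.plsB h1.plsB hw2 hoB.symm
  · rw [Finset.union_comm, Finset.union_comm (W1.erase w)]
    exact glue_tc h2.tBW h1.tBW hw2
  · rcases hc with hc | hc
    · exact glue_conn h1.tWB hw hc h2.conn hw2
    · have := glue_conn h2.tBW hw2 hc.symm h1.conn.symm hw
      rw [Finset.union_comm, Finset.union_comm B1]
      exact this.symm
  · have hi : ∀ i, verts W1 i ∩ verts W2 i = {w i} := by
      intro i
      ext a
      simp only [Finset.mem_inter, Finset.mem_singleton]
      constructor
      · rintro ⟨ha, hb⟩
        simp only [verts, Finset.mem_image] at ha hb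
        obtain ⟨t, ht, rfl⟩ := ha
        obtain ⟨t', ht', e⟩ := hb
        exact ho t ht t' ht' i e.symm
      · rintro rfl
        exact ⟨mem_verts hw, h2.tBW.verts i (mem_verts hw2)⟩
    have hcard : ∀ i, (verts (W1.erase w ∪ W2) i).card + 1
        = (verts W1 i).card + (verts W2 i).card := by
      intro i
      have := Finset.card_union_add_card_inter (verts W1 i) (verts W2 i)
      rw [hi i, Finset.card_singleton] at this
      rw [hv i, this]
    have hd : Disjoint (W1.erase w) W2 := by
      rw [Finset.disjoint_left]
      intro t ht ht'
      rw [Finset.mem_erase] at ht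
      exact ht.1 (funext fun i => ho t ht.2 t ht' i rfl)
    rw [Finset.card_union_of_disjoint hd]
    have hcw := Finset.card_erase_add_one hw
    have e1 := h1.euler
    have e2 := h2.euler
    have a0 := hcard 0
    have a1 := hcard 1
    have a2 := hcard 2
    omega

lemma glue_disj {W1 W2 B1 B2 : Finset Tr} {w : Tr} (h1 : PB W1 B1) (h2 : PB W2 B2)
    (hw : w ∈ W1) (ho : Ov W1 W2 w)
    (hd1 : Disjoint W1 B1) (hd2 : Disjoint W2 (B2.erase w)) :
    Disjoint (W1.erase w ∪ W2) (B1 ∪ B2.erase w) := by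
  have ho' : Ov W1 B2 w := ho.of_verts (fun i => Finset.Subset.refl _) h2.tBW.verts
  have ho'' : Ov B1 W2 w := ho.of_verts h1.tBW.verts (fun i => Finset.Subset.refl _)
  rw [Finset.disjoint_left] at *
  intro t ht ht'
  simp only [Finset.mem_union] at ht ht'
  rcases ht with ht | ht <;> rcases ht' with ht' | ht'
  · exact hd1 (Finset.mem_of_mem_erase ht) ht'
  · rw [Finset.mem_erase] at ht ht'
    exact ht.1 (funext fun i => ho' t ht.2 t ht'.2 i rfl)
  · have : t = w := funext fun i => ho'' t ht' t ht i rfl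
    subst this
    exact hd1 hw ht'
  · exact hd2 ht ht'

def RW (N : ℕ) (ρ : ℕ → ℕ) (c d : ℕ) (σ : ℕ → ℕ) : Finset Tr :=
  (Finset.range N).image (fun j => ![ρ (j+1), c, σ (j+1)]) ∪
  (Finset.range N).image (fun j => ![ρ j, d, σ (j+1)])

structure RH (N : ℕ) (ρ : ℕ → ℕ) (c d : ℕ) (σ : ℕ → ℕ) : Prop where
  hN : 2 ≤ N
  h0 : ρ 0 = ρ N
  hρ : ∀ i < N, ∀ j < N, ρ (i+1) = ρ (j+1) → i = j
  hρ' : ∀ i < N, ∀ j < N, ρ i = ρ j → i = j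
  hne : ∀ j < N, ρ (j+1) ≠ ρ j
  hσ : ∀ i < N, ∀ j < N, σ (i+1) = σ (j+1) → i = j
  hcd : c ≠ d

lemma RH.swap {N : ℕ} {ρ : ℕ → ℕ} {c d : ℕ} {σ : ℕ → ℕ} (h : RH N ρ c d σ) : RH N ρ d c σ :=
  ⟨h.hN, h.h0, h.hρ, h.hρ', h.hne, h.hσ, h.hcd.symm⟩

lemma mem_RW {N : ℕ} {ρ : ℕ → ℕ} {c d : ℕ} {σ : ℕ → ℕ} {t : Tr} :
    t ∈ RW N ρ c d σ ↔ (∃ j < N, t = ![ρ (j+1), c, σ (j+1)]) ∨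
      (∃ j < N, t = ![ρ j, d, σ (j+1)]) := by
  simp only [RW, Finset.mem_union, Finset.mem_image, Finset.mem_range, eq_comm]

lemma memc {N : ℕ} {ρ : ℕ → ℕ} {c d : ℕ} {σ : ℕ → ℕ} {j : ℕ} (h : j < N) :
    ![ρ (j+1), c, σ (j+1)] ∈ RW N ρ c d σ := mem_RW.2 (Or.inl ⟨j, h, rfl⟩)
lemma memd {N : ℕ} {ρ : ℕ → ℕ} {c d : ℕ} {σ : ℕ → ℕ} {j : ℕ} (h : j < N) :
    ![ρ j, d, σ (j+1)] ∈ RW N ρ c d σ := mem_RW.2 (Or.inr ⟨j, h, rfl⟩)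

lemma ag0 {a b c a' b' c' : ℕ} : Ag 0 ![a,b,c] ![a',b',c'] ↔ b = b' ∧ c = c' := by
  simp [Ag, Fin.forall_fin_succ]
lemma ag1 {a b c a' b' c' : ℕ} : Ag 1 ![a,b,c] ![a',b',c'] ↔ a = a' ∧ c = c' := by
  simp [Ag, Fin.forall_fin_succ]
lemma ag2 {a b c a' b' c' : ℕ} : Ag 2 ![a,b,c] ![a',b',c'] ↔ a = a' ∧ b = b' := by
  simp [Ag, Fin.forall_fin_succ]

lemma RW_pls {N : ℕ} {ρ : ℕ → ℕ} {c d : ℕ} {σ : ℕ → ℕ} (h : RH N ρ c d σ) :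
    Pls (RW N ρ c d σ) := by
  have := h.hρ; have := h.hρ'; have := h.hne; have := h.hσ; have := h.hcd
  intro t ht t' ht' i hi
  rw [mem_RW] at ht ht'
  rcases ht with ⟨j, hj, rfl⟩ | ⟨j, hj, rfl⟩ <;> rcases ht' with ⟨j', hj', rfl⟩ | ⟨j', hj', rfl⟩ <;>
    fin_cases i <;> simp only [Fin.zero_eta, Fin.mk_one, Fin.reduceFinMk, ag0, ag1, ag2] at hi <;>
    grind

lemma RW_tc {N : ℕ} {ρ : ℕ → ℕ} {c d : ℕ} {σ : ℕ → ℕ} (h : RH N ρ c d σ) :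
    Tc (RW N ρ c d σ) (RW N ρ d c σ) := by
  have hN := h.hN
  intro t ht i
  rw [mem_RW] at ht
  rcases ht with ⟨j, hj, rfl⟩ | ⟨j, hj, rfl⟩ <;>
    fin_cases i <;> simp only [Fin.zero_eta, Fin.mk_one, Fin.reduceFinMk]
  · exact ⟨_, memd hj, ag0.2 ⟨rfl, rfl⟩⟩
  · exact ⟨_, memc hj, ag1.2 ⟨rfl, rfl⟩⟩
  · by_cases e : j + 1 < N
    · exact ⟨_, memd e, ag2.2 ⟨rfl, rfl⟩⟩
    · have : j + 1 = N := by omega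
      exact ⟨_, memd (j := 0) (by omega), ag2.2 ⟨by rw [this, h.h0], rfl⟩⟩
  · exact ⟨_, memc hj, ag0.2 ⟨rfl, rfl⟩⟩
  · exact ⟨_, memd hj, ag1.2 ⟨rfl, rfl⟩⟩
  · rcases j with _ | j
    · obtain ⟨m, rfl⟩ : ∃ m, N = m + 1 := ⟨N - 1, by omega⟩
      exact ⟨_, memc (j := m) (by omega), ag2.2 ⟨h.h0, rfl⟩⟩
    · exact ⟨_, memc (j := j) (by omega), ag2.2 ⟨rfl, rfl⟩⟩

lemma RW_mem_last {N : ℕ} {ρ : ℕ → ℕ} {c d : ℕ} {σ : ℕ → ℕ} (h : RH N ρ c d σ) :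
    ![ρ N, c, σ N] ∈ RW N ρ c d σ := by
  have hN := h.hN
  obtain ⟨m, rfl⟩ : ∃ m, N = m + 1 := ⟨N - 1, by omega⟩
  exact memc (by omega)

lemma RW_conn_erase {N : ℕ} {ρ : ℕ → ℕ} {c d : ℕ} {σ : ℕ → ℕ} (h : RH N ρ c d σ) :
    Conn ((RW N ρ c d σ).erase ![ρ N, c, σ N]) (RW N ρ d c σ) := by
  intro f g hfg
  have hmd : ∀ j < N, ![ρ j, d, σ (j+1)] ∈ (RW N ρ c d σ).erase ![ρ N, c, σ N] := by
    intro j hj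
    refine Finset.mem_erase.2 ⟨fun e => ?_, memd hj⟩
    have := congrFun e 1
    exact h.hcd (by simpa using this.symm)
  have hD : ∀ j < N, (f ![ρ j, d, σ (j+1)] ↔ g ![ρ (j+1), d, σ (j+1)]) := fun j hj =>
    hfg _ (hmd j hj) _ (memc hj) 0 (ag0.2 ⟨rfl, rfl⟩)
  have hC : ∀ j < N, (f ![ρ j, d, σ (j+1)] ↔ g ![ρ j, c, σ (j+1)]) := fun j hj =>
    hfg _ (hmd j hj) _ (memd hj) 1 (ag1.2 ⟨rfl, rfl⟩)
  have hd : ∀ j < N, (f ![ρ j, d, σ (j+1)] ↔ f ![ρ 0, d, σ (0+1)]) := by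
    intro j
    induction j with
    | zero => intro _; exact Iff.rfl
    | succ j ih =>
      intro hj
      rw [← ih (by omega), hD j (by omega)]
      exact hfg _ (hmd _ hj) _ (memc (j := j) (by omega)) 2 (ag2.2 ⟨rfl, rfl⟩)
  refine ⟨f ![ρ 0, d, σ (0+1)], fun t ht => ?_, fun t ht => ?_⟩
  · have ht' := Finset.mem_of_mem_erase ht
    rw [mem_RW] at ht'
    rcases ht' with ⟨j, hj, rfl⟩ | ⟨j, hj, rfl⟩
    · rw [← hd j hj, hC j hj]
      exact hfg _ ht _ (memd hj) 0 (ag0.2 ⟨rfl, rfl⟩)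
    · exact hd j hj
  · rw [mem_RW] at ht
    rcases ht with ⟨j, hj, rfl⟩ | ⟨j, hj, rfl⟩
    · rw [← hd j hj, hD j hj]
    · rw [← hd j hj, hC j hj]

lemma RW_card {N : ℕ} {ρ : ℕ → ℕ} {c d : ℕ} {σ : ℕ → ℕ} (h : RH N ρ c d σ) :
    (RW N ρ c d σ).card = 2 * N := by
  rw [RW, Finset.card_union_of_disjoint, Finset.card_image_of_injOn, Finset.card_image_of_injOn,
    Finset.card_range, two_mul]
  · intro i hi j hj e
    simp only [Finset.coe_range, Set.mem_Iio] at hi hj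
    exact h.hσ i hi j hj (by simpa using congrFun e 2)
  · intro i hi j hj e
    simp only [Finset.coe_range, Set.mem_Iio] at hi hj
    exact h.hσ i hi j hj (by simpa using congrFun e 2)
  · rw [Finset.disjoint_left]
    intro t ht ht'
    simp only [Finset.mem_image] at ht ht'
    obtain ⟨i, -, rfl⟩ := ht
    obtain ⟨j, -, e⟩ := ht'
    exact h.hcd (by simpa using (congrFun e 1).symm)

lemma RW_disj {N : ℕ} {ρ : ℕ → ℕ} {c d : ℕ} {σ : ℕ → ℕ} (h : RH N ρ c d σ) :
    Disjoint (RW N ρ c d σ) (RW N ρ d c σ) := by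
  rw [Finset.disjoint_left]
  have := h.hρ; have := h.hρ'; have := h.hne; have := h.hσ; have := h.hcd
  intro t ht ht'
  rw [mem_RW] at ht ht'
  rcases ht with ⟨j, hj, rfl⟩ | ⟨j, hj, rfl⟩ <;> rcases ht' with ⟨j', hj', e⟩ | ⟨j', hj', e⟩ <;>
    (have e0 := congrFun e 0
     have e1 := congrFun e 1
     have e2 := congrFun e 2
     simp at e0 e1 e2
     grind)

lemma RW_PB {N : ℕ} {ρ : ℕ → ℕ} {c d : ℕ} {σ : ℕ → ℕ} (h : RH N ρ c d σ) :
    PB (RW N ρ c d σ) (RW N ρ d c σ) := by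
  refine ⟨RW_pls h, RW_pls h.swap, RW_tc h, RW_tc h.swap,
    conn_of_erase (RW_tc h) (RW_conn_erase h), ?_⟩
  have hN := h.hN
  rw [RW_card h]
  have v0 : verts (RW N ρ c d σ) 0 = (Finset.range N).image ρ := by
    ext a
    simp only [verts, Finset.mem_image, mem_RW, Finset.mem_range]
    constructor
    · rintro ⟨t, ⟨j, hj, rfl⟩ | ⟨j, hj, rfl⟩, rfl⟩
      · by_cases e : j + 1 < N
        · exact ⟨j+1, e, rfl⟩
        · have : j + 1 = N := by omega
          exact ⟨0, by omega, by simp [this, h.h0]⟩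
      · exact ⟨j, hj, rfl⟩
    · rintro ⟨j, hj, rfl⟩
      exact ⟨_, Or.inr ⟨j, hj, rfl⟩, rfl⟩
  have v1 : verts (RW N ρ c d σ) 1 = {c, d} := by
    ext a
    simp only [verts, Finset.mem_image, mem_RW, Finset.mem_insert, Finset.mem_singleton]
    constructor
    · rintro ⟨t, ⟨j, hj, rfl⟩ | ⟨j, hj, rfl⟩, rfl⟩ <;> simp
    · rintro (rfl | rfl)
      · exact ⟨_, Or.inl ⟨0, by omega, rfl⟩, rfl⟩
      · exact ⟨_, Or.inr ⟨0, by omega, rfl⟩, rfl⟩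
  have v2 : verts (RW N ρ c d σ) 2 = (Finset.range N).image (fun j => σ (j+1)) := by
    ext a
    simp only [verts, Finset.mem_image, mem_RW, Finset.mem_range]
    constructor
    · rintro ⟨t, ⟨j, hj, rfl⟩ | ⟨j, hj, rfl⟩, rfl⟩
      · exact ⟨j, hj, rfl⟩
      · exact ⟨j, hj, rfl⟩
    · rintro ⟨j, hj, rfl⟩
      exact ⟨_, Or.inl ⟨j, hj, rfl⟩, rfl⟩
  rw [v0, v1, v2, Finset.card_image_of_injOn, Finset.card_image_of_injOn, Finset.card_pair h.hcd,
    Finset.card_range]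
  · omega
  · intro i hi j hj e
    simp only [Finset.coe_range, Set.mem_Iio] at hi hj
    exact h.hσ i hi j hj e
  · intro i hi j hj e
    simp only [Finset.coe_range, Set.mem_Iio] at hi hj
    exact h.hρ' i hi j hj e

/-- concrete labels -/
def rl (N r M : ℕ) (j : ℕ) : ℕ := if j = 0 ∨ j = N then r else M + j
def sl (N s M : ℕ) (j : ℕ) : ℕ := if j = N then s else M + j

lemma RH_concrete {N r c s M : ℕ} (hN : 2 ≤ N) (hr : r < M) (hc : c < M) (hs : s < M) :
    RH N (rl N r M) c M (sl N s M) := by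
  refine ⟨hN, ?_, ?_, ?_, ?_, ?_, ?_⟩ <;> grind [rl, sl]

section algebra

def val {H : Type} [AddCommGroup H] (φ : Fin 3 → ℕ → H) (t : Tr) : H :=
  φ 0 (t 0) + φ 1 (t 1) + φ 2 (t 2)

lemma val_mk {H : Type} [AddCommGroup H] (φ : Fin 3 → ℕ → H) (a b c : ℕ) :
    val φ ![a, b, c] = φ 0 a + φ 1 b + φ 2 c := by simp [val]

structure IsUniv {U : Type} [AddCommGroup U] (V : Fin 3 → Finset ℕ) (W : Finset Tr)
    (φ : Fin 3 → ℕ → U) : Prop where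
  sol : ∀ t ∈ W, val φ t = 0
  ex : ∀ (H : Type) [AddCommGroup H] (ψ : Fin 3 → ℕ → H), (∀ t ∈ W, val ψ t = 0) →
    ∃ θ : U →+ H, ∀ i, ∀ a ∈ V i, θ (φ i a) = ψ i a
  uq : ∀ (H : Type) [AddCommGroup H] (θ₁ θ₂ : U →+ H),
    (∀ i, ∀ a ∈ V i, θ₁ (φ i a) = θ₂ (φ i a)) → θ₁ = θ₂

lemma val_map {U H : Type} [AddCommGroup U] [AddCommGroup H] {V : Fin 3 → Finset ℕ}
    {φ : Fin 3 → ℕ → U} {ψ : Fin 3 → ℕ → H} {θ : U →+ H}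
    (h : ∀ i, ∀ a ∈ V i, θ (φ i a) = ψ i a) {t : Tr} (ht : ∀ i, t i ∈ V i) :
    θ (val φ t) = val ψ t := by
  simp only [val, map_add, h _ _ (ht _)]

/-- reduce the last integer coordinate mod `N` -/
def red (U : Type) [AddCommGroup U] (N : ℕ) : U × ℤ →+ U × ZMod N :=
  (AddMonoidHom.id U).prodMap (Int.castAddHom (ZMod N))

lemma red_apply {U : Type} [AddCommGroup U] (N : ℕ) (u : U) (n : ℤ) :
    red U N (u, n) = (u, (n : ZMod N)) := rfl

lemma red_surj {U : Type} [AddCommGroup U] (N : ℕ) : Function.Surjective (red U N) := by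
  rintro ⟨u, n⟩
  obtain ⟨m, rfl⟩ := ZMod.intCast_surjective n
  exact ⟨(u, m), rfl⟩

lemma factor_red {U H : Type} [AddCommGroup U] [AddCommGroup H] (N : ℕ) (θ : U × ℤ →+ H)
    (h : (N : ℤ) • θ (0, 1) = 0) : ∃ θ' : U × ZMod N →+ H, ∀ x, θ' (red U N x) = θ x := by
  refine ⟨(θ.comp (AddMonoidHom.inl U ℤ)).coprod
    (ZMod.lift N ⟨θ.comp (AddMonoidHom.inr U ℤ), ?_⟩), ?_⟩
  · rw [← h, ← map_zsmul]
    simp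
  · rintro ⟨u, n⟩
    rw [red_apply]
    simp [← map_add]

lemma red_p {U : Type} [AddCommGroup U] (N : ℕ) : red U N ((N : ℤ) • (0, 1)) = 0 := by
  rw [Prod.smul_mk, red_apply]; simp

lemma univ_close {U : Type} [AddCommGroup U] {V : Fin 3 → Finset ℕ} {W : Finset Tr}
    {φ : Fin 3 → ℕ → U × ℤ} {w : Tr} (N : ℕ) (hw : w ∈ W) (hV : ∀ i, w i ∈ V i)
    (h : IsUniv V (W.erase w) φ)
    (hv : val φ w = (N : ℤ) • (0, 1)) : IsUniv V W (fun i a => red U N (φ i a)) := by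
  have hval : ∀ t, val (fun i a => red U N (φ i a)) t = red U N (val φ t) := by
    intro t; simp [val]
  refine ⟨?_, ?_, ?_⟩
  · intro t ht
    rw [hval]
    by_cases e : t = w
    · rw [e, hv, red_p]
    · rw [h.sol t (Finset.mem_erase.2 ⟨e, ht⟩), map_zero]
  · intro H _ ψ hψ
    obtain ⟨θ, hθ⟩ := h.ex H ψ (fun t ht => hψ t (Finset.mem_of_mem_erase ht))
    obtain ⟨θ', hθ'⟩ := factor_red N θ (by
      rw [← map_zsmul, ← hv, val_map hθ hV, hψ w hw])
    exact ⟨θ', fun i a ha => by rw [hθ', hθ i a ha]⟩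
  · intro H _ θ₁ θ₂ hh
    have := h.uq H (θ₁.comp (red U N)) (θ₂.comp (red U N)) hh
    ext1 x
    obtain ⟨y, rfl⟩ := red_surj N x
    exact DFunLike.congr_fun this y

/-- labels on the piece `P` -/
def phiP {U : Type} [AddCommGroup U] (φ : Fin 3 → ℕ → U) (p M : ℕ) (b : Tr) (z : U) :
    Fin 3 → ℕ → U × ℤ :=
  fun i a => if a < M then (φ i a, 0) else
    ![fun j => (-φ 1 (b 1) - φ 2 (b 2) + ((p : ℤ) - j) • z, -((p : ℤ) - j)),
      fun _ => (φ 1 (b 1) - z, 1),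
      fun j => (φ 2 (b 2) - ((p : ℤ) - j) • z, (p : ℤ) - j)] i ((a - M : ℕ) : ℤ)

lemma univ_P {U : Type} [AddCommGroup U] {W B : Finset Tr} (hPB : PB W B)
    {φ : Fin 3 → ℕ → U} (h : IsUniv (verts W) W φ) {p M : ℕ} (hp : 2 ≤ p)
    (hM : ∀ i, ∀ a ∈ verts W i, a < M) {b : Tr} (hb : b ∈ B) {z : U}
    (hz : val φ b = (p : ℤ) • z) :
    IsUniv (fun i => verts (RW p (rl p (b 0) M) (b 1) M (sl p (b 2) M)) i ∪ verts W i)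
      (((RW p (rl p (b 0) M) (b 1) M (sl p (b 2) M)).erase b ∪ W).erase
        ![b 0, M, sl p (b 2) M 1]) (phiP φ p M b z) ∧
    val (phiP φ p M b z) ![b 0, M, sl p (b 2) M 1] = (p : ℤ) • (0, 1) := by
  have hbM : ∀ i, b i < M := fun i => hM i _ (hPB.tBW.verts i (mem_verts hb))
  have hbe : b = ![rl p (b 0) M p, b 1, sl p (b 2) M p] := by
    ext i; fin_cases i <;> simp [rl, sl]
  have hold : ∀ i a, a < M → phiP φ p M b z i a = (φ i a, 0) := fun i a ha => by
    simp [phiP, ha]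
  have hu : phiP φ p M b z 1 M = (φ 1 (b 1) - z, 1) := by simp [phiP]
  have hr : ∀ j, 1 ≤ j → j < p → phiP φ p M b z 0 (rl p (b 0) M j) =
      (-φ 1 (b 1) - φ 2 (b 2) + ((p : ℤ) - j) • z, -((p : ℤ) - j)) := by
    intro j h1 h2
    have : rl p (b 0) M j = M + j := by simp [rl]; omega
    rw [this]; simp [phiP]
  have hs : ∀ j, 1 ≤ j → j ≤ p → phiP φ p M b z 2 (sl p (b 2) M j) =
      (φ 2 (b 2) - ((p : ℤ) - j) • z, (p : ℤ) - j) := by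
    intro j h1 h2
    by_cases e : j = p
    · have : sl p (b 2) M j = b 2 := by simp [sl, e]
      rw [this, hold _ _ (hbM 2)]; simp [e]
    · have : sl p (b 2) M j = M + j := by simp [sl, e]
      rw [this]; simp [phiP]
  have hz' : φ 0 (b 0) + φ 1 (b 1) + φ 2 (b 2) = (p : ℤ) • z := hz
  have hWmem : ∀ t ∈ W, t ∈ (((RW p (rl p (b 0) M) (b 1) M (sl p (b 2) M)).erase b ∪ W).erase
        ![b 0, M, sl p (b 2) M 1]) := by
    intro t ht
    refine Finset.mem_erase.2 ⟨?_, Finset.mem_union_right _ ht⟩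
    rintro rfl
    have := hM 1 _ (mem_verts ht)
    simp at this
  refine ⟨⟨?_, ?_, ?_⟩, ?_⟩
  · intro t ht
    rw [Finset.mem_erase, Finset.mem_union, Finset.mem_erase, mem_RW] at ht
    obtain ⟨h1, ⟨h2, ⟨j, hj, rfl⟩ | ⟨j, hj, rfl⟩⟩ | h3⟩ := ht
    · have hj' : j + 1 < p := by
        by_contra hc
        have : j + 1 = p := by omega
        rw [this] at h2
        exact h2 hbe.symm
      rw [val_mk, hr (j+1) (by omega) hj', hold _ _ (hbM 1), hs (j+1) (by omega) hj'.le]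
      ext
      · simp; abel
      · simp
    · have hj' : 1 ≤ j := by
        by_contra hc
        have : j = 0 := by omega
        subst this
        simp [rl] at h1
      rw [val_mk, hr j hj' hj, hu, hs (j+1) (by omega) hj]
      ext
      · simp only [Prod.fst_add, Prod.fst_zero]; push_cast; module
      · simp; ring
    · rw [val, hold _ _ (hM 0 _ (mem_verts h3)), hold _ _ (hM 1 _ (mem_verts h3)),
        hold _ _ (hM 2 _ (mem_verts h3))]
      have := h.sol t h3
      rw [val] at this
      simp [this]
  · intro H _ ψ hψ
    obtain ⟨θ, hθ⟩ := h.ex H ψ (fun t ht => hψ t (hWmem t ht))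
    set v := ψ 1 M - ψ 1 (b 1) with hv
    have hbV : ∀ i, θ (φ i (b i)) = ψ i (b i) := fun i =>
      hθ i _ (hPB.tBW.verts i (mem_verts hb))
    have relc : ∀ j, 1 ≤ j → j < p →
        ψ 0 (rl p (b 0) M j) + ψ 1 (b 1) + ψ 2 (sl p (b 2) M j) = 0 := by
      intro j h1 h2
      rw [← val_mk]
      apply hψ
      obtain ⟨j, rfl⟩ : ∃ i, j = i + 1 := ⟨j - 1, by omega⟩
      refine Finset.mem_erase.2 ⟨fun e => ?_, Finset.mem_union_left _ (Finset.mem_erase.2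
        ⟨fun e => ?_, memc (by omega)⟩)⟩
      · have := congrFun e 1
        have := hbM 1
        simp at *
        omega
      · have := congrFun e 2
        have := hbM 2
        simp [sl] at *
        grind
    have reld : ∀ j, 1 ≤ j → j < p →
        ψ 0 (rl p (b 0) M j) + ψ 1 M + ψ 2 (sl p (b 2) M (j+1)) = 0 := by
      intro j h1 h2
      rw [← val_mk]
      apply hψ
      refine Finset.mem_erase.2 ⟨fun e => ?_, Finset.mem_union_left _ (Finset.mem_erase.2
        ⟨fun e => ?_, memd (by omega)⟩)⟩
      · have := congrFun e 0
        have := hbM 0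
        simp [rl] at *
        grind
      · have := congrFun e 1
        have := hbM 1
        simp at *
        omega
    have sf : ∀ k, k < p → ψ 2 (sl p (b 2) M (p - k)) = ψ 2 (b 2) + (k : ℤ) • v := by
      intro k
      induction k with
      | zero => intro _; simp [sl]
      | succ k ih =>
        intro hk
        have e1 := relc (p - (k+1)) (by omega) (by omega)
        have e2 := reld (p - (k+1)) (by omega) (by omega)
        have e3 : p - (k+1) + 1 = p - k := by omega
        rw [e3, ih (by omega)] at e2
        have : ψ 2 (sl p (b 2) M (p - (k+1))) = (ψ 2 (b 2) + (k : ℤ) • v) + v := by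
          rw [hv, ← sub_eq_zero]
          calc _ = (ψ 0 (rl p (b 0) M (p - (k+1))) + ψ 1 (b 1) + ψ 2 (sl p (b 2) M (p - (k+1))))
              - (ψ 0 (rl p (b 0) M (p - (k+1))) + ψ 1 M + (ψ 2 (b 2) + (k : ℤ) • v)) := by
                rw [hv]; abel
            _ = 0 := by rw [e1, e2, sub_zero]
        rw [this]; push_cast; module
    have sf' : ∀ j, 1 ≤ j → j ≤ p →
        ψ 2 (sl p (b 2) M j) = ψ 2 (b 2) + ((p : ℤ) - j) • v := by
      intro j h1 h2
      have := sf (p - j) (by omega)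
      rw [Nat.sub_sub_self h2] at this
      rw [this]; push_cast [h2]; rfl
    have rf' : ∀ j, 1 ≤ j → j < p →
        ψ 0 (rl p (b 0) M j) = - ψ 1 (b 1) - ψ 2 (b 2) - ((p : ℤ) - j) • v := by
      intro j h1 h2
      have := relc j h1 h2
      rw [sf' j h1 h2.le] at this
      rw [← sub_eq_zero, ← this]; abel
    refine ⟨θ.coprod (zmultiplesHom H (v + θ z)), ?_⟩
    intro i a ha
    by_cases haM : a ∈ verts W i
    · rw [hold i a (hM i a haM)]
      simp [hθ i a haM]
    have ha := (Finset.mem_union.1 ha).resolve_right haM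
    simp only [verts, Finset.mem_image] at ha
    obtain ⟨t, ht, rfl⟩ := ha
    have hnb : t i ≠ b i := fun e => haM (e ▸ hPB.tBW.verts i (mem_verts hb))
    have fr : ∀ j, j ≤ p → rl p (b 0) M j ≠ b 0 → θ.coprod (zmultiplesHom H (v + θ z))
        (phiP φ p M b z 0 (rl p (b 0) M j)) = ψ 0 (rl p (b 0) M j) := by
      intro j h2 h3
      have hj0 : j ≠ 0 := by rintro rfl; simp [rl] at h3
      have hjp : j ≠ p := by rintro rfl; simp [rl] at h3
      rw [hr j (by omega) (by omega), rf' j (by omega) (by omega)]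
      simp only [AddMonoidHom.coprod_apply, map_add, map_sub, map_neg, map_zsmul, hbV,
        zmultiplesHom_apply]
      module
    have fs : ∀ j, 1 ≤ j → j ≤ p → θ.coprod (zmultiplesHom H (v + θ z))
        (phiP φ p M b z 2 (sl p (b 2) M j)) = ψ 2 (sl p (b 2) M j) := by
      intro j h1 h2
      rw [hs j (by omega) (by omega), sf' j (by omega) (by omega)]
      simp only [AddMonoidHom.coprod_apply, map_sub, map_zsmul, hbV,
        zmultiplesHom_apply]
      module
    have fu : θ.coprod (zmultiplesHom H (v + θ z))
        (phiP φ p M b z 1 M) = ψ 1 M := by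
      rw [hu]
      simp only [AddMonoidHom.coprod_apply, map_sub, hbV,
        zmultiplesHom_apply, one_smul]
      rw [hv]; abel
    rw [mem_RW] at ht
    rcases ht with ⟨j, hj, rfl⟩ | ⟨j, hj, rfl⟩
    · fin_cases i
      · exact fr (j+1) (by omega) hnb
      · exact absurd rfl hnb
      · exact fs (j+1) (by omega) hj
    · fin_cases i
      · exact fr j (by omega) hnb
      · exact fu
      · exact fs (j+1) (by omega) hj
  · intro H _ θ₁ θ₂ hh
    have e1 : θ₁.comp (AddMonoidHom.inl U ℤ) = θ₂.comp (AddMonoidHom.inl U ℤ) := by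
      apply h.uq
      intro i a ha
      have := hh i a (Finset.mem_union_right _ ha)
      rw [hold i a (hM i a ha)] at this
      exact this
    have e1' : ∀ x, θ₁ (x, 0) = θ₂ (x, 0) := fun x => DFunLike.congr_fun e1 x
    have e2 := hh 1 M (Finset.mem_union_left _ (by
      simp only [verts, Finset.mem_image]
      exact ⟨_, memd (j := 0) (by omega), rfl⟩))
    rw [hu] at e2
    have e3 : θ₁ (0, 1) = θ₂ (0, 1) := by
      have : ((0, 1) : U × ℤ) = (φ 1 (b 1) - z, 1) - (φ 1 (b 1) - z, 0) := by simp
      rw [this, map_sub, map_sub, e2, e1']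
    refine AddMonoidHom.ext fun ⟨x, n⟩ => ?_
    have : ((x, n) : U × ℤ) = (x, 0) + n • (0, 1) := by simp
    rw [this, map_add, map_add, map_zsmul, map_zsmul, e1', e3]
  · rw [val_mk, hold _ _ (hbM 0), hu, hs 1 le_rfl (by omega)]
    ext
    · simp only [Prod.fst_add, Prod.smul_fst, smul_zero]
      have : φ 0 (b 0) = (p : ℤ) • z - φ 1 (b 1) - φ 2 (b 2) := by rw [← hz']; abel
      rw [this]; push_cast; module
    · simp

/-- labels on the piece `Q` -/
def phiQ {U : Type} [AddCommGroup U] (φ : Fin 3 → ℕ → U) (M : ℕ) (w : Tr) (d : U) :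
    Fin 3 → ℕ → U :=
  fun i a => if a < M then φ i a else
    ![fun j => φ 0 (w 0) + j • d,
      fun _ => φ 1 (w 1) - d,
      fun j => - φ 0 (w 0) - φ 1 (w 1) - (j - 1) • d] i ((a - M : ℕ) : ℤ)

lemma phiQ_formulas {U : Type} [AddCommGroup U] {φ : Fin 3 → ℕ → U} {a M : ℕ}
    {w : Tr} {d : U} (hwM : ∀ i, w i < M) (hd : (a : ℤ) • d = 0) (hv : val φ w = d) :
    (∀ i x, x < M → phiQ φ M w d i x = φ i x) ∧
    phiQ φ M w d 1 M = φ 1 (w 1) - d ∧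
    (∀ j, j ≤ a → phiQ φ M w d 0 (rl a (w 0) M j) = φ 0 (w 0) + (j : ℤ) • d) ∧
    (∀ j, j ≤ a → phiQ φ M w d 2 (sl a (w 2) M j)
      = - φ 0 (w 0) - φ 1 (w 1) - ((j : ℤ) - 1) • d) := by
  have hold : ∀ i x, x < M → phiQ φ M w d i x = φ i x := by
    intro i x hx; simp [phiQ, hx]
  refine ⟨hold, by simp [phiQ], ?_, ?_⟩
  · intro j hj
    by_cases h0 : j = 0
    · subst h0; simp [rl, hold _ _ (hwM 0)]
    by_cases h1 : j = a
    · subst h1; simp only [rl, or_true, if_true]; rw [hold _ _ (hwM 0), hd, add_zero]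
    · simp [rl, h0, h1, phiQ]
  · intro j hj
    by_cases h1 : j = a
    · subst h1; simp only [sl, if_true]; rw [hold _ _ (hwM 2), sub_smul, hd, ← hv, val]
      simp
      abel
    · simp [sl, h1, phiQ]

lemma univ_Q {U : Type} [AddCommGroup U] {V : Fin 3 → Finset ℕ} {W : Finset Tr}
    {φ : Fin 3 → ℕ → U × ℤ} {w : Tr} {p a M : ℕ} (ha : 2 ≤ a)
    (hV : ∀ i, w i ∈ V i) (hM : ∀ i, ∀ x ∈ V i, x < M)
    (hWV : ∀ t ∈ W, ∀ i, t i ∈ V i)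
    (h : IsUniv V W φ) (hv : val φ w = (p : ℤ) • (0, 1)) :
    IsUniv (fun i => V i ∪ verts (RW a (rl a (w 0) M) M (w 1) (sl a (w 2) M)) i)
      (W ∪ RW a (rl a (w 0) M) M (w 1) (sl a (w 2) M))
      (phiQ (fun i x => red U (p * a) (φ i x)) M w (red U (p * a) ((p : ℤ) • (0, 1)))) ∧
    ∀ t ∈ RW a (rl a (w 0) M) (w 1) M (sl a (w 2) M), ∃ g,
      val (phiQ (fun i x => red U (p * a) (φ i x)) M w (red U (p * a) ((p : ℤ) • (0, 1)))) t
        = (p : ℤ) • g := by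
  have hwM : ∀ i, w i < M := fun i => hM i _ (hV i)
  set φ' : Fin 3 → ℕ → U × ZMod (p * a) := fun i x => red U (p * a) (φ i x) with hφ'
  set d : U × ZMod (p * a) := red U (p * a) ((p : ℤ) • (0, 1)) with hdd
  have hval : ∀ t, val φ' t = red U (p * a) (val φ t) := by
    intro t; simp [val, hφ']
  have hd : (a : ℤ) • d = 0 := by
    rw [hdd, ← map_zsmul, smul_smul, ← red_p (U := U) (p * a)]
    congr 2
    push_cast; ring
  have hv' : val φ' w = d := by rw [hval, hv]
  obtain ⟨hold, hy, hr, hs⟩ := phiQ_formulas hwM hd hv'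
  refine ⟨⟨?_, ?_, ?_⟩, ?_⟩
  · intro t ht
    rw [Finset.mem_union, mem_RW] at ht
    obtain h3 | ⟨j, hj, rfl⟩ | ⟨j, hj, rfl⟩ := ht
    · rw [val, hold _ _ (hM 0 _ (hWV t h3 0)), hold _ _ (hM 1 _ (hWV t h3 1)),
        hold _ _ (hM 2 _ (hWV t h3 2))]
      have := h.sol t h3
      rw [← val, hval, this, map_zero]
    · rw [val_mk, hr (j+1) hj, hy, hs (j+1) hj]
      push_cast; module
    · rw [val_mk, hr j hj.le, hold _ _ (hwM 1), hs (j+1) hj]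
      push_cast; module
  · intro H _ ψ hψ
    obtain ⟨θ, hθ⟩ := h.ex H ψ (fun t ht => hψ t (Finset.mem_union_left _ ht))
    have hwV : ∀ i, θ (φ i (w i)) = ψ i (w i) := fun i => hθ i _ (hV i)
    set e := ψ 1 (w 1) - ψ 1 M with he
    have relc : ∀ j, j < a →
        ψ 0 (rl a (w 0) M (j+1)) + ψ 1 M + ψ 2 (sl a (w 2) M (j+1)) = 0 := by
      intro j h2
      rw [← val_mk]
      exact hψ _ (Finset.mem_union_right _ (memc h2))
    have reld : ∀ j, j < a →
        ψ 0 (rl a (w 0) M j) + ψ 1 (w 1) + ψ 2 (sl a (w 2) M (j+1)) = 0 := by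
      intro j h2
      rw [← val_mk]
      exact hψ _ (Finset.mem_union_right _ (memd h2))
    have rf : ∀ j, j ≤ a → ψ 0 (rl a (w 0) M j) = ψ 0 (w 0) + (j : ℤ) • e := by
      intro j
      induction j with
      | zero => intro _; simp [rl]
      | succ j ih =>
        intro hj
        have e1 := relc j hj
        have e2 := reld j hj
        rw [ih (by omega)] at e2
        rw [← sub_eq_zero]
        push_cast
        calc _ = (ψ 0 (rl a (w 0) M (j+1)) + ψ 1 M + ψ 2 (sl a (w 2) M (j+1)))
              - (ψ 0 (w 0) + (j : ℤ) • e + ψ 1 (w 1) + ψ 2 (sl a (w 2) M (j+1))) := by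
                rw [add_smul, one_smul]; nth_rewrite 2 [he]; abel
            _ = 0 := by rw [e1, e2, sub_zero]
    have sf : ∀ j, 1 ≤ j → j ≤ a →
        ψ 2 (sl a (w 2) M j) = - ψ 0 (w 0) - ψ 1 (w 1) - ((j : ℤ) - 1) • e := by
      intro j h1 h2
      obtain ⟨j, rfl⟩ : ∃ i, j = i + 1 := ⟨j - 1, by omega⟩
      have := reld j h2
      rw [rf j (by omega)] at this
      rw [← sub_eq_zero, ← this]; push_cast; module
    have hae : (a : ℤ) • e = 0 := by
      have := rf a le_rfl
      simpa [rl] using this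
    have hwe : val ψ w = e := by
      have := sf a (by omega) le_rfl
      simp only [sl, if_true] at this
      rw [val, this, sub_smul, hae]
      module
    have hpe : (p : ℤ) • θ (0, 1) = e := by
      rw [← map_zsmul, ← hv, val_map hθ hV, hwe]
    obtain ⟨θ', hθ'⟩ := factor_red (p * a) θ (by
      push_cast
      rw [mul_comm, mul_smul, hpe, hae])
    have hd' : θ' d = e := by rw [hdd, hθ', map_zsmul, hpe]
    have hφw : ∀ i, θ' (φ' i (w i)) = ψ i (w i) := fun i => by rw [hφ', hθ', hwV]
    refine ⟨θ', ?_⟩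
    intro i x hx
    by_cases hxV : x ∈ V i
    · rw [hold i x (hM i x hxV), hφ', hθ', hθ i x hxV]
    have hx := (Finset.mem_union.1 hx).resolve_left hxV
    simp only [verts, Finset.mem_image] at hx
    obtain ⟨t, ht, rfl⟩ := hx
    have hnb : t i ≠ w i := fun e => hxV (e ▸ hV i)
    have fr : ∀ j, j ≤ a → θ' (phiQ φ' M w d 0 (rl a (w 0) M j)) = ψ 0 (rl a (w 0) M j) := by
      intro j h2
      rw [hr j h2, rf j h2, map_add, map_zsmul, hφw, hd']
    have fs : ∀ j, 1 ≤ j → j ≤ a →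
        θ' (phiQ φ' M w d 2 (sl a (w 2) M j)) = ψ 2 (sl a (w 2) M j) := by
      intro j h1 h2
      rw [hs j h2, sf j h1 h2, map_sub, map_sub, map_neg, map_zsmul, hφw, hφw, hd']
    have fu : θ' (phiQ φ' M w d 1 M) = ψ 1 M := by
      rw [hy, map_sub, hφw, hd', he]; abel
    rw [mem_RW] at ht
    rcases ht with ⟨j, hj, rfl⟩ | ⟨j, hj, rfl⟩
    · fin_cases i
      · exact fr (j+1) hj
      · exact fu
      · exact fs (j+1) (by omega) hj
    · fin_cases i
      · exact fr j (by omega)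
      · exact absurd rfl hnb
      · exact fs (j+1) (by omega) hj
  · intro H _ θ₁ θ₂ hh
    have := h.uq H (θ₁.comp (red U (p * a))) (θ₂.comp (red U (p * a))) (by
      intro i x hx
      have := hh i x (Finset.mem_union_left _ hx)
      rw [hold i x (hM i x hx)] at this
      exact this)
    ext1 x
    obtain ⟨y, rfl⟩ := red_surj (p * a) x
    exact DFunLike.congr_fun this y
  · intro t ht
    have hpd : (p : ℤ) • red U (p * a) (0, 1) = d := by rw [hdd, map_zsmul]
    rw [mem_RW] at ht
    obtain ⟨j, hj, rfl⟩ | ⟨j, hj, rfl⟩ := ht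
    · refine ⟨red U (p * a) (0, 1), ?_⟩
      rw [val_mk, hr (j+1) hj, hold _ _ (hwM 1), hs (j+1) hj, hpd]
      push_cast; module
    · refine ⟨-red U (p * a) (0, 1), ?_⟩
      rw [val_mk, hr j hj.le, hy, hs (j+1) hj, smul_neg, hpd]
      push_cast; module

end algebra

/-- state of the construction -/
def St (p D : ℕ) (U : Type) [AddCommGroup U] (strict : Prop) : Prop :=
  ∃ (W B : Finset Tr) (φ : Fin 3 → ℕ → U) (M : Finset Tr), PB W B ∧ IsUniv (verts W) W φ ∧
    M ⊆ B ∧ M.card = D ∧ (∀ b ∈ M, ∃ g, val φ b = (p : ℤ) • g) ∧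
    (∀ b ∈ M, Disjoint W (B.erase b)) ∧ (strict → Disjoint W B)

lemma exists_bound (V : Fin 3 → Finset ℕ) : ∃ M, ∀ i, ∀ a ∈ V i, a < M := by
  refine ⟨(Finset.univ.biUnion V).sup id + 1, fun i a ha => ?_⟩
  have : id a ≤ (Finset.univ.biUnion V).sup id :=
    Finset.le_sup (f := id) (Finset.mem_biUnion.2 ⟨i, Finset.mem_univ _, ha⟩)
  simp only [id] at this
  omega

lemma ov_fresh {N : ℕ} {w : Tr} {M : ℕ} {W : Finset Tr} (hM : ∀ i, ∀ x ∈ verts W i, x < M) 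
    {c d : ℕ} (hcd : c = w 1 ∧ d = M ∨ c = M ∧ d = w 1) :
    Ov (RW N (rl N (w 0) M) c d (sl N (w 2) M)) W w := by
  intro t ht t' ht' i hi
  have h1 := hM i _ (mem_verts ht')
  rw [← hi] at h1
  rw [mem_RW] at ht
  rcases ht with ⟨j, hj, rfl⟩ | ⟨j, hj, rfl⟩ <;> fin_cases i <;> simp [rl, sl] at h1 ⊢ <;> grind

/-- gluing on a `P` piece -/
lemma stepA {p D : ℕ} {U : Type} [AddCommGroup U] {s : Prop} (hp : 2 ≤ p) (h : St p (D+1) U s) :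
    ∃ (W B : Finset Tr) (φ : Fin 3 → ℕ → U × ℤ) (M : Finset Tr) (w : Tr), PB W B ∧ 
      Disjoint W B ∧ w ∈ W ∧ IsUniv (verts W) (W.erase w) φ ∧ val φ w = (p : ℤ) • (0, 1) ∧
      M ⊆ B ∧ M.card = D ∧ (∀ b ∈ M, ∃ g, val φ b = (p : ℤ) • g) := by
  obtain ⟨W, B, φ, M, hPB, hU, hMB, hMc, hMv, hMd, -⟩ := h
  obtain ⟨b, hb⟩ : M.Nonempty := by rw [← Finset.card_pos]; omega
  obtain ⟨K, hK⟩ := exists_bound (verts W)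
  obtain ⟨z, hz⟩ := hMv b hb
  have hbB := hMB hb
  have hbK : ∀ i, b i < K := fun i => hK i _ (hPB.tBW.verts i (mem_verts hbB))
  have hR : RH p (rl p (b 0) K) (b 1) K (sl p (b 2) K) :=
    RH_concrete hp (hbK 0) (hbK 1) (hbK 2)
  have hbe : ![rl p (b 0) K p, b 1, sl p (b 2) K p] = b := by
    ext i; fin_cases i <;> simp [rl, sl]
  have hbR := RW_mem_last hR
  have hcR := RW_conn_erase hR
  rw [hbe] at hbR hcR
  have hOv : Ov (RW p (rl p (b 0) K) (b 1) K (sl p (b 2) K)) W b :=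
    ov_fresh hK (Or.inl ⟨rfl, rfl⟩)
  obtain ⟨u1, u2⟩ := univ_P hPB hU hp hK hbB hz
  have hverts : verts ((RW p (rl p (b 0) K) (b 1) K (sl p (b 2) K)).erase b ∪ W) =
    fun i => verts (RW p (rl p (b 0) K) (b 1) K (sl p (b 2) K)) i ∪ verts W i :=
    funext fun i => glue_verts hPB hbB i
  refine ⟨_, _, phiP φ p K b z, M.erase b, ![b 0, K, sl p (b 2) K 1],
    glue (RW_PB hR) hPB hbR hbB hOv (Or.inl hcR),
    glue_disj (RW_PB hR) hPB hbR hOv (RW_disj hR) (hMd b hb), ?_, ?_, u2, ?_, ?_, ?_⟩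
  · refine Finset.mem_union_left _ (Finset.mem_erase.2 ⟨fun e => ?_, ?_⟩)
    · have := congrFun e 1
      have := hbK 1
      simp at *
      omega
    · exact memd (j := 0) (by omega)
  · rw [hverts]; exact u1
  · exact (Finset.erase_subset_erase b hMB).trans Finset.subset_union_right
  · rw [Finset.card_erase_of_mem hb, hMc]; rfl
  · intro t ht
    have htM := Finset.mem_of_mem_erase ht
    obtain ⟨g, hg⟩ := hMv t htM
    have hv : ∀ i, t i < K := fun i => hK i _ (hPB.tBW.verts i (mem_verts (hMB htM)))
    refine ⟨(g, 0), ?_⟩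
    rw [val] at hg ⊢
    simp [phiP, hv, hg]

lemma stepP {p D : ℕ} {U : Type} [AddCommGroup U] {s : Prop} (hp : 2 ≤ p) (h : St p (D+1) U s) :
    St p D (U × ZMod p) True := by
  obtain ⟨W, B, φ, M, w, hPB, hd, hw, hU, hv, hMB, hMc, hMv⟩ := stepA hp h
  refine ⟨W, B, _, M, hPB, univ_close p hw (fun i => mem_verts hw) hU hv, hMB, hMc, ?_, ?_,
    fun _ => hd⟩
  · intro b hb
    obtain ⟨g, hg⟩ := hMv b hb
    refine ⟨red U p g, ?_⟩
    rw [← map_zsmul, ← hg]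
    simp [val]
  · intro b _
    exact hd.mono_right (Finset.erase_subset _ _)

lemma stepQ {p D a : ℕ} {U : Type} [AddCommGroup U] {s : Prop} (hp : 2 ≤ p) (ha : 2 ≤ a)
    (h : St p (D+1) U s) : St p (D + (2 * a - 1)) (U × ZMod (p * a)) True := by
  obtain ⟨W, B, φ, M, w, hPB, hd, hw, hU, hv, hMB, hMc, hMv⟩ := stepA hp h
  obtain ⟨K, hK⟩ := exists_bound (verts W)
  have hwK : ∀ i, w i < K := fun i => hK i _ (mem_verts hw)
  have hR : RH a (rl a (w 0) K) (w 1) K (sl a (w 2) K) :=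
    RH_concrete ha (hwK 0) (hwK 1) (hwK 2)
  have hwe : ![rl a (w 0) K a, w 1, sl a (w 2) K a] = w := by
    ext i; fin_cases i <;> simp [rl, sl]
  have hwR := RW_mem_last hR
  have hcR := RW_conn_erase hR
  rw [hwe] at hwR hcR
  have hOv : Ov W (RW a (rl a (w 0) K) K (w 1) (sl a (w 2) K)) w :=
    (ov_fresh hK (Or.inr ⟨rfl, rfl⟩)).symm
  have hOvB : Ov B (RW a (rl a (w 0) K) (w 1) K (sl a (w 2) K)) w :=
    hOv.of_verts hPB.tBW.verts (RW_PB hR).tWB.verts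
  have hPR := RW_PB hR.swap
  obtain ⟨u1, u2⟩ := univ_Q (a := a) ha (fun i => mem_verts hw) hK
    (fun t ht i => mem_verts (Finset.mem_of_mem_erase ht)) hU hv
  have hverts : verts (W.erase w ∪ RW a (rl a (w 0) K) K (w 1) (sl a (w 2) K)) =
    fun i => verts W i ∪ verts (RW a (rl a (w 0) K) K (w 1) (sl a (w 2) K)) i :=
    funext fun i => glue_verts hPR hwR i
  have hdn := glue_disj hPB hPR hw hOv hd ((RW_disj hR.swap).mono_right (Finset.erase_subset w _))
  refine ⟨_, _, _, M ∪ (RW a (rl a (w 0) K) (w 1) K (sl a (w 2) K)).erase w,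
    glue hPB hPR hw hwR hOv (Or.inr hcR.symm), by rw [hverts]; exact u1, ?_, ?_, ?_, ?_,
    fun _ => hdn⟩
  · exact Finset.union_subset_union_left hMB
  · rw [Finset.card_union_of_disjoint, hMc, Finset.card_erase_of_mem hwR, RW_card hR]
    rw [Finset.disjoint_left]
    intro t ht ht'
    rw [Finset.mem_erase] at ht'
    exact ht'.1 (funext fun i => hOvB t (hMB ht) t ht'.2 i rfl)
  · intro t ht
    rw [Finset.mem_union] at ht
    rcases ht with ht | ht
    · obtain ⟨g, hg⟩ := hMv t ht
      have hv : ∀ i, t i < K := fun i => hK i _ (hPB.tBW.verts i (mem_verts (hMB ht)))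
      refine ⟨red U (p * a) g, ?_⟩
      rw [← map_zsmul, ← hg]
      simp [val, phiQ, hv]
    · exact u2 t (Finset.mem_of_mem_erase ht)
  · intro b _
    exact hdn.mono_right (Finset.erase_subset _ _)

lemma st_start (p : ℕ) : St p 1 (ℤ × ℤ) False := by
  have hv : ∀ i, verts {(fun _ => 0 : Tr)} i = {0} := fun i => by simp [verts]
  refine ⟨{fun _ => 0}, {fun _ => 0}, fun i _ => ![(1, 0), (0, 1), (-1, -1)] i,
    {fun _ => 0}, ⟨?_, ?_, ?_, ?_, ?_, ?_⟩, ⟨?_, ?_, ?_⟩, ?_, ?_, ?_, ?_, ?_⟩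
  · intro t ht t' ht' i _; simp at ht ht'; rw [ht, ht']
  · intro t ht t' ht' i _; simp at ht ht'; rw [ht, ht']
  · intro t ht i; exact ⟨t, ht, fun _ _ => rfl⟩
  · intro t ht i; exact ⟨t, ht, fun _ _ => rfl⟩
  · intro f g hfg
    refine ⟨f (fun _ => 0), ?_, ?_⟩
    · intro t ht; simp at ht; rw [ht]
    · intro t ht; simp at ht; rw [ht]; exact (hfg _ (by simp) _ (by simp) 0 (fun _ _ => rfl)).symm
  · simp [hv]
  · intro t ht; simp [val]
  · intro H _ ψ hψ
    have := hψ (fun _ => 0) (by simp)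
    refine ⟨(zmultiplesHom H (ψ 0 0)).coprod (zmultiplesHom H (ψ 1 0)), ?_⟩
    intro i a ha
    rw [hv, Finset.mem_singleton] at ha
    subst ha
    rw [val] at this
    fin_cases i
    · simp
    · simp
    · simp
      rw [← sub_eq_zero, ← neg_eq_zero, ← this]; abel
  · intro H _ θ₁ θ₂ hh
    have h0 := hh 0 0 (by simp [hv])
    have h1 := hh 1 0 (by simp [hv])
    simp at h0 h1
    refine AddMonoidHom.ext fun ⟨x, n⟩ => ?_
    have : ((x, n) : ℤ × ℤ) = x • (1, 0) + n • (0, 1) := by simp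
    rw [this, map_add, map_add, map_zsmul, map_zsmul, map_zsmul, map_zsmul, h0, h1]
  · simp
  · simp
  · intro b hb; exact ⟨0, by simp [val]⟩
  · intro b hb; simp at hb; simp [hb]
  · simp

lemma stepPs {p D : ℕ} (n : ℕ) {U : Type} [AddCommGroup U] (hp : 2 ≤ p)
    (h : St p (D+n) U True) : ∃ (U' : Type) (_ : AddCommGroup U'),
      St p D U' True ∧ Nonempty (U' ≃+ U × (Fin n → ZMod p)) := by
  induction n generalizing U with
  | zero =>
    refine ⟨U, inferInstance, h, ⟨(AddEquiv.prodUnique (M := U) (N := Fin 0 → ZMod p)).symm⟩⟩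
  | succ n ih =>
    obtain ⟨U', _, h1, ⟨e⟩⟩ := ih (stepP hp h)
    refine ⟨U', inferInstance, h1, ⟨e.trans (AddEquiv.prodAssoc.trans
      (AddEquiv.prodCongr (AddEquiv.refl U) ?_))⟩⟩
    exact { Fin.consEquiv (fun _ : Fin (n+1) => ZMod p) with
      map_add' := by
        rintro ⟨x, f⟩ ⟨y, g⟩
        funext i
        refine Fin.cases ?_ (fun i => ?_) i <;> simp [Fin.consEquiv] }

lemma stepQs {p : ℕ} (k : ℕ) (a : Fin k → ℕ) (ha : ∀ i, 2 ≤ a i) {D : ℕ}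
    {U : Type} [AddCommGroup U] (hp : 2 ≤ p) {s : Prop}
    (h : St p (D+1) U s) : ∃ (U' : Type) (_ : AddCommGroup U'),
      St p (D + 1 + 2 * ∑ i, (a i - 1)) U' (s ∨ 1 ≤ k) ∧
        Nonempty (U' ≃+ U × ((i : Fin k) → ZMod (p * a i))) := by
  induction k generalizing U D s with
  | zero =>
    refine ⟨U, inferInstance, by simpa using h,
      ⟨(AddEquiv.prodUnique (M := U) (N := (i : Fin 0) → ZMod (p * a i))).symm⟩⟩
  | succ k ih =>
    have h0 := ha 0
    have h1 := stepQ hp h0 h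
    have e0 : D + (2 * a 0 - 1) = (D + 2 * (a 0 - 1)) + 1 := by omega
    rw [e0] at h1
    obtain ⟨U', _, h2, ⟨e⟩⟩ := ih (fun i => a i.succ) (fun i => ha _) h1
    refine ⟨U', inferInstance, ?_, ⟨e.trans (AddEquiv.prodAssoc.trans
      (AddEquiv.prodCongr (AddEquiv.refl U) ?_))⟩⟩
    · rw [Fin.sum_univ_succ]
      have : (s ∨ 1 ≤ k + 1) = (True ∨ 1 ≤ k) := by simp
      rw [this]
      convert h2 using 1
      ring
    · exact { Fin.consEquiv (fun i : Fin (k+1) => ZMod (p * a i)) with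
        map_add' := by
          rintro ⟨x, f⟩ ⟨y, g⟩
          funext i
          refine Fin.cases ?_ (fun i => ?_) i <;> simp [Fin.consEquiv] }


section convert

/-- the type of vertices of colour `i` -/
abbrev Vx (W : Finset Tr) (i : Fin 3) : Type := {a // a ∈ verts W i}

/-- forget a typed triple -/
def tr {W : Finset Tr} (t : Vx W 0 × Vx W 1 × Vx W 2) : Tr := ![t.1.1, t.2.1.1, t.2.2.1]

lemma tr_inj {W : Finset Tr} : Function.Injective (tr (W := W)) := by
  rintro ⟨⟨a, _⟩, ⟨b, _⟩, ⟨c, _⟩⟩ ⟨⟨a', _⟩, ⟨b', _⟩, ⟨c', _⟩⟩ h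
  have h0 := congrFun h 0
  have h1 := congrFun h 1
  have h2 := congrFun h 2
  simp [tr] at h0 h1 h2
  subst h0 h1 h2
  rfl

lemma tr_surj {W : Finset Tr} (t : Tr) (h : ∀ i, t i ∈ verts W i) :
    ∃ t' : Vx W 0 × Vx W 1 × Vx W 2, tr t' = t :=
  ⟨(⟨t 0, h 0⟩, ⟨t 1, h 1⟩, ⟨t 2, h 2⟩), by ext i; fin_cases i <;> rfl⟩

open Classical in
/-- typed version of a set of triples -/
noncomputable def ty (W X : Finset Tr) : Finset (Vx W 0 × Vx W 1 × Vx W 2) :=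
  Finset.univ.filter (fun t => tr t ∈ X)

lemma mem_ty {W X : Finset Tr} {t : Vx W 0 × Vx W 1 × Vx W 2} : t ∈ ty W X ↔ tr t ∈ X := by
  simp [ty]

lemma agt0 {W : Finset Tr} {t t' : Vx W 0 × Vx W 1 × Vx W 2} :
    Ag 0 (tr t) (tr t') ↔ t.2.1 = t'.2.1 ∧ t.2.2 = t'.2.2 := by
  rw [tr, tr, ag0, Subtype.ext_iff, Subtype.ext_iff]
lemma agt1 {W : Finset Tr} {t t' : Vx W 0 × Vx W 1 × Vx W 2} :
    Ag 1 (tr t) (tr t') ↔ t.1 = t'.1 ∧ t.2.2 = t'.2.2 := by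
  rw [tr, tr, ag1, Subtype.ext_iff, Subtype.ext_iff]
lemma agt2 {W : Finset Tr} {t t' : Vx W 0 × Vx W 1 × Vx W 2} :
    Ag 2 (tr t) (tr t') ↔ t.1 = t'.1 ∧ t.2.1 = t'.2.1 := by
  rw [tr, tr, ag2, Subtype.ext_iff, Subtype.ext_iff]

lemma ty_pls {W X : Finset Tr} (hX : Pls X) (hv : ∀ i, verts W i ⊆ verts X i)
    (hv' : ∀ i, verts X i ⊆ verts W i) : IsPartialLatinSquare (ty W X) := by
  have key : ∀ i, ∀ a ∈ verts W i, ∃ t ∈ ty W X, tr t i = a := by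
    intro i a ha
    have := hv i ha
    simp only [verts, Finset.mem_image] at this
    obtain ⟨t, ht, rfl⟩ := this
    obtain ⟨t', rfl⟩ := tr_surj (W := W) t (fun i => hv' i (mem_verts ht))
    exact ⟨t', mem_ty.2 ht, rfl⟩
  refine ⟨?_, ?_, ?_, ?_⟩
  · intro t ht t' ht' hne
    rw [mem_ty] at ht ht'
    have : ∀ i, ¬ Ag i (tr t) (tr t') := fun i h => hne (tr_inj (hX _ ht _ ht' i h))
    exact ⟨fun h => this 2 (agt2.2 h), fun h => this 1 (agt1.2 h), fun h => this 0 (agt0.2 h)⟩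
  · rintro ⟨a, ha⟩
    obtain ⟨t, ht, e⟩ := key 0 a ha
    exact ⟨t, ht, Subtype.ext e⟩
  · rintro ⟨a, ha⟩
    obtain ⟨t, ht, e⟩ := key 1 a ha
    exact ⟨t, ht, Subtype.ext e⟩
  · rintro ⟨a, ha⟩
    obtain ⟨t, ht, e⟩ := key 2 a ha
    exact ⟨t, ht, Subtype.ext e⟩

lemma ty_trade {W X Y : Finset Tr} (hY : Pls Y) (hT : Tc X Y) (hd : Disjoint X Y)
    (hv' : ∀ i, verts Y i ⊆ verts W i) : TradeCond (ty W X) (ty W Y) := by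
  intro t ht
  rw [mem_ty] at ht
  have hne : ∀ t' : Vx W 0 × Vx W 1 × Vx W 2, tr t' ∈ Y → t' ≠ t := by
    rintro t' h rfl
    exact Finset.disjoint_left.1 hd ht h
  have ex : ∀ i, ∃ t' : Vx W 0 × Vx W 1 × Vx W 2, tr t' ∈ Y ∧ Ag i (tr t) (tr t') := by
    intro i
    obtain ⟨t', h', h''⟩ := hT _ ht i
    obtain ⟨s, rfl⟩ := tr_surj (W := W) t' (fun i => hv' i (mem_verts h'))
    exact ⟨s, h', h''⟩
  obtain ⟨r, c, s⟩ := t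
  refine ⟨?_, ?_, ?_⟩
  · obtain ⟨⟨r', c', s'⟩, h1, h2⟩ := ex 0
    rw [agt0] at h2
    obtain ⟨rfl, rfl⟩ : c = c' ∧ s = s' := h2
    refine ⟨r', ⟨fun e => hne _ h1 (by rw [show r' = r from e]), mem_ty.2 h1⟩, ?_⟩
    rintro y ⟨-, hy⟩
    have := tr_inj (hY _ (mem_ty.1 hy) _ h1 0 (agt0.2 ⟨rfl, rfl⟩))
    exact congrArg Prod.fst this
  · obtain ⟨⟨r', c', s'⟩, h1, h2⟩ := ex 1
    rw [agt1] at h2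
    obtain ⟨rfl, rfl⟩ : r = r' ∧ s = s' := h2
    refine ⟨c', ⟨fun e => hne _ h1 (by rw [show c' = c from e]), mem_ty.2 h1⟩, ?_⟩
    rintro y ⟨-, hy⟩
    have := tr_inj (hY _ (mem_ty.1 hy) _ h1 1 (agt1.2 ⟨rfl, rfl⟩))
    exact congrArg (fun t => t.2.1) this
  · obtain ⟨⟨r', c', s'⟩, h1, h2⟩ := ex 2
    rw [agt2] at h2
    obtain ⟨rfl, rfl⟩ : r = r' ∧ c = c' := h2
    refine ⟨s', ⟨fun e => hne _ h1 (by rw [show s' = s from e]), mem_ty.2 h1⟩, ?_⟩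
    rintro y ⟨-, hy⟩
    have := tr_inj (hY _ (mem_ty.1 hy) _ h1 2 (agt2.2 ⟨rfl, rfl⟩))
    exact congrArg (fun t => t.2.2) this

/-- a sub-trade is closed under adjacency -/
lemma sub_closed {W Y : Finset Tr} (hY : Pls Y) {W' B' : Finset (Vx W 0 × Vx W 1 × Vx W 2)}
    (hB : B' ⊆ ty W Y) (hT : TradeCond W' B') {t t' : Vx W 0 × Vx W 1 × Vx W 2}
    (ht : t ∈ W') (ht' : tr t' ∈ Y) {i : Fin 3} (hi : Ag i (tr t) (tr t')) : t' ∈ B' := by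
  suffices h : ∃ s ∈ B', Ag i (tr t) (tr s) by
    obtain ⟨s, hs, h⟩ := h
    have : t' = s := tr_inj (hY _ ht' _ (mem_ty.1 (hB hs)) i
      (fun j hj => (hi j hj).symm.trans (h j hj)))
    rw [this]; exact hs
  obtain ⟨⟨x, hx, -⟩, ⟨y, hy, -⟩, ⟨z, hz, -⟩⟩ := hT t ht
  fin_cases i
  · exact ⟨_, hx.2, agt0.2 ⟨rfl, rfl⟩⟩
  · exact ⟨_, hy.2, agt1.2 ⟨rfl, rfl⟩⟩
  · exact ⟨_, hz.2, agt2.2 ⟨rfl, rfl⟩⟩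

lemma ty_card {W : Finset Tr} : (ty W W).card = W.card := by
  refine Finset.card_bij (fun t _ => tr t) (fun t ht => mem_ty.1 ht)
    (fun t _ t' _ h => tr_inj h) (fun t ht => ?_)
  obtain ⟨t', rfl⟩ := tr_surj (W := W) t (fun i => mem_verts ht)
  exact ⟨t', mem_ty.2 ht, rfl⟩

/-- the spherical bitrade of a strict pre-bitrade -/
noncomputable def toS {W B : Finset Tr} (h : PB W B) (hd : Disjoint W B) :
    SphericalLatinBitrade where
  R := Vx W 0
  C := Vx W 1
  S := Vx W 2
  instR := inferInstance
  instC := inferInstance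
  instS := inferInstance
  W := ty W W
  B := ty W B
  W_nonempty := by
    rw [← Finset.card_pos, ty_card, Finset.card_pos, Finset.nonempty_iff_ne_empty]
    intro e
    have := h.euler
    subst e
    simp [verts] at this
  B_nonempty := by
    have h1 : W.Nonempty := by
      rw [Finset.nonempty_iff_ne_empty]
      intro e
      have := h.euler
      subst e
      simp [verts] at this
    obtain ⟨t, ht⟩ := h1
    obtain ⟨b, hb, -⟩ := h.tWB t ht 0
    obtain ⟨b', rfl⟩ := tr_surj (W := W) b (fun i => h.tBW.verts i (mem_verts hb))
    exact ⟨b', mem_ty.2 hb⟩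
  W_pls := ty_pls h.plsW (fun _ => subset_rfl) (fun _ => subset_rfl)
  B_pls := ty_pls h.plsB h.tWB.verts h.tBW.verts
  tradeWB := ty_trade h.plsB h.tWB hd h.tBW.verts
  tradeBW := ty_trade h.plsW h.tBW hd.symm (fun _ => subset_rfl)
  connected := by
    rintro ⟨W', B', hW, hB, ⟨w, hw⟩, -, h1, h2⟩
    obtain ⟨q, hq, -⟩ := h.conn (fun t => ∃ t' ∈ W', tr t' = t) (fun t => ∃ t' ∈ B', tr t' = t)
      (by
        intro t ht t' ht' i hi
        constructor
        · rintro ⟨s, hs, rfl⟩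
          obtain ⟨s', rfl⟩ := tr_surj (W := W) t' (fun i => h.tBW.verts i (mem_verts ht'))
          exact ⟨s', sub_closed h.plsB hB.1 h1 hs ht' hi, rfl⟩
        · rintro ⟨s, hs, rfl⟩
          obtain ⟨s', rfl⟩ := tr_surj (W := W) t (fun i => mem_verts ht)
          exact ⟨s', sub_closed h.plsW hW.1 h2 hs ht hi.symm, rfl⟩)
    have hqt : q := (hq _ (mem_ty.1 (hW.1 hw))).1 ⟨w, hw, rfl⟩
    refine hW.2 fun t ht => ?_
    obtain ⟨t', h', e⟩ := (hq _ (mem_ty.1 ht)).2 hqt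
    rw [← tr_inj e]; exact h'
  spherical := by
    rw [ty_card, ← h.euler]
    simp

/-- the class of a generator -/
def gen (T : SphericalLatinBitrade) (x : T.R ⊕ T.C ⊕ T.S) : groupAW T :=
  QuotientAddGroup.mk (FreeAbelianGroup.of x)

open Classical in
/-- labels with values in the group presented by the bitrade -/
noncomputable def psi {W B : Finset Tr} (h : PB W B) (hd : Disjoint W B) :
    Fin 3 → ℕ → groupAW (toS h hd) :=
  ![fun a => if ha : a ∈ verts W 0 then gen (toS h hd) (Sum.inl ⟨a, ha⟩) else 0,
    fun a => if ha : a ∈ verts W 1 then gen (toS h hd) (Sum.inr (Sum.inl ⟨a, ha⟩)) else 0,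
    fun a => if ha : a ∈ verts W 2 then gen (toS h hd) (Sum.inr (Sum.inr ⟨a, ha⟩)) else 0]

lemma groupAW_equiv {W B : Finset Tr} (h : PB W B) (hd : Disjoint W B) {U : Type} [AddCommGroup U]
    {φ : Fin 3 → ℕ → U} (hU : IsUniv (verts W) W φ) :
    Nonempty (groupAW (toS h hd) ≃+ U) := by
  classical
  have p0 : ∀ a : Vx W 0, psi h hd 0 a.1 = gen (toS h hd) (Sum.inl a) :=
    fun a => dif_pos a.2
  have p1 : ∀ a : Vx W 1, psi h hd 1 a.1 = gen (toS h hd) (Sum.inr (Sum.inl a)) :=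
    fun a => dif_pos a.2
  have p2 : ∀ a : Vx W 2, psi h hd 2 a.1 = gen (toS h hd) (Sum.inr (Sum.inr a)) :=
    fun a => dif_pos a.2
  obtain ⟨θ, hθ⟩ := hU.ex (groupAW (toS h hd)) (psi h hd) (by
    intro t ht
    obtain ⟨t', rfl⟩ := tr_surj (W := W) t (fun i => mem_verts ht)
    rw [tr, val_mk, p0, p1, p2, gen, gen, gen, ← QuotientAddGroup.mk_add, ← QuotientAddGroup.mk_add,
      QuotientAddGroup.eq_zero_iff]
    exact AddSubgroup.subset_closure ⟨t', mem_ty.2 ht, rfl⟩)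
  let lab : (toS h hd).R ⊕ (toS h hd).C ⊕ (toS h hd).S → U :=
    Sum.elim (fun a : Vx W 0 => φ 0 a.1)
      (Sum.elim (fun a : Vx W 1 => φ 1 a.1) (fun a : Vx W 2 => φ 2 a.1))
  let η : groupAW (toS h hd) →+ U := QuotientAddGroup.lift _ (FreeAbelianGroup.lift lab) (by
    rw [bitradeRelations, AddSubgroup.closure_le]
    rintro _ ⟨t, ht, rfl⟩
    have := hU.sol _ (mem_ty.1 ht)
    change val φ ![_, _, _] = 0 at this
    rw [val_mk] at this
    change FreeAbelianGroup.lift lab (FreeAbelianGroup.of _ + FreeAbelianGroup.of _ +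
      FreeAbelianGroup.of _) = 0
    rw [map_add, map_add, FreeAbelianGroup.lift_apply_of, FreeAbelianGroup.lift_apply_of,
      FreeAbelianGroup.lift_apply_of]
    exact this)
  have hη : ∀ x, η (gen (toS h hd) x) = lab x := fun x =>
    FreeAbelianGroup.lift_apply_of _ _
  refine ⟨AddMonoidHom.toAddEquiv η θ ?_ ?_⟩
  · refine QuotientAddGroup.addMonoidHom_ext _ (FreeAbelianGroup.lift_ext _ _ fun x => ?_)
    change θ (η (gen (toS h hd) x)) = gen (toS h hd) x
    rw [hη]
    rcases x with a | a | a
    · exact (hθ 0 a.1 a.2).trans (p0 a)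
    · exact (hθ 1 a.1 a.2).trans (p1 a)
    · exact (hθ 2 a.1 a.2).trans (p2 a)
  · refine hU.uq _ _ _ fun i a ha => ?_
    change η (θ (φ i a)) = φ i a
    rw [hθ i a ha]
    fin_cases i
    · exact (congrArg η (p0 ⟨a, ha⟩)).trans (hη _)
    · exact (congrArg η (p1 ⟨a, ha⟩)).trans (hη _)
    · exact (congrArg η (p2 ⟨a, ha⟩)).trans (hη _)

lemma torsion_equiv {A G : Type} [AddCommGroup A] [AddCommGroup G] [Finite G]
    (e : A ≃+ (ℤ × ℤ) × G) : Nonempty (AddCommGroup.torsion A ≃+ G) := by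
  have hmem : ∀ x : A, x ∈ AddCommGroup.torsion A ↔ (e x).1 = 0 := by
    intro x
    rw [AddCommGroup.mem_torsion, isOfFinAddOrder_iff_nsmul_eq_zero]
    constructor
    · rintro ⟨m, hm, h⟩
      have h1 := congrArg e h
      rw [map_nsmul, map_zero] at h1
      have h2 := congrArg Prod.fst h1
      rw [Prod.smul_fst, Prod.fst_zero] at h2
      exact (smul_eq_zero.1 h2).resolve_left hm.ne'
    · intro h
      have := isOfFinAddOrder_of_finite (e x).2
      rw [isOfFinAddOrder_iff_nsmul_eq_zero] at this
      obtain ⟨m, hm, h'⟩ := this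
      refine ⟨m, hm, e.injective ?_⟩
      rw [map_nsmul, map_zero]
      exact Prod.ext (by simp [h]) h'
  refine ⟨AddEquiv.ofBijective
    (((AddMonoidHom.snd (ℤ × ℤ) G).comp e.toAddMonoidHom).comp
      (AddCommGroup.torsion A).subtype) ⟨?_, ?_⟩⟩
  · rintro ⟨x, hx⟩ ⟨y, hy⟩ h
    rw [hmem] at hx hy
    exact Subtype.ext (e.injective (Prod.ext (hx.trans hy.symm) h))
  · intro g
    refine ⟨⟨e.symm (0, g), (hmem _).2 (by simp)⟩, ?_⟩
    simp

lemma main (p k n : ℕ) (hp : p.Prime) (hk : 1 ≤ k) (a : Fin k → ℕ) (ha : ∀ i, 2 ≤ a i)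
    (hn : n ≤ 1 + 2 * ∑ i, (a i - 1)) :
    ∃ T : SphericalLatinBitrade,
      Nonempty (CanonicalGroup T ≃+
        ((Fin n → ZMod p) × ((i : Fin k) → ZMod (p * a i)))) := by
  obtain ⟨U, _, h1, ⟨e1⟩⟩ := stepQs k a ha (D := 0) hp.two_le (st_start p)
  have h2 : St p ((1 + 2 * ∑ i, (a i - 1) - n) + n) U True := by
    have : (False ∨ 1 ≤ k) = True := by simp [hk]
    rw [this] at h1
    convert h1 using 1
    omega
  obtain ⟨U', _, h3, ⟨e2⟩⟩ := stepPs n hp.two_le h2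
  obtain ⟨W, B, φ, M, hPB, hU, -, -, -, -, hd⟩ := h3
  have hd := hd trivial
  obtain ⟨e3⟩ := groupAW_equiv hPB hd hU
  refine ⟨toS hPB hd, ?_⟩
  have : NeZero p := ⟨hp.ne_zero⟩
  have : ∀ i, NeZero (p * a i) := fun i =>
    ⟨Nat.mul_ne_zero hp.ne_zero (by have := ha i; omega)⟩
  refine torsion_equiv (e3.trans (e2.trans ?_))
  refine (AddEquiv.prodCongr e1 (AddEquiv.refl _)).trans (AddEquiv.prodAssoc.trans ?_)
  exact AddEquiv.prodCongr (AddEquiv.refl _) AddEquiv.prodComm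

end convert

end SLB

/-- Let `p` be a prime, `k ≥ 1`, `a_1, …, a_k ≥ 2` and `n ≤ 1 + 2·∑ (a_i − 1)`.  Then
there is a spherical latin bitrade whose canonical group is isomorphic to
`(ℤ/p)^n ⊕ ℤ/(p·a_1) ⊕ ⋯ ⊕ ℤ/(p·a_k)`. -/
theorem exists_spherical_bitrade_canonical_group_primes_and_composites
    (p k n : ℕ) (hp : p.Prime) (hk : 1 ≤ k) (a : Fin k → ℕ) (ha : ∀ i, 2 ≤ a i)
    (hn : n ≤ 1 + 2 * ∑ i, (a i - 1)) :
    ∃ T : SphericalLatinBitrade,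
      Nonempty (CanonicalGroup T ≃+
        ((Fin n → ZMod p) × ((i : Fin k) → ZMod (p * a i)))) := by
  exact SLB.main p k n hp hk a ha hn
end
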